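/- arXiv:1612.03229 — 12 statements merged into one kernel-verified Lean document; each statement's English description precedes it below -/
import Mathlib

section
/- Let O be an order in an imaginary quadratic field and let N be a positive integer with prime factorization N = ∏_{i=1}^r ℓ_i^{a_i}. Then the cardinality of the mod N Cartan subgroup is #C_N(O) = ∏_{i=1}^r ℓ_i^{2a_i−2}·(ℓ_i − 1)·(ℓ_i − χ(ℓ_i)), where χ(ℓ) = 1 if ℓ is split in O, χ(ℓ) = 0 if ℓ is ramified in O, and χ(ℓ) = −1 if ℓ is inert in O. -/
set_option synthInstance.maxHeartbeats 1000000
set_option maxHeartbeats 1000000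

open NumberField

/-- `K` is an imaginary quadratic field: a number field of degree `2` over `ℚ`
with no real embedding. -/
def IsImagQuadratic (K : Type*) [Field K] [NumberField K] : Prop :=
  Module.finrank ℚ K = 2 ∧ IsEmpty (K →+* ℝ)

/-- `O = ℤ + f·𝓞_K` is the order of conductor `f` in the number field `K`,
viewed as a subalgebra of `K`. -/
def IsOrderOfConductor (K : Type*) [Field K] [NumberField K] (f : ℕ)
    (O : Subalgebra ℤ K) : Prop :=
  ∀ x : K, x ∈ O ↔ ∃ (a : ℤ) (y : 𝓞 K), x = (a : K) + (f : K) * (algebraMap (𝓞 K) K y)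

/-- The prime `ℓ` is *split* in the ring `R`: `R/ℓR ≅ ℤ/ℓ × ℤ/ℓ` as rings. -/
def SplitsIn (R : Type*) [CommRing R] (ℓ : ℕ) : Prop :=
  Nonempty ((R ⧸ Ideal.span {(ℓ : R)}) ≃+* ZMod ℓ × ZMod ℓ)

/-- The prime `ℓ` is *inert* in the ring `R`: `R/ℓR` is a field. -/
def InertIn (R : Type*) [CommRing R] (ℓ : ℕ) : Prop :=
  IsField (R ⧸ Ideal.span {(ℓ : R)})

theorem aux_unitsEquiv {A B : Type*} [CommRing A] [CommRing B] (e : A ≃+* B) :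
    Nat.card Aˣ = Nat.card Bˣ :=
  Nat.card_congr (Units.mapEquiv e.toMulEquiv).toEquiv

theorem aux_units_set (A : Type*) [CommRing A] :
    Nat.card Aˣ = Nat.card {x : A | IsUnit x} :=
  Nat.card_congr (Equiv.ofBijective (fun u : Aˣ => (⟨(u : A), u.isUnit⟩ : {x : A | IsUnit x}))
    ⟨fun u v h => Units.ext (congrArg Subtype.val h), fun ⟨x, hx⟩ => ⟨hx.unit, rfl⟩⟩)

theorem aux_nil {A : Type*} [CommRing A] (I : Ideal A) (hI : IsNilpotent I) :
    Nat.card Aˣ = Nat.card I * Nat.card (A ⧸ I)ˣ := by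
  rw [aux_units_set, aux_units_set (A ⧸ I), ← Nat.card_prod]
  have h := QuotientAddGroup.preimageMkEquivAddSubgroupProdSet I.toAddSubgroup
    ({x : A ⧸ I | IsUnit x} : Set (A ⧸ I))
  refine Nat.card_congr (Equiv.trans (Equiv.setCongr ?_) h)
  ext x
  exact (IsNilpotent.isUnit_quotient_mk_iff hI (x := x)).symm

theorem aux_prime {B : Type*} [CommRing B] {p : ℕ} (hp : p.Prime) (hB : Nat.card B = p ^ 2)
    (hs : ¬ Nonempty (B ≃+* ZMod p × ZMod p)) (hf : ¬ IsField B) :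
    Nat.card Bˣ = p ^ 2 - p := by
  have hfin : Finite B := Nat.finite_of_card_ne_zero (by rw [hB]; exact pow_ne_zero _ hp.ne_zero)
  have hnt : Nontrivial B := by
    rw [← Finite.one_lt_card_iff_nontrivial, hB]
    exact Nat.one_lt_pow two_ne_zero hp.one_lt
  have key : ∀ I : Ideal B, I ≠ ⊥ → I ≠ ⊤ → Nat.card I = p ∧ Nat.card (B ⧸ I) = p := by
    intro I h0 h1
    have hc := Submodule.card_eq_card_quotient_mul_card I
    have hI1 : Nat.card I ≠ 1 := by
      intro h
      apply h0
      have := (Nat.card_eq_one_iff_unique.mp h).1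
      exact (Submodule.subsingleton_iff_eq_bot).mp this
    have hQ1 : Nat.card (B ⧸ I) ≠ 1 := by
      intro h
      apply h1
      have := (Nat.card_eq_one_iff_unique.mp h).1
      exact Ideal.Quotient.subsingleton_iff.mp this
    rw [hB] at hc
    exact (Nat.Prime.mul_eq_prime_sq_iff hp hI1 hQ1).mp hc.symm
  obtain ⟨M, hM⟩ := Ideal.exists_maximal B
  have hmax : ∀ J : Ideal B, J.IsMaximal → J ≠ ⊥ := fun J hJ h =>
    Ring.ne_bot_of_isMaximal_of_not_isField hJ hf h
  have huniq : ∀ J : Ideal B, J.IsMaximal → J = M := by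
    intro J hJ
    by_contra hne
    have hcop : IsCoprime J M := Ideal.isCoprime_of_isMaximal hne
    have e := Ideal.quotientInfEquivQuotientProd J M hcop
    have hJ2 := (key J (hmax J hJ) hJ.ne_top).2
    have hM2 := (key M (hmax M hM) hM.ne_top).2
    have hbot : J ⊓ M = ⊥ := by
      by_contra hb
      have h3 := (key _ hb (fun h => hJ.ne_top (top_le_iff.mp (h ▸ inf_le_left)))).2
      rw [Nat.card_congr e.toEquiv, Nat.card_prod, hJ2, hM2] at h3
      nlinarith [hp.one_lt]
    have : Fintype (B ⧸ J) :=
      @Fintype.ofFinite _ (Finite.of_surjective _ (Ideal.Quotient.mk_surjective (I := J)))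
    have : Fintype (B ⧸ M) :=
      @Fintype.ofFinite _ (Finite.of_surjective _ (Ideal.Quotient.mk_surjective (I := M)))
    have e1 := ZMod.ringEquivOfPrime (B ⧸ J) hp (by rw [← hJ2, Nat.card_eq_fintype_card])
    have e2 := ZMod.ringEquivOfPrime (B ⧸ M) hp (by rw [← hM2, Nat.card_eq_fintype_card])
    exact hs ⟨((RingEquiv.quotientBot B).symm.trans (Ideal.quotEquivOfEq hbot.symm)).trans
      (e.trans (RingEquiv.prodCongr e1.symm e2.symm))⟩
  have hset : {x : B | IsUnit x} = (M : Set B)ᶜ := by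
    ext x
    constructor
    · intro hx hm
      exact hM.ne_top (Ideal.eq_top_of_isUnit_mem _ hm hx)
    · intro hx
      by_contra hu
      obtain ⟨J, hJ, hxJ⟩ := exists_max_ideal_of_mem_nonunits hu
      rw [huniq J hJ] at hxJ
      exact hx hxJ
  have hM1 := (key M (hmax M hM) hM.ne_top).1
  rw [aux_units_set, hset]
  have := Set.ncard_compl (M : Set B)
  rw [Nat.card_coe_set_eq, this, hB, ← Nat.card_coe_set_eq]
  congr 1

theorem aux_card {R : Type*} [CommRing R] (b : Module.Basis (Fin 2) ℤ R) (n : ℕ) (hn : 0 < n) :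
    Nat.card (R ⧸ Ideal.span {(n : R)}) = n ^ 2 := by
  let φ : R →+ (Fin 2 → ZMod n) :=
    { toFun := fun x i => ((b.repr x i : ℤ) : ZMod n)
      map_zero' := by ext; simp
      map_add' := by intros; ext; simp }
  have hsurj : Function.Surjective φ := by
    intro v
    choose w hw using fun i => ZMod.intCast_surjective (v i)
    refine ⟨b.equivFun.symm w, ?_⟩
    ext i
    change ((b.equivFun (b.equivFun.symm w) i : ℤ) : ZMod n) = v i
    rw [LinearEquiv.apply_symm_apply, hw]
  have hker : φ.ker = (Ideal.span {(n : R)}).toAddSubgroup := by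
    ext x
    rw [AddMonoidHom.mem_ker, Submodule.mem_toAddSubgroup, Ideal.mem_span_singleton]
    constructor
    · intro h
      have h' : ∀ i, (n : ℤ) ∣ b.repr x i := fun i =>
        (ZMod.intCast_zmod_eq_zero_iff_dvd _ _).mp (congrFun h i)
      choose w hw using h'
      refine ⟨b.equivFun.symm w, ?_⟩
      apply b.equivFun.injective
      rw [← nsmul_eq_mul, map_nsmul, LinearEquiv.apply_symm_apply]
      ext i
      simpa using hw i
    · rintro ⟨y, rfl⟩
      ext i
      change ((b.repr _ i : ℤ) : ZMod n) = 0
      rw [← nsmul_eq_mul, map_nsmul]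
      simp
  change (Ideal.span {(n : R)}).toAddSubgroup.index = _
  rw [← hker, AddSubgroup.index_ker, AddMonoidHom.range_eq_top.mpr hsurj, AddSubgroup.card_top, Nat.card_fun, Nat.card_zmod,
    Nat.card_fin]

theorem aux_basis (K : Type*) [Field K] [NumberField K] (hK : IsImagQuadratic K)
    (f : ℕ) (hf : 0 < f) (O : Subalgebra ℤ K) (hO : IsOrderOfConductor K f O) :
    Nonempty (Module.Basis (Fin 2) ℤ O) := by
  have hint : ∀ x : O, IsIntegral ℤ (x : K) := by
    intro x
    obtain ⟨a, y, h⟩ := (hO x).mp x.2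
    rw [h]
    refine IsIntegral.add ?_ (IsIntegral.mul ?_ ?_)
    · exact isIntegral_algebraMap (R := ℤ) (x := a)
    · simpa using isIntegral_algebraMap (R := ℤ) (A := K) (x := (f : ℤ))
    · exact RingOfIntegers.isIntegral_coe y
  let g : O →ₗ[ℤ] 𝓞 K :=
    { toFun := fun x => ⟨x, hint x⟩
      map_add' := fun _ _ => rfl
      map_smul' := fun c x => RingOfIntegers.coe_injective (by
        change ((c • x : O) : K) = ((c • (⟨x, hint x⟩ : 𝓞 K) : 𝓞 K) : K)
        simp [zsmul_eq_mul]) }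
  have hg : Function.Injective g := fun x y h => Subtype.ext (congrArg (fun z : 𝓞 K => (z : K)) h)
  let k : 𝓞 K →ₗ[ℤ] O :=
    { toFun := fun y => ⟨(f : K) * algebraMap (𝓞 K) K y, (hO _).mpr ⟨0, y, by simp⟩⟩
      map_add' := fun _ _ => Subtype.ext (by simp [mul_add])
      map_smul' := fun c x => Subtype.ext (by simp [mul_left_comm]) }
  have hk : Function.Injective k := by
    intro x y h
    have h2 : (f : K) * algebraMap (𝓞 K) K x = f * algebraMap (𝓞 K) K y := congrArg Subtype.val h
    have hf' : (f : K) ≠ 0 := by exact_mod_cast hf.ne'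
    exact RingOfIntegers.coe_injective (mul_left_cancel₀ hf' h2)
  have : Module.Finite ℤ O := Module.Finite.of_injective g hg
  have : Module.Free ℤ O := inferInstance
  have hr : Module.finrank ℤ O = 2 := by
    have h1 := LinearMap.finrank_le_finrank_of_injective hg
    have h2 := LinearMap.finrank_le_finrank_of_injective hk
    rw [RingOfIntegers.rank, hK.1] at h1 h2
    omega
  exact ⟨Module.finBasisOfFinrankEq ℤ O hr⟩

theorem aux_pow {R : Type*} [CommRing R] (b : Module.Basis (Fin 2) ℤ R) {p a : ℕ} (hp : p.Prime)
    (ha : a ≠ 0) :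
    Nat.card (R ⧸ Ideal.span {((p ^ a : ℕ) : R)})ˣ =
      p ^ (2 * a - 2) * Nat.card (R ⧸ Ideal.span {(p : R)})ˣ := by
  have hle : Ideal.span {((p ^ a : ℕ) : R)} ≤ Ideal.span {(p : R)} := by
    rw [Ideal.span_singleton_le_span_singleton]
    push_cast
    exact dvd_pow_self _ ha
  have e := DoubleQuot.quotQuotEquivQuotOfLE hle
  set I := Ideal.map (Ideal.Quotient.mk (Ideal.span {((p ^ a : ℕ) : R)})) (Ideal.span {(p : R)})
    with hI
  have hnil : IsNilpotent I := by
    refine ⟨a, ?_⟩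
    rw [hI, ← Ideal.map_pow, Ideal.span_singleton_pow, ← Nat.cast_pow]
    exact Ideal.map_quotient_self _
  have hc := Submodule.card_eq_card_quotient_mul_card I
  rw [Nat.card_congr e.toEquiv, aux_card b _ (pow_pos hp.pos a), aux_card b _ hp.pos] at hc
  rw [aux_nil I hnil, aux_unitsEquiv e]
  congr 1
  have h2 : p ^ 2 ≠ 0 := pow_ne_zero _ hp.ne_zero
  apply Nat.eq_of_mul_eq_mul_right (Nat.pos_of_ne_zero h2)
  rw [← hc, ← pow_add, ← pow_mul]
  congr 1
  omega

/-- Let `O` be an order in an imaginary quadratic field and `N` a positive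
integer.  Then `#C_N(O) = ∏_{p^a ∥ N} p^(2a-2)·(p-1)·(p-χ(p))`, where `χ(p)` is `1`, `0`, `-1`
according as `p` is split, ramified or inert in `O`. -/
theorem cartan_card (K : Type*) [Field K] [NumberField K] (hK : IsImagQuadratic K)
    (f : ℕ) (hf : 0 < f) (O : Subalgebra ℤ K) (hO : IsOrderOfConductor K f O)
    (N : ℕ) (hN : 0 < N) (χ : ℕ → ℤ)
    (hχsplit : ∀ p : ℕ, p.Prime → SplitsIn (↥O) p → χ p = 1)
    (hχram : ∀ p : ℕ, p.Prime → ¬ SplitsIn (↥O) p → ¬ InertIn (↥O) p → χ p = 0)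
    (hχinert : ∀ p : ℕ, p.Prime → InertIn (↥O) p → χ p = -1) :
    (Nat.card (↥O ⧸ Ideal.span {(N : ↥O)})ˣ : ℤ) =
      ∏ p ∈ N.primeFactors,
        (p : ℤ) ^ (2 * N.factorization p - 2) * ((p : ℤ) - 1) * ((p : ℤ) - χ p) := by
  obtain ⟨b⟩ := aux_basis K hK f hf O hO
  have hmul := Nat.multiplicative_factorization
    (fun n : ℕ => Nat.card (↥O ⧸ Ideal.span {(n : ↥O)})ˣ) ?_ ?_ hN.ne'
  · rw [hmul, Finsupp.prod, Nat.support_factorization, Nat.cast_prod]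
    refine Finset.prod_congr rfl fun p hpm => ?_
    have hp := Nat.prime_of_mem_primeFactors hpm
    have ha : N.factorization p ≠ 0 := by
      rw [← Finsupp.mem_support_iff, Nat.support_factorization]
      exact hpm
    rw [aux_pow b hp ha, Nat.cast_mul, Nat.cast_pow, mul_assoc]
    congr 1
    have hcard := aux_card b p hp.pos
    by_cases hs : SplitsIn (↥O) p
    · rw [hχsplit p hp hs]
      obtain ⟨e⟩ := hs
      have : Fact p.Prime := ⟨hp⟩
      rw [aux_unitsEquiv e, Nat.card_congr MulEquiv.prodUnits.toEquiv, Nat.card_prod,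
        Nat.card_units, Nat.card_zmod, Nat.cast_mul, Nat.cast_sub hp.one_le]
      simp
    · by_cases hi : InertIn (↥O) p
      · rw [hχinert p hp hi]
        letI := hi.toField
        have h := Nat.card_units (↥O ⧸ Ideal.span {(p : ↥O)})
        rw [hcard] at h
        have h' : (Nat.card (↥O ⧸ Ideal.span {(p : ↥O)})ˣ : ℤ) = ((p ^ 2 - 1 : ℕ) : ℤ) := by
          rw [← h]
        rw [h', Nat.cast_sub (Nat.one_le_pow _ _ hp.pos)]
        push_cast
        ring
      · rw [hχram p hp hs hi, aux_prime hp hcard hs hi,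
          Nat.cast_sub (Nat.le_self_pow two_ne_zero p)]
        push_cast
        ring
  · intro x y hxy
    have hcop : IsCoprime (Ideal.span {(x : ↥O)}) (Ideal.span {(y : ↥O)}) := by
      rw [Ideal.isCoprime_span_singleton_iff]
      exact hxy.cast
    have e := Ideal.quotientMulEquivQuotientProd _ _ hcop
    have e0 : (↥O ⧸ Ideal.span {((x * y : ℕ) : ↥O)}) ≃+*
        (↥O ⧸ Ideal.span {(x : ↥O)} * Ideal.span {(y : ↥O)}) :=
      Ideal.quotEquivOfEq (by rw [Ideal.span_singleton_mul_span_singleton, Nat.cast_mul])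
    rw [aux_unitsEquiv (e0.trans e), Nat.card_congr MulEquiv.prodUnits.toEquiv, Nat.card_prod]
  · have : Subsingleton (↥O ⧸ Ideal.span {((1 : ℕ) : ↥O)}) := by
      rw [Ideal.Quotient.subsingleton_iff, Nat.cast_one, Ideal.span_singleton_one]
    exact Nat.card_unique
end

section
/- Let O be an order in an imaginary quadratic field K, let I be a nonzero ideal of O that is invertible as a fractional O-ideal, and let Λ be an invertible fractional O-ideal. Set (Λ:I) = {x ∈ K : xI ⊆ Λ}. Then the O-module (Λ:I)/Λ is isomorphic to O/I as an O-module; in particular its cardinality equals #(O/I). -/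
set_option synthInstance.maxHeartbeats 1000000
set_option maxHeartbeats 1000000

open NumberField

theorem cqi_mul {R K : Type*} [CommRing R] [CommRing K] [Algebra R K] {A B P : Submodule R K}
    (h : A ≤ B) : A * P ≤ B * P := mul_le_mul' h le_rfl

theorem cqi_aux {R K : Type*} [CommRing R] [CommRing K] [Algebra R K]
    (hinj : Function.Injective (algebraMap R K)) (I : Ideal R)
    (hfin : {p : Ideal R | p.IsMaximal ∧ I ≤ p}.Finite) (M N : Submodule R K) (hMN : M * N = 1) :
    ∃ m ∈ M, M ≤ Submodule.span R {m} ⊔ Submodule.map (Algebra.linearMap R K) I * M ∧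
      ∀ a : R, a • m ∈ Submodule.map (Algebra.linearMap R K) I * M → a ∈ I := by
  classical
  set P : Ideal R → Submodule R K := fun q => Submodule.map (Algebra.linearMap R K) q with hP
  have hPinj : ∀ p q : Ideal R, P p ≤ P q → p ≤ q := fun p q h =>
    (Submodule.map_le_map_iff_of_injective (f := Algebra.linearMap R K) hinj p q).1 h
  have hPmono : ∀ p q : Ideal R, p ≤ q → P p ≤ P q := fun p q h => Submodule.map_mono h
  have hP1 : ∀ p, P p ≤ 1 := fun p => by
    rw [Submodule.one_eq_range]; exact LinearMap.map_le_range
  have hcancel : ∀ A B : Submodule R K, A * M ≤ B * M → A ≤ B := by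
    intro A B h
    have := cqi_mul (P := N) h
    rwa [mul_assoc, mul_assoc, hMN, mul_one, mul_one] at this
  have hPM : ∀ p, P p * M ≤ M := fun p => by
    have := cqi_mul (P := M) (hP1 p)
    rwa [one_mul] at this
  set S := hfin.toFinset with hS
  have hSm : ∀ p ∈ S, p.IsMaximal ∧ I ≤ p := fun p hp => by simpa [hS] using hp
  have hx : ∀ p : Ideal R, ∃ x : K, p ∈ S → x ∈ P (∏ q ∈ S.erase p, q) * M ∧ x ∉ P p * M := by
    intro p
    by_cases hp : p ∈ S
    · by_contra! hcon
      have hle : P (∏ q ∈ S.erase p, q) * M ≤ P p * M := fun x hx => (hcon x).2 hx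
      have h2 := hPinj _ _ (hcancel _ _ hle)
      have hpm := (hSm p hp).1
      obtain ⟨q, hq, hqp⟩ := (Ideal.IsPrime.prod_le hpm.isPrime).1 h2
      have hq' := Finset.mem_erase.1 hq
      exact hq'.1 ((hSm q hq'.2).1.eq_of_le hpm.ne_top hqp)
    · exact ⟨0, fun h => absurd h hp⟩
  choose x hx using hx
  have hmM : ∑ p ∈ S, x p ∈ M := Submodule.sum_mem _ fun p hp => hPM _ (hx p hp).1
  have hmp : ∀ p ∈ S, ∑ p ∈ S, x p ∉ P p * M := by
    intro p hp h
    rw [← Finset.add_sum_erase _ _ hp] at h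
    refine (hx p hp).2 ((Submodule.add_mem_iff_left _ ?_).1 h)
    refine Submodule.sum_mem _ fun q hq => ?_
    have hq' := Finset.mem_erase.1 hq
    refine cqi_mul (hPmono _ _ ?_) (hx q hq'.2).1
    exact Ideal.prod_le_inf.trans (Finset.inf_le (Finset.mem_erase.2 ⟨hq'.1.symm, hp⟩))
  generalize ∑ p ∈ S, x p = m at hmM hmp
  have hQ1 : Submodule.span R {m} * N ≤ 1 := by
    rw [← hMN]
    exact cqi_mul ((Submodule.span_singleton_le_iff_mem _ _).2 hmM)
  set c : Ideal R := Submodule.comap (Algebra.linearMap R K) (Submodule.span R {m} * N) with hc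
  have hPc : P c = Submodule.span R {m} * N := by
    rw [hP, hc]
    refine Submodule.map_comap_eq_self ?_
    rwa [← Submodule.one_eq_range]
  have hPcM : P c * M = Submodule.span R {m} := by
    rw [hPc, mul_assoc, mul_comm N, hMN, mul_one]
  have htop : c ⊔ I = ⊤ := by
    by_contra hne
    obtain ⟨p, hpm, hp⟩ := Ideal.exists_le_maximal _ hne
    have hpS : p ∈ S := by simpa [hS] using ⟨hpm, le_sup_right.trans hp⟩
    apply hmp p hpS
    have := cqi_mul (P := M) (hPmono _ _ (le_sup_left.trans hp : c ≤ p))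
    rw [hPcM] at this
    exact this (Submodule.mem_span_singleton_self m)
  refine ⟨m, hmM, ?_, ?_⟩
  · have h1 : P c ⊔ P I = 1 := by
      rw [hP]; simp only
      rw [← Submodule.map_sup, htop, Submodule.map_top, Submodule.one_eq_range]
    change M ≤ Submodule.span R {m} ⊔ P I * M
    rw [← hPcM, ← Submodule.sup_mul, h1, one_mul]
  · intro a ha
    have hle : Submodule.span R {a • m} * N ≤ P I := by
      have := cqi_mul (P := N) ((Submodule.span_singleton_le_iff_mem _ _).2 ha)
      rwa [mul_assoc, hMN, mul_one] at this
    obtain ⟨d, hd, i, hi, hdi⟩ := Submodule.mem_sup.1 (htop ▸ Submodule.mem_top : (1 : R) ∈ c ⊔ I)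
    have hdm : algebraMap R K d ∈ Submodule.span R {m} * N := hd
    obtain ⟨n, hn, hmn⟩ := Submodule.mem_span_singleton_mul.1 hdm
    have : algebraMap R K (a * d) ∈ P I := by
      apply hle
      rw [map_mul, ← hmn, ← Algebra.smul_def, ← smul_mul_assoc]
      exact Submodule.mul_mem_mul (Submodule.mem_span_singleton_self _) hn
    obtain ⟨b, hb, hba⟩ := this
    have : b = a * d := hinj hba
    rw [← mul_one a, ← hdi, mul_add]
    exact I.add_mem (this ▸ hb) (I.mul_mem_left _ hi)

theorem cqi_main {R K : Type*} [CommRing R] [CommRing K] [Algebra R K]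
    (hinj : Function.Injective (algebraMap R K)) (I : Ideal R)
    (hfin : {p : Ideal R | p.IsMaximal ∧ I ≤ p}.Finite) (Λ J L : Submodule R K)
    (hJ : Submodule.map (Algebra.linearMap R K) I * J = 1) (hL : Λ * L = 1) :
    Nonempty
      ((↥(Λ / Submodule.map (Algebra.linearMap R K) I) ⧸
          Submodule.comap (Λ / Submodule.map (Algebra.linearMap R K) I).subtype Λ)
        ≃ₗ[R] (R ⧸ I)) := by
  set A := Submodule.map (Algebra.linearMap R K) I with hA
  have hdiv : Λ / A = Λ * J := by
    apply le_antisymm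
    · have := cqi_mul (P := J) (Submodule.le_div_iff_mul_le.1 (le_refl (Λ / A)))
      rwa [mul_assoc, hJ, mul_one] at this
    · rw [Submodule.le_div_iff_mul_le, mul_assoc, mul_comm J, hJ, mul_one]
  have hMN : (Λ / A) * (A * L) = 1 := by
    rw [hdiv, mul_assoc, ← mul_assoc J, mul_comm J, hJ, one_mul, hL]
  have hAM : A * (Λ / A) = Λ := by rw [hdiv, mul_left_comm, hJ, mul_one]
  obtain ⟨m, hm, h1, h2⟩ := cqi_aux hinj I hfin _ _ hMN
  rw [← hA, hAM] at h1 h2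
  let g : R →ₗ[R] (↥(Λ / A) ⧸ Submodule.comap (Λ / A).subtype Λ) :=
    (Submodule.mkQ _).comp (LinearMap.toSpanSingleton R _ (⟨m, hm⟩ : ↥(Λ / A)))
  have hg : ∀ a, g a = Submodule.Quotient.mk (a • (⟨m, hm⟩ : ↥(Λ / A))) := fun a => rfl
  have hker : LinearMap.ker g = I := by
    ext a
    rw [LinearMap.mem_ker, hg, Submodule.Quotient.mk_eq_zero]
    constructor
    · intro h; exact h2 a h
    · intro h
      change a • m ∈ Λ
      rw [← hAM, Algebra.smul_def]
      exact Submodule.mul_mem_mul ⟨a, h, rfl⟩ hm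
  have hsurj : Function.Surjective g := by
    intro y
    obtain ⟨⟨y, hy⟩, rfl⟩ := Submodule.Quotient.mk_surjective _ y
    obtain ⟨u, hu, v, hv, huv⟩ := Submodule.mem_sup.1 (h1 hy)
    obtain ⟨a, rfl⟩ := Submodule.mem_span_singleton.1 hu
    refine ⟨a, ?_⟩
    rw [hg, eq_comm, Submodule.Quotient.eq]
    change y - a • m ∈ Λ
    rw [← huv, add_sub_cancel_left]
    exact hv
  exact ⟨((Submodule.quotEquivOfEq _ _ hker).symm.trans (g.quotKerEquivOfSurjective hsurj)).symm⟩

/-- If `I` is a nonzero invertible ideal of an order `O` in an imaginary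
quadratic field `K` and `Λ` is an invertible fractional `O`-ideal, then
`(Λ:I)/Λ ≅ O/I` as `O`-modules; in particular the two have the same cardinality.
Here `(Λ:I) = {x ∈ K : xI ⊆ Λ}` is definitionally `Λ / I` as submodules of `K`. -/
theorem colon_quotient_iso (K : Type*) [Field K] [NumberField K] (hK : IsImagQuadratic K)
    (f : ℕ) (hf : 0 < f) (O : Subalgebra ℤ K) (hO : IsOrderOfConductor K f O)
    (I : Ideal ↥O) (hInz : I ≠ ⊥)
    (hIinv : ∃ J : Submodule ↥O K, Submodule.map (Algebra.linearMap ↥O K) I * J = 1)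
    (Λ : Submodule ↥O K) (hΛnz : Λ ≠ ⊥) (hΛfg : Λ.FG)
    (hΛinv : ∃ J : Submodule ↥O K, Λ * J = 1) :
    Nonempty
      ((↥(Λ / Submodule.map (Algebra.linearMap ↥O K) I) ⧸
          Submodule.comap (Λ / Submodule.map (Algebra.linearMap ↥O K) I).subtype Λ)
        ≃ₗ[↥O] (↥O ⧸ I)) ∧
    Nat.card
      (↥(Λ / Submodule.map (Algebra.linearMap ↥O K) I) ⧸
        Submodule.comap (Λ / Submodule.map (Algebra.linearMap ↥O K) I).subtype Λ) =
      Nat.card (↥O ⧸ I) := by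
  obtain ⟨J, hJ⟩ := hIinv
  obtain ⟨L, hL⟩ := hΛinv
  have hint : ∀ x ∈ O, IsIntegral ℤ x := by
    intro x hx
    obtain ⟨a, y, rfl⟩ := (hO x).1 hx
    have h1 : IsIntegral ℤ ((a : ℤ) : K) := isIntegral_algebraMap (R := ℤ) (x := a)
    have h2 : IsIntegral ℤ ((f : ℕ) : K) := by
      have := isIntegral_algebraMap (R := ℤ) (A := K) (x := (f : ℤ))
      simpa using this
    exact h1.add (h2.mul y.isIntegral_coe)
  let φ : ↥O →ₗ[ℤ] 𝓞 K :=
    (AddMonoidHom.mk' (fun x : ↥O => (⟨(x : K), hint x x.2⟩ : 𝓞 K))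
      (fun x y => rfl)).toIntLinearMap
  have hφ : Function.Injective φ := fun x y h => Subtype.ext (congrArg (fun z : 𝓞 K => (z : K)) h)
  have : Module.Finite ℤ ↥O := Module.Finite.of_injective φ hφ
  have : Module.Free ℤ ↥O := inferInstance
  have hQ : Finite (↥O ⧸ I) := Ideal.finiteQuotientOfFreeOfNeBot I hInz
  have hfin : {p : Ideal ↥O | p.IsMaximal ∧ I ≤ p}.Finite := by
    have : Finite (Ideal (↥O ⧸ I)) := Finite.of_injective (fun p => (p : Set (↥O ⧸ I))) SetLike.coe_injective
    refine Set.Finite.of_injOn (f := fun p : Ideal ↥O => p.map (Ideal.Quotient.mk I)) (t := Set.univ)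
      (fun _ _ => Set.mem_univ _) ?_ Set.finite_univ
    intro p hp q hq h
    have h' := congrArg (Ideal.comap (Ideal.Quotient.mk I)) h
    simpa [Ideal.comap_map_of_surjective _ Ideal.Quotient.mk_surjective, ← RingHom.ker_eq_comap_bot, Ideal.mk_ker, hp.2, hq.2] using h'
  have h := cqi_main (R := ↥O) (K := K) Subtype.val_injective I hfin Λ J L hJ hL
  exact ⟨h, Nat.card_congr h.some.toEquiv⟩
end

section
/- Let K be an imaginary quadratic field with ring of integers O_K, let Λ be a nonzero fractional O_K-ideal, and let M be a finite O_K-submodule of the O_K-module K/Λ. Let I = ann_{O_K}(M) = {x ∈ O_K : xM = 0}. Then M = {P ∈ K/Λ : xP = 0 for all x ∈ I}, M is isomorphic as an O_K-module to O_K/I, and #M = #(O_K/I). -/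
set_option synthInstance.maxHeartbeats 1000000
set_option maxHeartbeats 1000000

open NumberField

/-- Let `K` be an imaginary quadratic field with ring of integers `𝓞 K`,
`Λ` a nonzero fractional `𝓞 K`-ideal, and `M` a finite `𝓞 K`-submodule of `K/Λ`, with
annihilator `I`.  Then `M` is exactly the set of `I`-torsion points of `K/Λ`,
`M ≅ 𝓞 K / I` as `𝓞 K`-modules, and `#M = #(𝓞 K / I)`. -/
theorem finite_submodule_eq_torsion_kernel (K : Type*) [Field K] [NumberField K]
    (hK : IsImagQuadratic K)
    (Λ : Submodule (𝓞 K) K) (hΛnz : Λ ≠ ⊥) (hΛfg : Λ.FG)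
    (M : Submodule (𝓞 K) (K ⧸ Λ)) (hMfin : Set.Finite (M : Set (K ⧸ Λ))) :
    (∀ P : K ⧸ Λ, P ∈ M ↔ ∀ x ∈ M.annihilator, x • P = 0) ∧
    Nonempty (↥M ≃ₗ[𝓞 K] (𝓞 K ⧸ M.annihilator)) ∧
    Nat.card ↥M = Nat.card (𝓞 K ⧸ M.annihilator) := by
  classical
  let L : Submodule (𝓞 K) K := M.comap Λ.mkQ
  have hLΛ : Λ ≤ L := by
    intro y hy
    change Λ.mkQ y ∈ M
    rw [(by simpa using hy : Λ.mkQ y = 0)]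
    exact M.zero_mem
  have hMfg : M.FG := ⟨hMfin.toFinset, by simp⟩
  have hLfg : L.FG := by
    refine Submodule.fg_of_fg_map_of_fg_inf_ker Λ.mkQ ?_ ?_
    · rw [Submodule.map_comap_eq_of_surjective Λ.mkQ_surjective]
      exact hMfg
    · rw [Submodule.ker_mkQ, inf_eq_right.mpr hLΛ]
      exact hΛfg
  let a : FractionalIdeal (nonZeroDivisors (𝓞 K)) K :=
    ⟨Λ, FractionalIdeal.isFractional_of_fg hΛfg⟩
  let c : FractionalIdeal (nonZeroDivisors (𝓞 K)) K :=
    ⟨L, FractionalIdeal.isFractional_of_fg hLfg⟩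
  have ha : ∀ y, y ∈ a ↔ y ∈ Λ := fun y => Iff.rfl
  have hc : ∀ y, y ∈ c ↔ Λ.mkQ y ∈ M := fun y => Iff.rfl
  have hac : a ≤ c := hLΛ
  have ha0 : a ≠ 0 := by
    intro h
    apply hΛnz
    have h2 : (a : Submodule (𝓞 K) K) = ⊥ := by rw [h]; simp
    exact h2
  have hc0 : c ≠ 0 := by
    intro h
    rw [h] at hac
    exact ha0 (le_antisymm hac zero_le)
  have hb1 : a * c⁻¹ ≤ 1 := by
    calc a * c⁻¹ ≤ c * c⁻¹ := by gcongr
      _ = 1 := mul_inv_cancel₀ hc0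
  obtain ⟨J, hJ⟩ := FractionalIdeal.le_one_iff_exists_coeIdeal.mp hb1
  have hJc : (J : FractionalIdeal (nonZeroDivisors (𝓞 K)) K) * c = a := by
    rw [hJ, mul_assoc, inv_mul_cancel₀ hc0, mul_one]
  have hJann : ∀ x ∈ J, x ∈ M.annihilator := by
    intro x hx
    rw [Submodule.mem_annihilator]
    intro m hm
    obtain ⟨y, rfl⟩ := Λ.mkQ_surjective m
    rw [← map_smul, Submodule.mkQ_apply, Submodule.Quotient.mk_eq_zero, ← ha, ← hJc,
      Algebra.smul_def]
    exact FractionalIdeal.mul_mem_mul (FractionalIdeal.mem_coeIdeal_of_mem _ hx) ((hc y).2 hm)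
  have h1 : ∀ P : K ⧸ Λ, P ∈ M ↔ ∀ x ∈ M.annihilator, x • P = 0 := by
    intro P
    refine ⟨fun hP x hx => Submodule.mem_annihilator.mp hx P hP, fun h => ?_⟩
    obtain ⟨y, rfl⟩ := Λ.mkQ_surjective P
    rw [← hc]
    have hle : (J : FractionalIdeal (nonZeroDivisors (𝓞 K)) K) *
        FractionalIdeal.spanSingleton _ y ≤ a := by
      rw [FractionalIdeal.mul_le]
      intro i hi j hj
      obtain ⟨x, hx, rfl⟩ := (FractionalIdeal.mem_coeIdeal _).1 hi
      obtain ⟨z, rfl⟩ := (FractionalIdeal.mem_spanSingleton _).1 hj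
      have h3 := h x (hJann x hx)
      rw [← map_smul, Submodule.mkQ_apply, Submodule.Quotient.mk_eq_zero] at h3
      rw [ha, ← Algebra.smul_def, smul_comm]
      exact Λ.smul_mem z h3
    have hJ0 : (J : FractionalIdeal (nonZeroDivisors (𝓞 K)) K) ≠ 0 := by
      intro h0
      rw [h0, zero_mul] at hJc
      exact ha0 hJc.symm
    have hle2 : FractionalIdeal.spanSingleton (nonZeroDivisors (𝓞 K)) y ≤ c := by
      calc FractionalIdeal.spanSingleton (nonZeroDivisors (𝓞 K)) y
          = (J : FractionalIdeal (nonZeroDivisors (𝓞 K)) K)⁻¹ * ((J : FractionalIdeal (nonZeroDivisors (𝓞 K)) K) *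
            FractionalIdeal.spanSingleton _ y) := by
              rw [← mul_assoc, inv_mul_cancel₀ hJ0, one_mul]
        _ ≤ (J : FractionalIdeal (nonZeroDivisors (𝓞 K)) K)⁻¹ * a := by gcongr
        _ = c := by rw [← hJc, ← mul_assoc, inv_mul_cancel₀ hJ0, one_mul]
    exact hle2 (FractionalIdeal.mem_spanSingleton_self _ y)
  obtain ⟨t, ht⟩ := IsDedekindDomain.exists_add_spanSingleton_mul_eq hac ha0 one_ne_zero
  rw [mul_one] at ht
  have hM : M = Submodule.span (𝓞 K) {Λ.mkQ t} := by
    apply le_antisymm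
    · intro m hm
      obtain ⟨y, rfl⟩ := Λ.mkQ_surjective m
      rw [← hc, ← ht, FractionalIdeal.mem_add] at hm
      obtain ⟨u, hu, v, hv, rfl⟩ := hm
      obtain ⟨z, rfl⟩ := (FractionalIdeal.mem_spanSingleton _).1 hv
      rw [ha] at hu
      rw [map_add, (by simpa using hu : Λ.mkQ u = 0), zero_add, map_smul]
      exact Submodule.smul_mem _ _ (Submodule.mem_span_singleton_self _)
    · rw [Submodule.span_singleton_le_iff_mem, ← hc, ← ht, FractionalIdeal.mem_add]
      exact ⟨0, FractionalIdeal.zero_mem _, t, FractionalIdeal.mem_spanSingleton_self _ t,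
        zero_add t⟩
  have hann : M.annihilator = Ideal.torsionOf (𝓞 K) (K ⧸ Λ) (Λ.mkQ t) := by
    ext x
    rw [hM, Submodule.mem_annihilator_span_singleton, Ideal.mem_torsionOf_iff]
  have e : Nonempty (↥M ≃ₗ[𝓞 K] (𝓞 K ⧸ M.annihilator)) :=
    ⟨(LinearEquiv.ofEq _ _ hM).trans
      ((Ideal.quotTorsionOfEquivSpanSingleton (𝓞 K) (K ⧸ Λ) (Λ.mkQ t)).symm.trans
        (Submodule.quotEquivOfEq _ _ hann.symm))⟩
  exact ⟨h1, e, Nat.card_congr e.some.toEquiv⟩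
end

section
/- Let K be an imaginary quadratic field with ring of integers O_K, write O_K = ℤ·1 ⊕ ℤ·τ_K, and let f, N be positive integers and p a prime. Set R = O_K ⊗_ℤ ℤ_p (a free ℤ_p-module with basis 1, τ_K), and let S = ℤ_p + f·R and S' = ℤ_p + Nf·R, which are ℤ_p-subalgebras of R. Then {x ∈ R : x is a unit of S and x − 1 ∈ N·S} = {x ∈ R : x is a unit of S'} ∩ {x ∈ R : x is a unit of R and x − 1 ∈ N·R}, where for a subring T ⊆ R an element x is a unit of T if x ∈ T and x has a multiplicative inverse lying in T. -/
set_option synthInstance.maxHeartbeats 1000000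
set_option maxHeartbeats 1000000

open NumberField

/-- Membership in the `ℤ_p`-subalgebra `ℤ_p + g·R` of `R = 𝓞_K ⊗_ℤ ℤ_p`. -/
def MemPadicOrder (K : Type*) [Field K] [NumberField K] (p : ℕ) [Fact p.Prime] (g : ℕ)
    (x : TensorProduct ℤ (𝓞 K) ℤ_[p]) : Prop :=
  ∃ (a : ℤ_[p]) (y : TensorProduct ℤ (𝓞 K) ℤ_[p]),
    x = Algebra.TensorProduct.includeRight a + (g : TensorProduct ℤ (𝓞 K) ℤ_[p]) * y

/-- `x` is a unit of the subring `ℤ_p + g·R` of `R = 𝓞_K ⊗_ℤ ℤ_p`: it lies in the subring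
and has a multiplicative inverse lying in the subring. -/
def UnitOfPadicOrder (K : Type*) [Field K] [NumberField K] (p : ℕ) [Fact p.Prime] (g : ℕ)
    (x : TensorProduct ℤ (𝓞 K) ℤ_[p]) : Prop :=
  MemPadicOrder K p g x ∧ ∃ y, MemPadicOrder K p g y ∧ x * y = 1

lemma aux_dvd (K : Type*) [Field K] [NumberField K] (p : ℕ) [Fact p.Prime] (N : ℕ)
    (c : ℤ_[p]) (t : TensorProduct ℤ (𝓞 K) ℤ_[p])
    (h : (Algebra.TensorProduct.includeRight c : TensorProduct ℤ (𝓞 K) ℤ_[p]) = (N : TensorProduct ℤ (𝓞 K) ℤ_[p]) * t) :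
    ∃ b : ℤ_[p], c = N * b := by
  have h2 := congrArg (Algebra.TensorProduct.comm ℤ (𝓞 K) ℤ_[p]) h
  rw [map_mul, map_natCast] at h2
  have h3 : (Algebra.TensorProduct.comm ℤ (𝓞 K) ℤ_[p]) (Algebra.TensorProduct.includeRight c)
      = algebraMap ℤ_[p] (TensorProduct ℤ ℤ_[p] (𝓞 K)) c := by
    simp [Algebra.TensorProduct.algebraMap_apply]
  rw [h3, ← map_natCast (algebraMap ℤ_[p] (TensorProduct ℤ ℤ_[p] (𝓞 K))) N] at h2
  have h4 := congrArg (Algebra.norm ℤ_[p]) h2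
  rw [map_mul, Algebra.norm_algebraMap_of_basis (Module.Free.chooseBasis ℤ_[p] (TensorProduct ℤ ℤ_[p] (𝓞 K))),
    Algebra.norm_algebraMap_of_basis (Module.Free.chooseBasis ℤ_[p] (TensorProduct ℤ ℤ_[p] (𝓞 K))),
    ← Module.finrank_eq_card_chooseBasisIndex, Module.finrank_baseChange] at h4
  have h5 : Module.finrank ℤ (𝓞 K) ≠ 0 := by
    rw [RingOfIntegers.rank]
    exact Module.finrank_pos.ne'
  have h6 : (N : ℤ_[p]) ∣ c := by
    rw [← IsIntegrallyClosed.pow_dvd_pow_iff h5]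
    exact ⟨_, h4⟩
  exact h6

lemma aux_mul (K : Type*) [Field K] [NumberField K] (p : ℕ) [Fact p.Prime] (g : ℕ)
    (x y : TensorProduct ℤ (𝓞 K) ℤ_[p]) (hx : MemPadicOrder K p g x)
    (hy : MemPadicOrder K p g y) : MemPadicOrder K p g (x * y) := by
  obtain ⟨a, u, rfl⟩ := hx
  obtain ⟨b, v, rfl⟩ := hy
  refine ⟨a * b, Algebra.TensorProduct.includeRight a * v
    + Algebra.TensorProduct.includeRight b * u + (g : TensorProduct ℤ (𝓞 K) ℤ_[p]) * u * v, ?_⟩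
  rw [map_mul]
  ring

lemma aux_up (K : Type*) [Field K] [NumberField K] (p : ℕ) [Fact p.Prime] (f N : ℕ)
    (s : TensorProduct ℤ (𝓞 K) ℤ_[p]) (hs : MemPadicOrder K p f s) :
    MemPadicOrder K p (N * f) (1 + N * s) := by
  obtain ⟨a, u, rfl⟩ := hs
  refine ⟨1 + N * a, u, ?_⟩
  rw [map_add, map_mul, map_one, map_natCast]
  push_cast
  ring

lemma aux_down (K : Type*) [Field K] [NumberField K] (p : ℕ) [Fact p.Prime] (f N : ℕ)
    (s : TensorProduct ℤ (𝓞 K) ℤ_[p]) (hs : MemPadicOrder K p (N * f) s) :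
    MemPadicOrder K p f s := by
  obtain ⟨a, u, rfl⟩ := hs
  refine ⟨a, N * u, ?_⟩
  push_cast
  ring

/-- With `R = 𝓞_K ⊗_ℤ ℤ_p`, `S = ℤ_p + f·R` and `S' = ℤ_p + Nf·R`, one has
`{x : x ∈ Sˣ, x ≡ 1 mod N·S} = S'ˣ ∩ {x ∈ Rˣ : x ≡ 1 mod N·R}`. -/
theorem padic_order_unit_congruence (K : Type*) [Field K] [NumberField K]
    (hK : IsImagQuadratic K) (f N : ℕ) (hf : 0 < f) (hN : 0 < N)
    (p : ℕ) [Fact p.Prime] :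
    ∀ x : TensorProduct ℤ (𝓞 K) ℤ_[p],
      (UnitOfPadicOrder K p f x ∧
        ∃ s, MemPadicOrder K p f s ∧ x - 1 = (N : TensorProduct ℤ (𝓞 K) ℤ_[p]) * s) ↔
      (UnitOfPadicOrder K p (N * f) x ∧
        (IsUnit x ∧ ∃ r : TensorProduct ℤ (𝓞 K) ℤ_[p],
          x - 1 = (N : TensorProduct ℤ (𝓞 K) ℤ_[p]) * r)) := by
  intro x
  constructor
  · rintro ⟨⟨hx, y, hy, hxy⟩, s, hs, hxs⟩
    have hx1 : x = 1 + N * s := by rw [← hxs]; ring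
    refine ⟨⟨?_, y, ?_, hxy⟩, IsUnit.of_mul_eq_one y hxy, s, hxs⟩
    · rw [hx1]; exact aux_up K p f N s hs
    · have hm : MemPadicOrder K p f (-1) := ⟨-1, 0, by rw [map_neg, map_one]; ring⟩
      have := aux_up K p f N _ (aux_mul K p f _ _ hm (aux_mul K p f _ _ hs hy))
      have e : 1 + (N : TensorProduct ℤ (𝓞 K) ℤ_[p]) * (-1 * (s * y)) = y := by
        linear_combination y * hxs - hxy
      rwa [e] at this
  · rintro ⟨⟨hx, y, hy, hxy⟩, -, r, hr⟩
    refine ⟨⟨aux_down K p f N x hx, y, aux_down K p f N y hy, hxy⟩, ?_⟩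
    obtain ⟨a, u, hu⟩ := hx
    push_cast at hu
    obtain ⟨b, hb⟩ := aux_dvd K p N (a - 1) (r - f * u) (by
      rw [map_sub, map_one]
      linear_combination hr - hu)
    refine ⟨_, ⟨b, u, rfl⟩, ?_⟩
    have hb2 := congrArg (Algebra.TensorProduct.includeRight :
      ℤ_[p] →ₐ[ℤ] TensorProduct ℤ (𝓞 K) ℤ_[p]) hb
    rw [map_sub, map_one, map_mul, map_natCast] at hb2
    linear_combination hu + hb2
end

section
/- Let O be an order in an imaginary quadratic field and let N = ℓ_1^{a_1} ⋯ ℓ_r^{a_r} be a positive integer with its prime factorization. Then H(O,N) holds if and only if H(O, ℓ_i^{a_i}) holds for all 1 ≤ i ≤ r. -/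
set_option synthInstance.maxHeartbeats 1000000
set_option maxHeartbeats 1000000

open NumberField

/-- The condition `H(O,N)`: there is an element `P` of additive order `N` in `O/NO`
whose orbit under the Cartan group `C_N(O) = (O/NO)ˣ` has cardinality `φ(N)`. -/
def CartanH (R : Type*) [CommRing R] (N : ℕ) : Prop :=
  ∃ P : R ⧸ Ideal.span {(N : R)}, addOrderOf P = N ∧
    Nat.card ↥(MulAction.orbit (R ⧸ Ideal.span {(N : R)})ˣ P) = Nat.totient N

/-- abstract version -/
def CartanHA (A : Type*) [CommRing A] (N : ℕ) : Prop :=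
  ∃ P : A, addOrderOf P = N ∧ Nat.card ↥(MulAction.orbit Aˣ P) = Nat.totient N

lemma CartanHA.congr {A B : Type*} [CommRing A] [CommRing B] (e : A ≃+* B) {N : ℕ}
    (h : CartanHA A N) : CartanHA B N := by
  obtain ⟨P, h1, h2⟩ := h
  refine ⟨e P, ?_, ?_⟩
  · rw [← h1]
    exact addOrderOf_injective e.toAddMonoidHom e.injective P
  · rw [← h2]
    have : MulAction.orbit Bˣ (e P) = e '' MulAction.orbit Aˣ P := by
      ext x
      constructor
      · rintro ⟨u, rfl⟩
        refine ⟨_, ⟨Units.mapEquiv e.symm.toMulEquiv u, rfl⟩, ?_⟩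
        simp [Units.smul_def]
      · rintro ⟨_, ⟨u, rfl⟩, rfl⟩
        refine ⟨Units.mapEquiv e.toMulEquiv u, ?_⟩
        simp [Units.smul_def]
    rw [this]
    exact Nat.card_image_of_injective e.injective _

lemma totient_le_orbit {A : Type*} [CommRing A] {n : ℕ} (hn : 0 < n) (hA : (n : A) = 0) (P : A)
    (hP : addOrderOf P = n) (hc : Nat.card ↥(MulAction.orbit Aˣ P) ≠ 0) :
    n.totient ≤ Nat.card ↥(MulAction.orbit Aˣ P) := by
  haveI : NeZero n := ⟨hn.ne'⟩
  haveI : CharP A n := ⟨fun k => by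
    constructor
    · intro hk
      rw [← hP]
      apply addOrderOf_dvd_of_nsmul_eq_zero
      rw [nsmul_eq_mul, hk, zero_mul]
    · rintro ⟨c, rfl⟩
      simp [hA]⟩
  haveI := Nat.finite_of_card_ne_zero hc
  rw [← ZMod.card_units_eq_totient n, ← Nat.card_eq_fintype_card]
  let g : ZMod n →+* A := ZMod.castHom (dvd_refl n) A
  refine Nat.card_le_card_of_injective
    (fun u : (ZMod n)ˣ => (⟨Units.map (g : ZMod n →* A) u • P, ⟨_, rfl⟩⟩ : MulAction.orbit Aˣ P)) ?_
  intro u v huv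
  have h1 : g (u : ZMod n) * P = g (v : ZMod n) * P := by
    simpa [Units.smul_def] using huv
  have h2 : g ((u : ZMod n) - v) * P = 0 := by
    rw [map_sub, sub_mul, h1, sub_self]
  have h3 : ∀ w : ZMod n, g w * P = 0 → w = 0 := by
    intro w hw
    rw [← ZMod.natCast_zmod_val w, map_natCast, ← nsmul_eq_mul] at hw
    have := addOrderOf_dvd_of_nsmul_eq_zero hw
    rw [hP] at this
    rw [← ZMod.natCast_zmod_val w]
    exact (ZMod.natCast_eq_zero_iff _ _).2 this
  exact Units.ext (sub_eq_zero.1 (h3 _ h2))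

lemma card_orbit_prod {A B : Type*} [CommRing A] [CommRing B] (P : A × B) :
    Nat.card ↥(MulAction.orbit (A × B)ˣ P) =
      Nat.card ↥(MulAction.orbit Aˣ P.1) * Nat.card ↥(MulAction.orbit Bˣ P.2) := by
  have : MulAction.orbit (A × B)ˣ P = MulAction.orbit Aˣ P.1 ×ˢ MulAction.orbit Bˣ P.2 := by
    ext x
    constructor
    · rintro ⟨u, rfl⟩
      exact ⟨⟨(MulEquiv.prodUnits u).1, rfl⟩, ⟨(MulEquiv.prodUnits u).2, rfl⟩⟩
    · rintro ⟨⟨u, hu⟩, ⟨v, hv⟩⟩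
      exact ⟨MulEquiv.prodUnits.symm (u, v), Prod.ext hu hv⟩
  rw [this, Nat.card_congr (Equiv.Set.prod _ _), Nat.card_prod]

lemma addOrderOf_dvd_cast {A : Type*} [CommRing A] {n : ℕ} (hA : (n : A) = 0) (P : A) :
    addOrderOf P ∣ n := by
  apply addOrderOf_dvd_of_nsmul_eq_zero
  rw [nsmul_eq_mul, hA, zero_mul]

lemma cartanHA_prod {A B : Type*} [CommRing A] [CommRing B] {m n : ℕ} (hm : 0 < m) (hn : 0 < n)
    (hA : (m : A) = 0) (hB : (n : B) = 0) (h : m.Coprime n) :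
    CartanHA (A × B) (m * n) ↔ CartanHA A m ∧ CartanHA B n := by
  constructor
  · rintro ⟨P, h1, h2⟩
    have d1 := addOrderOf_dvd_cast hA P.1
    have d2 := addOrderOf_dvd_cast hB P.2
    rw [Prod.addOrderOf, (Nat.Coprime.of_dvd d1 d2 h).lcm_eq_mul] at h1
    have l1 := Nat.le_of_dvd hm d1
    have l2 := Nat.le_of_dvd hn d2
    have e1 : addOrderOf P.1 = m := by
      by_contra hne
      have : addOrderOf P.1 < m := lt_of_le_of_ne l1 hne
      nlinarith
    have e2 : addOrderOf P.2 = n := by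
      rw [e1] at h1
      exact Nat.eq_of_mul_eq_mul_left hm h1
    rw [card_orbit_prod, Nat.totient_mul h] at h2
    have pm := Nat.totient_pos.2 hm
    have pn := Nat.totient_pos.2 hn
    have hpos := Nat.mul_pos pm pn
    rw [← h2] at hpos
    have c1 := totient_le_orbit hm hA P.1 e1 (fun hz => by simp [hz] at hpos)
    have c2 := totient_le_orbit hn hB P.2 e2 (fun hz => by simp [hz] at hpos)
    refine ⟨⟨P.1, e1, ?_⟩, ⟨P.2, e2, ?_⟩⟩
    · by_contra hne
      have := lt_of_le_of_ne c1 (Ne.symm hne)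
      nlinarith
    · by_contra hne
      have := lt_of_le_of_ne c2 (Ne.symm hne)
      nlinarith
  · rintro ⟨⟨P, h1, h2⟩, ⟨Q, h3, h4⟩⟩
    refine ⟨(P, Q), ?_, ?_⟩
    · rw [Prod.addOrderOf, h1, h3, h.lcm_eq_mul]
    · rw [card_orbit_prod, h2, h4, Nat.totient_mul h]

lemma cartanH_mul (R : Type*) [CommRing R] {m n : ℕ} (hm : 0 < m) (hn : 0 < n)
    (h : m.Coprime n) : CartanH R (m * n) ↔ CartanH R m ∧ CartanH R n := by
  have hs : Ideal.span {((m * n : ℕ) : R)} = Ideal.span {(m : R)} * Ideal.span {(n : R)} := by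
    rw [Ideal.span_singleton_mul_span_singleton, Nat.cast_mul]
  have hc : IsCoprime (Ideal.span {(m : R)}) (Ideal.span {(n : R)}) := by
    rw [Ideal.isCoprime_span_singleton_iff]
    exact h.cast
  have e : (R ⧸ Ideal.span {((m * n : ℕ) : R)}) ≃+*
      (R ⧸ Ideal.span {(m : R)}) × (R ⧸ Ideal.span {(n : R)}) :=
    (Ideal.quotEquivOfEq hs).trans (Ideal.quotientMulEquivQuotientProd _ _ hc)
  have hz : ∀ k : ℕ, ((k : ℕ) : R ⧸ Ideal.span {(k : R)}) = 0 := fun k => by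
    rw [← map_natCast (Ideal.Quotient.mk (Ideal.span {(k : R)})) k]
    exact Ideal.Quotient.eq_zero_iff_mem.2 (Ideal.mem_span_singleton_self _)
  refine Iff.trans ?_ (cartanHA_prod hm hn (hz m) (hz n) h)
  exact ⟨fun H => CartanHA.congr e H, fun H => CartanHA.congr e.symm H⟩

lemma cartanH_one (R : Type*) [CommRing R] : CartanH R 1 := by
  haveI : Subsingleton (R ⧸ Ideal.span {((1 : ℕ) : R)}) := by
    rw [Ideal.Quotient.subsingleton_iff]
    simp
  refine ⟨0, by simp, ?_⟩
  rw [Nat.totient_one, Nat.card_eq_one_iff_unique]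
  exact ⟨inferInstance, ⟨⟨0, MulAction.mem_orbit_self _⟩⟩⟩

lemma cartanH_iff_general (R : Type*) [CommRing R] (N : ℕ) (hN : 0 < N) :
    CartanH R N ↔ ∀ p ∈ N.primeFactors, CartanH R (p ^ N.factorization p) := by
  induction N using Nat.recOnPosPrimePosCoprime with
  | prime_pow p n hp hn =>
    rw [Nat.primeFactors_prime_pow hn.ne' hp]
    simp [hp.factorization_self]
  | zero => exact absurd hN (lt_irrefl _)
  | one => simpa using cartanH_one R
  | coprime a b ha hb hab iha ihb =>
    have ha0 : 0 < a := by omega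
    have hb0 : 0 < b := by omega
    rw [cartanH_mul R ha0 hb0 hab, iha ha0, ihb hb0, hab.primeFactors_mul]
    simp only [Finset.mem_union, or_imp, forall_and]
    refine and_congr (forall₂_congr fun p hp => ?_) (forall₂_congr fun p hp => ?_)
    · rw [Nat.factorization_eq_of_coprime_left hab (by simpa using hp)]
    · rw [Nat.factorization_eq_of_coprime_right hab (by simpa using hp)]

/-- For an order `O` in an imaginary quadratic field and
`N = ∏ ℓᵢ^{aᵢ}` a positive integer, `H(O,N)` holds iff `H(O,ℓᵢ^{aᵢ})` holds for all `i`. -/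
theorem cartanH_iff_prime_powers (K : Type*) [Field K] [NumberField K]
    (hK : IsImagQuadratic K) (f : ℕ) (hf : 0 < f)
    (O : Subalgebra ℤ K) (hO : IsOrderOfConductor K f O) (N : ℕ) (hN : 0 < N) :
    CartanH (↥O) N ↔ ∀ p ∈ N.primeFactors, CartanH (↥O) (p ^ N.factorization p) := by
  exact cartanH_iff_general _ N hN
end

section
/- Let O be an order in an imaginary quadratic field and let N be a positive integer. The following are equivalent: (i) if 2 divides N, then 2 is not split in O (i.e. there is no ring isomorphism O/2O ≅ ℤ/2ℤ × ℤ/2ℤ); (ii) the ℤ/Nℤ-subalgebra of O/NO generated by the unit group (O/NO)^× is all of O/NO. -/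
set_option synthInstance.maxHeartbeats 1000000
set_option maxHeartbeats 1000000

open NumberField

theorem exists_k_aux (t n : ℤ) (N : ℕ) : 0 < N → (2 ∣ N → ¬ (¬ (2:ℤ) ∣ t ∧ (2:ℤ) ∣ n)) →
    ∃ k : ℤ, IsCoprime (k ^ 2 + k * t + n) (N : ℤ) := by
  induction N using Nat.recOnPrimeCoprime with
  | zero => intro h; omega
  | prime_pow p m hp =>
    intro _ h2
    rcases Nat.eq_zero_or_pos m with rfl | hm
    · exact ⟨0, by simpa using isCoprime_one_right⟩
    have key : ∃ k : ℤ, ¬ (p : ℤ) ∣ (k ^ 2 + k * t + n) := by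
      by_contra! hc
      have h0 := hc 0
      have h1 := hc 1
      have h3 := hc (-1)
      have h4 : (p : ℤ) ∣ 2 := by
        have := (h1.add h3).sub (h0.mul_right 2)
        ring_nf at this
        exact this
      have h5 : p = 2 := (Nat.prime_dvd_prime_iff_eq hp Nat.prime_two).1 (by exact_mod_cast h4)
      subst h5
      have := h2 (dvd_pow_self 2 hm.ne')
      push_cast at *
      apply this
      omega
    obtain ⟨k, hk⟩ := key
    refine ⟨k, ?_⟩
    push_cast
    apply IsCoprime.pow_right
    exact (((Nat.prime_iff_prime_int.1 hp).coprime_iff_not_dvd).2 hk).symm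
  | coprime a b ha hb hab iha ihb =>
    intro _ h2
    obtain ⟨k1, h1⟩ := iha (by omega) (fun h => h2 (h.mul_right _))
    obtain ⟨k2, h2⟩ := ihb (by omega) (fun h => h2 (h.mul_left _))
    obtain ⟨u, v, huv⟩ := Nat.isCoprime_iff_coprime.2 hab
    refine ⟨k1 * (v * b) + k2 * (u * a), ?_⟩
    push_cast
    apply IsCoprime.mul_right
    · have e : k1 * (v * b) + k2 * (u * a) = k1 + a * ((k2 - k1) * u) := by
        linear_combination k1 * huv
      rw [e]
      have hh := h1.add_mul_left_left (2 * k1 * ((k2 - k1) * u) + a * ((k2 - k1) * u)^2 + (k2 - k1) * u * t)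
      refine (congrArg (fun z => IsCoprime z _) ?_).mp hh
      ring
    · have e : k1 * (v * b) + k2 * (u * a) = k2 + b * ((k1 - k2) * v) := by
        linear_combination k2 * huv
      rw [e]
      have hh := h2.add_mul_left_left (2 * k2 * ((k1 - k2) * v) + b * ((k1 - k2) * v)^2 + (k1 - k2) * v * t)
      refine (congrArg (fun z => IsCoprime z _) ?_).mp hh
      ring

theorem split_aux {R : Type*} [CommRing R] (w : R) (t n : ℤ)
    (hspan : ∀ x : R, ∃ a c : ℤ, x = a + c * w)
    (hind : ∀ a c : ℤ, (a : R) + c * w = 0 → a = 0 ∧ c = 0)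
    (hw : w * w = t * w - n) (ht : ¬ (2:ℤ) ∣ t) (hn : (2:ℤ) ∣ n) :
    SplitsIn R 2 := by
  choose a c hac using hspan
  have huniq : ∀ (x : R) (p q : ℤ), x = p + q * w → a x = p ∧ c x = q := by
    intro x p q h
    have := hind (a x - p) (c x - q) (by
      push_cast
      linear_combination h - hac x)
    omega
  have htz : (t : ZMod 2) = 1 := by
    have : t = 2 * (t / 2) + 1 := by omega
    rw [this]; push_cast
    have : (2 : ZMod 2) = 0 := rfl
    rw [this]; ring
  have hnz : (n : ZMod 2) = 0 := (ZMod.intCast_zmod_eq_zero_iff_dvd n 2).2 (by exact_mod_cast hn)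
  let φ : R →+* ZMod 2 × ZMod 2 :=
    { toFun := fun x => ((a x : ZMod 2), ((a x + c x : ℤ) : ZMod 2))
      map_one' := by
        obtain ⟨h1, h2⟩ := huniq 1 1 0 (by simp)
        simp [h1, h2]
      map_zero' := by
        obtain ⟨h1, h2⟩ := huniq 0 0 0 (by simp)
        simp [h1, h2]
      map_add' := by
        intro x y
        obtain ⟨h1, h2⟩ := huniq (x + y) (a x + a y) (c x + c y) (by
          push_cast; linear_combination hac x + hac y)
        ext
        · simp [h1]
        · simp [h1, h2]; ring
      map_mul' := by
        intro x y
        obtain ⟨h1, h2⟩ := huniq (x * y) (a x * a y - c x * c y * n)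
          (a x * c y + a y * c x + c x * c y * t) (by
          push_cast
          conv_lhs => rw [hac x, hac y]
          linear_combination (c x * c y : R) * hw)
        ext
        · simp [h1, hnz]
        · simp [h1, h2, htz, hnz]; ring }
  have hsurj : Function.Surjective φ := by
    rintro ⟨p, q⟩
    obtain ⟨p, rfl⟩ := ZMod.intCast_surjective p
    obtain ⟨q, rfl⟩ := ZMod.intCast_surjective q
    obtain ⟨h1, h2⟩ := huniq (p + (q - p : ℤ) * w) p (q - p) rfl
    refine ⟨p + (q - p : ℤ) * w, ?_⟩
    change ((a _ : ZMod 2), ((a _ + c _ : ℤ) : ZMod 2)) = _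
    rw [h1, h2]
    simp
  have hker : RingHom.ker φ = Ideal.span {((2 : ℕ) : R)} := by
    ext x
    rw [Ideal.mem_span_singleton, RingHom.mem_ker]
    constructor
    · intro h
      have h : ((a x : ZMod 2), ((a x + c x : ℤ) : ZMod 2)) = (0, 0) := h
      rw [Prod.mk.injEq, ZMod.intCast_zmod_eq_zero_iff_dvd, ZMod.intCast_zmod_eq_zero_iff_dvd] at h
      obtain ⟨⟨r, hr⟩, ⟨s, hs⟩⟩ := h
      refine ⟨r + (s - r : ℤ) * w, ?_⟩
      have hc : c x = 2 * (s - r) := by push_cast at *; omega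
      rw [hac x, hc, hr]
      push_cast
      ring
    · rintro ⟨y, rfl⟩
      rw [map_mul, map_natCast]
      have : ((2 : ℕ) : ZMod 2 × ZMod 2) = 0 := rfl
      rw [this, zero_mul]
  exact ⟨(Ideal.quotEquivOfEq hker.symm).trans (RingHom.quotientKerEquivOfSurjective hsurj)⟩

theorem gen_aux {R : Type*} [CommRing R] (w : R) (t n : ℤ)
    (hspan : ∀ x : R, ∃ a c : ℤ, x = a + c * w)
    (hind : ∀ a c : ℤ, (a : R) + c * w = 0 → a = 0 ∧ c = 0)
    (hw : w * w = t * w - n) (N : ℕ) (hN : 0 < N) (h : 2 ∣ N → ¬ SplitsIn R 2) :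
    Subring.closure {x : R ⧸ Ideal.span {(N : R)} | IsUnit x} = ⊤ := by
  obtain ⟨k, u, v, huv⟩ := exists_k_aux t n N hN
    (fun h2 h3 => h h2 (split_aux w t n hspan hind hw h3.1 h3.2))
  set q := Ideal.Quotient.mk (Ideal.span {(N : R)})
  have hq : q (N : R) = 0 := Ideal.Quotient.eq_zero_iff_mem.2 (Ideal.mem_span_singleton_self _)
  have hu : IsUnit (q (k + w)) := by
    refine IsUnit.of_mul_eq_one (q ((k + t - w) * u)) ?_
    rw [← map_mul]
    have : ((k : R) + w) * ((k + t - w) * u) = 1 - v * N := by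
      have := congrArg (Int.cast : ℤ → R) huv
      push_cast at this
      linear_combination this - u * hw
    rw [this, map_sub, map_mul, hq]
    simp
  rw [eq_top_iff]
  rintro x -
  obtain ⟨x, rfl⟩ := Ideal.Quotient.mk_surjective x
  obtain ⟨a, c, rfl⟩ := hspan x
  have hmem : q (k + w) ∈ Subring.closure {x : R ⧸ Ideal.span {(N : R)} | IsUnit x} :=
    Subring.subset_closure hu
  have e : q (a + c * w) = ((a - c * k : ℤ) : R ⧸ Ideal.span {(N : R)}) + (c : ℤ) * q (k + w) := by
    rw [← map_intCast q, ← map_intCast q, ← map_mul, ← map_add]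
    congr 1
    push_cast
    ring
  change q (a + c * w) ∈ _
  rw [e]
  exact add_mem (intCast_mem _ _) (mul_mem (intCast_mem _ _) hmem)

theorem not_split_aux {R : Type*} [CommRing R] (N : ℕ)
    (h : Subring.closure {x : R ⧸ Ideal.span {(N : R)} | IsUnit x} = ⊤) (h2 : 2 ∣ N) :
    ¬ SplitsIn R 2 := by
  rintro ⟨e⟩
  have hle : Ideal.span {(N : R)} ≤ Ideal.span {((2 : ℕ) : R)} := by
    rw [Ideal.span_singleton_le_span_singleton]
    exact_mod_cast Nat.cast_dvd_cast h2
  let ψ : (R ⧸ Ideal.span {(N : R)}) →+* ZMod 2 × ZMod 2 :=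
    e.toRingHom.comp (Ideal.Quotient.factor hle)
  have hs : Function.Surjective ψ :=
    e.surjective.comp (Ideal.Quotient.factor_surjective hle)
  obtain ⟨x, hx⟩ := hs (0, 1)
  let d : Subring (ZMod 2 × ZMod 2) := RingHom.eqLocus (RingHom.fst _ _) (RingHom.snd _ _)
  have hd : Subring.closure {x : R ⧸ Ideal.span {(N : R)} | IsUnit x} ≤ d.comap ψ := by
    rw [Subring.closure_le]
    intro y hy
    have hy : IsUnit (ψ y) := IsUnit.map ψ hy
    change (ψ y).1 = (ψ y).2
    rw [Prod.isUnit_iff] at hy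
    have key : ∀ z : ZMod 2, z ≠ 0 → z = 1 := by decide
    rw [key _ hy.1.ne_zero, key _ hy.2.ne_zero]
  rw [h] at hd
  have : ψ x ∈ d := hd (Subring.mem_top x)
  rw [hx] at this
  have : (0 : ZMod 2) = 1 := this
  exact absurd this (by decide)

theorem basis_aux (K : Type*) [Field K] [NumberField K] (h : Module.finrank ℚ K = 2) :
    ∃ w : 𝓞 K, (∀ x : 𝓞 K, ∃ a c : ℤ, x = a + c * w) ∧
      (∀ a c : ℤ, (a : 𝓞 K) + c * w = 0 → a = 0 ∧ c = 0) := by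
  have hr : Module.finrank ℤ (𝓞 K) = 2 := by rw [RingOfIntegers.rank, h]
  let b := Module.finBasisOfFinrankEq ℤ (𝓞 K) hr
  have hb : ∀ z : 𝓞 K, z = (b.repr z 0 : 𝓞 K) * b 0 + (b.repr z 1 : 𝓞 K) * b 1 := by
    intro z
    conv_lhs => rw [← b.sum_repr z]
    simp [Fin.sum_univ_two, zsmul_eq_mul]
  have hli : ∀ p q : ℤ, (p : 𝓞 K) * b 0 + q * b 1 = 0 → p = 0 ∧ q = 0 := by
    intro p q hpq
    have := LinearIndependent.pair_iff.1 (show LinearIndependent ℤ ![b 0, b 1] by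
      convert b.linearIndependent using 1
      ext i; fin_cases i <;> rfl) p q (by simpa [zsmul_eq_mul] using hpq)
    exact this
  set x := b.repr 1 0 with hx
  set y := b.repr 1 1 with hy
  have h1 : (1 : 𝓞 K) = x * b 0 + y * b 1 := hb 1
  have hcop : IsCoprime x y := by
    rw [Int.isCoprime_iff_gcd_eq_one]
    obtain ⟨x', hx'⟩ := Int.gcd_dvd_left x y
    obtain ⟨y', hy'⟩ := Int.gcd_dvd_right x y
    obtain ⟨g, hg⟩ : ∃ g : ℤ, g = (Int.gcd x y : ℤ) := ⟨_, rfl⟩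
    rw [← hg] at hx' hy'
    have e : (1 : 𝓞 K) = algebraMap ℤ (𝓞 K) g * (x' * b 0 + y' * b 1) := by
      rw [hx', hy'] at h1
      simp only [eq_intCast]
      push_cast at h1
      linear_combination h1
    have := congrArg (Algebra.norm ℤ) e
    rw [map_mul, map_one, Algebra.norm_algebraMap_of_basis b] at this
    have hgu : IsUnit g := by
      refine IsUnit.of_mul_eq_one (g * Algebra.norm ℤ ((x' : 𝓞 K) * b 0 + y' * b 1)) ?_
      simp only [Fintype.card_fin] at this
      linear_combination -this
    have := Int.isUnit_iff.1 hgu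
    omega
  obtain ⟨u, v, huv⟩ := hcop
  have huv' := congrArg (Int.cast : ℤ → 𝓞 K) huv
  push_cast at huv'
  refine ⟨-v * b 0 + u * b 1, ?_, ?_⟩
  · intro z
    refine ⟨b.repr z 0 * u + b.repr z 1 * v, - b.repr z 0 * y + b.repr z 1 * x, ?_⟩
    conv_lhs => rw [hb z]
    push_cast
    generalize (b.repr z 0 : 𝓞 K) = p
    generalize (b.repr z 1 : 𝓞 K) = q
    linear_combination (- p * b 0 - q * b 1) * huv' + (- p * u - q * v) * (-1 : 𝓞 K) * (-h1)
  · intro a c hac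
    obtain ⟨e1, e2⟩ := hli (a * x - c * v) (a * y + c * u) (by
      push_cast
      linear_combination hac - a * h1)
    constructor
    · linear_combination (-a) * huv + u * e1 + v * e2
    · linear_combination (-c) * huv + x * e2 - y * e1

theorem order_aux (K : Type*) [Field K] [NumberField K] (h : Module.finrank ℚ K = 2)
    (f : ℕ) (hf : 0 < f) (O : Subalgebra ℤ K) (hO : IsOrderOfConductor K f O) :
    ∃ (w : O) (t n : ℤ), (∀ x : O, ∃ a c : ℤ, x = a + c * w) ∧
      (∀ a c : ℤ, (a : O) + c * w = 0 → a = 0 ∧ c = 0) ∧ w * w = t * w - n := by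
  obtain ⟨w, hspan, hind⟩ := basis_aux K h
  obtain ⟨m, s, hms⟩ := hspan (w * w)
  have hms' := congrArg (algebraMap (𝓞 K) K) hms
  simp only [map_mul, map_add, map_intCast] at hms'
  refine ⟨⟨f * algebraMap (𝓞 K) K w, (hO _).2 ⟨0, w, by simp⟩⟩, f * s, - (f * f * m), ?_, ?_, ?_⟩
  · rintro ⟨x, hx⟩
    obtain ⟨a, y, rfl⟩ := (hO x).1 hx
    obtain ⟨p, q, rfl⟩ := hspan y
    refine ⟨a + f * p, q, ?_⟩
    apply Subtype.ext
    push_cast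
    simp only [map_mul, map_add, map_intCast]
    ring
  · intro a c hac
    have := congrArg (Subtype.val) hac
    push_cast at this
    have h2 : algebraMap (𝓞 K) K ((a : ℤ) + ((c * f : ℤ) : 𝓞 K) * w) = algebraMap (𝓞 K) K 0 := by
      simp only [map_mul, map_add, map_intCast, map_zero]
      push_cast
      linear_combination this
    have := hind _ _ (RingOfIntegers.coe_injective h2)
    refine ⟨this.1, ?_⟩
    rcases mul_eq_zero.1 this.2 with h | h
    · exact h
    · omega
  · apply Subtype.ext
    push_cast
    linear_combination (f * f : K) * hms'

theorem units_generate_iff_two_not_split (K : Type*) [Field K] [NumberField K]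
    (hK : IsImagQuadratic K) (f : ℕ) (hf : 0 < f)
    (O : Subalgebra ℤ K) (hO : IsOrderOfConductor K f O) (N : ℕ) (hN : 0 < N) :
    (2 ∣ N → ¬ SplitsIn (↥O) 2) ↔
      Subring.closure {x : ↥O ⧸ Ideal.span {(N : ↥O)} | IsUnit x} = ⊤ := by
  obtain ⟨w, t, n, hspan, hind, hw⟩ := order_aux K hK.1 f hf O hO
  exact ⟨gen_aux w t n hspan hind hw N hN, not_split_aux N⟩
end

section
/- Let O be an order in an imaginary quadratic field and let N be a positive integer. The following are equivalent: (i) there is an ideal I of O such that the additive group of O/I is isomorphic to ℤ/Nℤ; (ii) there is an O-submodule of O/NO whose underlying additive group is isomorphic to ℤ/Nℤ; (iii) H(O,N) holds. -/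
set_option synthInstance.maxHeartbeats 1000000
set_option maxHeartbeats 1000000

open NumberField

theorem cqt_hensel (t n : ℤ) (ht : Odd t) (hn : Even n) (k : ℕ) :
    ∃ c : ℤ, (2:ℤ)^k ∣ c^2 - t*c + n := by
  induction k with
  | zero => exact ⟨0, by simp⟩
  | succ k ih =>
    rcases Nat.eq_zero_or_pos k with rfl | hk
    · exact ⟨0, by simpa using hn.two_dvd⟩
    obtain ⟨c, d, hd⟩ := ih
    obtain ⟨j, rfl⟩ : ∃ j, k = j + 1 := ⟨k - 1, by omega⟩
    obtain ⟨s, rfl⟩ := ht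
    refine ⟨c + 2^(j+1) * d, d * (c - s) + 2^j * d^2, ?_⟩
    linear_combination hd

theorem cqt_nonroot (t n : ℤ) (p : ℕ) (hp : p.Prime) (h : ¬ (p = 2 ∧ Odd t ∧ Even n)) :
    ∃ a : ℤ, IsCoprime (a^2 + t*a + n) (p:ℤ) := by
  have hpi : Prime (p:ℤ) := Nat.prime_iff_prime_int.mp hp
  by_contra hcon
  push Not at hcon
  have hdv : ∀ a : ℤ, (p:ℤ) ∣ a^2 + t*a + n := by
    intro a
    by_contra h1
    exact hcon a ((hpi.coprime_iff_not_dvd.mpr h1).symm)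
  have h0 := hdv 0
  have h1 := hdv 1
  have h2 := hdv (-1)
  have h3 : (p:ℤ) ∣ 2 := by
    have := dvd_sub (dvd_add h1 h2) (dvd_mul_of_dvd_right h0 2)
    ring_nf at this
    exact this
  have hp2 : p = 2 := by
    have : p ∣ 2 := by exact_mod_cast h3
    exact (Nat.prime_dvd_prime_iff_eq hp Nat.prime_two).mp this
  subst hp2
  apply h
  refine ⟨rfl, ?_, ?_⟩
  · rw [Int.odd_iff]; push_cast at *; omega
  · rw [Int.even_iff]; push_cast at *; omega

theorem cqt_crt (a b : ℕ) (h : a.Coprime b) (x y : ℤ) :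
    ∃ z : ℤ, z ≡ x [ZMOD a] ∧ z ≡ y [ZMOD b] := by
  obtain ⟨u, v, huv⟩ := Nat.isCoprime_iff_coprime.mpr h
  refine ⟨x * (v * b) + y * (u * a), ?_, ?_⟩
  · apply Int.ModEq.symm
    rw [Int.modEq_iff_dvd]
    exact ⟨(y - x) * u, by linear_combination x * huv⟩
  · apply Int.ModEq.symm
    rw [Int.modEq_iff_dvd]
    exact ⟨(x - y) * v, by linear_combination y * huv⟩

theorem cqt_coprime_congr {x y m : ℤ} (h : x ≡ y [ZMOD m]) (hy : IsCoprime y m) :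
    IsCoprime x m := by
  obtain ⟨k, hk⟩ := Int.modEq_iff_dvd.mp h
  obtain ⟨u, v, huv⟩ := hy
  exact ⟨u, v + u * k, by linear_combination huv - u * hk⟩

theorem cqt_arith (t n : ℤ) (N : ℕ) : 0 < N →
    ∃ x y : ℤ, IsCoprime (x^2 + t*x*y + n*y^2) (N:ℤ) ∧
      ∀ e : ℤ, (N:ℤ) ∣ e^2 - t*y*e + n*y^2 → ∃ c : ℤ, (N:ℤ) ∣ c^2 - t*c + n := by
  induction N using Nat.recOnPosPrimePosCoprime with
  | zero => intro h; exact absurd h (lt_irrefl _)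
  | one => intro _; exact ⟨0, 0, by simpa using isCoprime_one_right, fun e _ => ⟨0, by simp⟩⟩
  | prime_pow p k hp hk =>
    intro _
    by_cases h : p = 2 ∧ Odd t ∧ Even n
    · obtain ⟨rfl, ht, hn⟩ := h
      refine ⟨1, 0, by simpa using isCoprime_one_left, fun e _ => ?_⟩
      exact_mod_cast cqt_hensel t n ht hn k
    · obtain ⟨a, ha⟩ := cqt_nonroot t n p hp h
      refine ⟨a, 1, ?_, fun e he => ⟨e, by simpa using he⟩⟩
      push_cast
      simpa using ha.pow_right (n := k)
  | coprime a b ha hb hab iha ihb =>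
    intro _
    obtain ⟨x1, y1, h1, r1⟩ := iha (by omega)
    obtain ⟨x2, y2, h2, r2⟩ := ihb (by omega)
    obtain ⟨x, hx1, hx2⟩ := cqt_crt a b hab x1 x2
    obtain ⟨y, hy1, hy2⟩ := cqt_crt a b hab y1 y2
    refine ⟨x, y, ?_, fun e he => ?_⟩
    · push_cast
      apply IsCoprime.mul_right
      · exact cqt_coprime_congr (by gcongr) h1
      · exact cqt_coprime_congr (by gcongr) h2
    · push_cast at he
      obtain ⟨c1, hc1⟩ := r1 e (by
        have h := (dvd_mul_right _ _).trans he
        have hh : e^2 - t*y*e + n*y^2 ≡ e^2 - t*y1*e + n*y1^2 [ZMOD a] := by gcongr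
        exact (hh.dvd_iff).mp h)
      obtain ⟨c2, hc2⟩ := r2 e (by
        have h := (dvd_mul_left _ _).trans he
        have hh : e^2 - t*y*e + n*y^2 ≡ e^2 - t*y2*e + n*y2^2 [ZMOD b] := by gcongr
        exact (hh.dvd_iff).mp h)
      obtain ⟨c, h1', h2'⟩ := cqt_crt a b hab c1 c2
      refine ⟨c, ?_⟩
      push_cast
      apply IsCoprime.mul_dvd (Nat.isCoprime_iff_coprime.mpr hab)
      · have hh : c^2 - t*c + n ≡ c1^2 - t*c1 + n [ZMOD a] := by gcongr
        exact (hh.dvd_iff).mpr hc1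
      · have hh : c^2 - t*c + n ≡ c2^2 - t*c2 + n [ZMOD b] := by gcongr
        exact (hh.dvd_iff).mpr hc2

/-- A module whose additive group is cyclic of order N gives a root. -/
theorem cqt_root_of_module {R : Type*} [CommRing R] (τ : R) (t n : ℤ)
    (hτ : τ^2 = (t:R) * τ - (n:R)) (N : ℕ) (M : Type*) [AddCommGroup M] [Module R M]
    (e : M ≃+ ZMod N) : ∃ c : ℤ, (N:ℤ) ∣ c^2 - t*c + n := by
  obtain ⟨c, hc⟩ := ZMod.intCast_surjective (e (τ • e.symm 1))
  have h1 : τ • e.symm 1 = (c:R) • e.symm 1 := by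
    apply e.injective
    rw [← hc, Int.cast_smul_eq_zsmul, map_zsmul]
    simp
  refine ⟨c, ?_⟩
  have h2 : ((c^2 - t*c + n : ℤ) : R) • e.symm 1 = 0 := by
    have h3 : τ • τ • e.symm 1 = (c:R) • (c:R) • e.symm 1 := by
      rw [h1, smul_comm, h1]
    rw [smul_smul, smul_smul, ← sq, hτ, sub_smul, mul_smul, h1] at h3
    push_cast
    rw [add_smul, sub_smul, sq, ← h3, mul_smul]
    abel
  rw [Int.cast_smul_eq_zsmul] at h2
  have h4 := congrArg e h2
  rw [map_zsmul] at h4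
  simp only [AddEquiv.apply_symm_apply, map_zero, zsmul_eq_mul, mul_one] at h4
  exact (ZMod.intCast_zmod_eq_zero_iff_dvd _ _).mp (by exact_mod_cast h4)

/-- If P has order N and τ acts on it by a scalar, its span is cyclic of order N. -/
theorem cqt_span {R : Type*} [CommRing R] {M : Type*} [AddCommGroup M] [Module R M]
    (N : ℕ) (P : M) (hP : addOrderOf P = N) (h : ∀ r : R, ∃ k : ℤ, r • P = k • P) :
    Nonempty (LinearMap.range (LinearMap.toSpanSingleton R M P) ≃+ ZMod N) := by
  let G := LinearMap.range (LinearMap.toSpanSingleton R M P)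
  let g : G := ⟨P, 1, by simp⟩
  have hg : ∀ x : G, x ∈ AddSubgroup.zmultiples g := by
    rintro ⟨x, r, rfl⟩
    obtain ⟨k, hk⟩ := h r
    refine ⟨k, ?_⟩
    apply Subtype.ext
    simp [g, hk]
  have hc : IsAddCyclic G := ⟨g, hg⟩
  have hcard : Nat.card G = N := by
    rw [← addOrderOf_eq_card_of_forall_mem_zmultiples hg, ← hP]
    exact (AddSubgroup.addOrderOf_coe (H := G.toAddSubgroup) g).symm
  have e := zmodAddCyclicAddEquiv hc
  rw [hcard] at e
  exact ⟨e.symm⟩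

theorem cqt_orbit_sub {S : Type*} [CommRing S] (N : ℕ) (hN : 0 < N) (P : S)
    (hP : addOrderOf P = N) (hS : (N : S) = 0) :
    Set.range (fun v : (ZMod N)ˣ => (v : ZMod N).val • P) ⊆ MulAction.orbit Sˣ P ∧
    Nat.card (Set.range (fun v : (ZMod N)ˣ => (v : ZMod N).val • P)) = Nat.totient N := by
  have : NeZero N := ⟨hN.ne'⟩
  constructor
  · rintro _ ⟨v, rfl⟩
    obtain ⟨a, b, hab⟩ := Nat.isCoprime_iff_coprime.mpr (ZMod.val_coe_unit_coprime v)
    have h1 : (a : S) * ((v : ZMod N).val : S) = 1 := by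
      have := congrArg (Int.cast : ℤ → S) hab
      push_cast at this
      rw [hS, mul_zero, add_zero] at this
      exact this
    refine ⟨Units.mkOfMulEqOne ((v : ZMod N).val : S) (a : S) (by rw [mul_comm]; exact h1), ?_⟩
    simp [Units.smul_def]
  · have hinj : Function.Injective (fun v : (ZMod N)ˣ => (v : ZMod N).val • P) := by
      intro v w hvw
      apply Units.ext
      apply ZMod.val_injective
      have := (nsmul_inj_mod (x := P)).mp hvw
      rw [hP, Nat.mod_eq_of_lt (ZMod.val_lt _), Nat.mod_eq_of_lt (ZMod.val_lt _)] at this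
      exact this
    rw [Nat.card_congr (Equiv.ofInjective _ hinj).symm, Nat.card_eq_fintype_card,
      ZMod.card_units_eq_totient]

theorem cqt_eigen_orbit {S : Type*} [CommRing S] (N : ℕ) (hN : 0 < N) (P : S)
    (hP : addOrderOf P = N) (hS : (N : S) = 0) (h : ∀ r : S, ∃ k : ℤ, r * P = (k : S) * P) :
    Nat.card (MulAction.orbit Sˣ P) = Nat.totient N := by
  have : NeZero N := ⟨hN.ne'⟩
  obtain ⟨h1, h2⟩ := cqt_orbit_sub N hN P hP hS
  rw [← h2, ← h1.antisymm]
  rintro _ ⟨u, rfl⟩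
  obtain ⟨k, hk⟩ := h u
  obtain ⟨l, hl⟩ := h (u⁻¹ : Sˣ)
  have hd : (N : ℤ) ∣ k * l - 1 := by
    rw [← hP, addOrderOf_dvd_iff_zsmul_eq_zero]
    have h3 : (k : S) * ((l : S) * P) = P := by
      rw [← hl, mul_left_comm, ← hk, ← mul_assoc, Units.inv_mul, one_mul]
    rw [zsmul_eq_mul]
    push_cast
    linear_combination h3
  have hkl : (k : ZMod N) * (l : ZMod N) = 1 := by
    have := (ZMod.intCast_zmod_eq_zero_iff_dvd _ _).mpr hd
    push_cast at this
    exact sub_eq_zero.mp this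
  refine ⟨Units.mkOfMulEqOne _ _ hkl, ?_⟩
  simp only [Units.val_mkOfMulEqOne, Units.smul_def, smul_eq_mul, hk]
  rw [← natCast_zsmul, ← zsmul_eq_mul, zsmul_eq_zsmul_iff_modEq, hP, ← ZMod.intCast_eq_intCast_iff]
  simp

theorem cqt_core {R S : Type*} [CommRing R] [CommRing S] [Algebra R S] (τ : R) (T : S) (t n : ℤ)
    (hτ : τ^2 = (t:R) * τ - (n:R)) (N : ℕ) (hN : 0 < N) (hS : (N : S) = 0)
    (hπτ : T^2 = (t:S) * T - (n:S))
    (hsurj : ∀ r : S, ∃ a b : ℤ, r = a + b * T)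
    (hzero : ∀ a b : ℤ, (a : S) + b * T = 0 → (N:ℤ) ∣ a ∧ (N:ℤ) ∣ b) :
    ((∃ I : Ideal R, Nonempty ((R ⧸ I) ≃+ ZMod N)) ↔
      (∃ M : Submodule R S, Nonempty (↥M ≃+ ZMod N))) ∧
    ((∃ M : Submodule R S, Nonempty (↥M ≃+ ZMod N)) ↔
      ∃ P : S, addOrderOf P = N ∧ Nat.card ↥(MulAction.orbit Sˣ P) = Nat.totient N) := by
  -- root gives a good point
  have key : (∃ c : ℤ, (N:ℤ) ∣ c^2 - t*c + n) → ∃ P : S, addOrderOf P = N ∧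
      ∀ r : S, ∃ k : ℤ, r * P = (k : S) * P := by
    rintro ⟨c, d, hd⟩
    have hd' := congrArg (Int.cast : ℤ → S) hd
    push_cast at hd'
    rw [hS, zero_mul] at hd'
    refine ⟨T - (t - c : ℤ), ?_, ?_⟩
    · apply Nat.dvd_antisymm
      · rw [addOrderOf_dvd_iff_nsmul_eq_zero, nsmul_eq_mul, hS, zero_mul]
      · have h3 := addOrderOf_nsmul_eq_zero (T - ((t - c : ℤ) : S))
        set m := addOrderOf (T - ((t - c : ℤ) : S))
        have := (hzero (-(m * (t - c))) m (by
          rw [nsmul_eq_mul] at h3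
          push_cast at h3 ⊢
          linear_combination h3)).2
        exact_mod_cast this
    · intro r
      obtain ⟨a, b, rfl⟩ := hsurj r
      refine ⟨a + b * c, ?_⟩
      push_cast
      linear_combination (b : S) * hπτ - (b : S) * hd'
  have toII : (∃ c : ℤ, (N:ℤ) ∣ c^2 - t*c + n) →
      ∃ P : S, Nonempty (LinearMap.range (LinearMap.toSpanSingleton R S P) ≃+ ZMod N) := by
    intro hr
    obtain ⟨P, hP, hk⟩ := key hr
    refine ⟨P, cqt_span N P hP fun r => ?_⟩
    obtain ⟨k, hk⟩ := hk (algebraMap R S r)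
    refine ⟨k, ?_⟩
    rw [zsmul_eq_mul, ← hk, Algebra.smul_def]
  have iiRoot : (∃ M : Submodule R S, Nonempty (↥M ≃+ ZMod N)) →
      ∃ c : ℤ, (N:ℤ) ∣ c^2 - t*c + n := by
    rintro ⟨M, ⟨e⟩⟩
    exact cqt_root_of_module τ t n hτ N M e
  refine ⟨⟨?_, ?_⟩, ?_, ?_⟩
  · rintro ⟨I, ⟨e⟩⟩
    obtain ⟨P, hP⟩ := toII (cqt_root_of_module τ t n hτ N (R ⧸ I) e)
    exact ⟨_, hP⟩
  · intro h
    obtain ⟨P, ⟨e⟩⟩ := toII (iiRoot h)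
    exact ⟨_, ⟨(LinearMap.quotKerEquivRange (LinearMap.toSpanSingleton R S P)).toAddEquiv.trans e⟩⟩
  · intro h
    obtain ⟨P, hP, hk⟩ := key (iiRoot h)
    exact ⟨P, hP, cqt_eigen_orbit N hN P hP hS hk⟩
  · rintro ⟨P, hP, hcard⟩
    suffices h : ∃ c : ℤ, (N:ℤ) ∣ c^2 - t*c + n by
      obtain ⟨P, hP⟩ := toII h
      exact ⟨_, hP⟩
    obtain ⟨g1, g2⟩ := cqt_orbit_sub N hN P hP hS
    have hfin : (MulAction.orbit Sˣ P).Finite := by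
      apply Set.finite_of_ncard_ne_zero
      have : (MulAction.orbit Sˣ P).ncard = Nat.totient N := hcard
      rw [this]
      exact (Nat.totient_pos.mpr hN).ne'
    have heq := Set.eq_of_subset_of_ncard_le g1 (hcard.trans g2.symm).le hfin
    obtain ⟨x, y, hxy, hroot⟩ := cqt_arith t n N hN
    obtain ⟨α, β, hαβ⟩ := hxy
    have hαβ' := congrArg (Int.cast : ℤ → S) hαβ
    push_cast at hαβ'
    rw [hS, mul_zero, add_zero] at hαβ'
    have hu : ((x : S) + y * T) * (α * (x + y * (t - T))) = 1 := by
      linear_combination hαβ' - (α : S) * y^2 * hπτ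
    have hmem : (Units.mkOfMulEqOne _ _ hu) • P ∈ MulAction.orbit Sˣ P :=
      MulAction.mem_orbit _ _
    rw [← heq] at hmem
    obtain ⟨v, hv⟩ := hmem
    simp only [Units.smul_def, Units.val_mkOfMulEqOne, smul_eq_mul, nsmul_eq_mul] at hv
    generalize (v : ZMod N).val = w at hv
    apply hroot ((w : ℤ) - x)
    rw [← hP, addOrderOf_dvd_iff_zsmul_eq_zero, zsmul_eq_mul]
    push_cast
    have hy : (y : S) * T * P = (w - x) * P := by linear_combination -hv
    linear_combination (y : S)^2 * P * hπτ - (y * T + (w - x) - t * y) * hy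

theorem cqt_abstract {R : Type*} [CommRing R] (τ : R) (h1 : ∀ x : R, ∃ a b : ℤ, x = a + b * τ)
    (h2 : ∀ a b : ℤ, (a : R) + b * τ = 0 → a = 0 ∧ b = 0) (N : ℕ) (hN : 0 < N) :
    ((∃ I : Ideal R, Nonempty ((R ⧸ I) ≃+ ZMod N)) ↔
      (∃ M : Submodule R (R ⧸ Ideal.span {(N : R)}), Nonempty (↥M ≃+ ZMod N))) ∧
    ((∃ M : Submodule R (R ⧸ Ideal.span {(N : R)}), Nonempty (↥M ≃+ ZMod N)) ↔
      CartanH R N) := by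
  obtain ⟨n', t, hτ'⟩ := h1 (τ^2)
  obtain ⟨n, rfl⟩ : ∃ n, n' = -n := ⟨-n', by simp⟩
  have hτ : τ^2 = (t:R) * τ - (n:R) := by rw [hτ']; push_cast; ring
  let π : R →+* (R ⧸ Ideal.span {(N : R)}) := Ideal.Quotient.mk _
  have hS : (N : R ⧸ Ideal.span {(N : R)}) = 0 := by
    have : π (N : R) = 0 := Ideal.Quotient.eq_zero_iff_mem.mpr (Ideal.mem_span_singleton_self _)
    simpa using this
  have hπτ : (π τ)^2 = (t: R ⧸ Ideal.span {(N : R)}) * π τ - (n: R ⧸ Ideal.span {(N : R)}) := by rw [← map_pow, hτ]; simp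
  have hsurj : ∀ r : R ⧸ Ideal.span {(N : R)}, ∃ a b : ℤ, r = a + b * π τ := by
    intro r
    obtain ⟨r, rfl⟩ := Ideal.Quotient.mk_surjective r
    obtain ⟨a, b, rfl⟩ := h1 r
    exact ⟨a, b, by simp [π]⟩
  have hzero : ∀ a b : ℤ, (a : R ⧸ Ideal.span {(N : R)}) + b * π τ = 0 → (N:ℤ) ∣ a ∧ (N:ℤ) ∣ b := by
    intro a b h
    have h' : π ((a : R) + b * τ) = 0 := by simpa using h
    obtain ⟨z, hz⟩ := Ideal.mem_span_singleton.mp (Ideal.Quotient.eq_zero_iff_mem.mp h')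
    obtain ⟨x, y, rfl⟩ := h1 z
    obtain ⟨e1, e2⟩ := h2 (a - N * x) (b - N * y) (by push_cast; linear_combination hz)
    exact ⟨⟨x, by linarith⟩, ⟨y, by linarith⟩⟩
  exact cqt_core τ (π τ) t n hτ N hN hS hπτ hsurj hzero

theorem cqt_quot {A : Type*} [AddCommGroup A] [Module.Finite ℤ A]
    (hA : Module.finrank ℤ A = 2) (L : Submodule ℤ A) (hL : Module.finrank ℤ L = 1)
    (h : ∀ (m : ℤ) (x : A), m ≠ 0 → m • x ∈ L → x ∈ L) :
    ∃ w : A, w ∉ L ∧ ∀ x : A, ∃ b : ℤ, x - b • w ∈ L := by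
  have hQ : Module.IsTorsionFree ℤ (A ⧸ L) := by
    constructor
    intro r hr
    rw [isSMulRegular_iff_right_eq_zero_of_smul]
    intro x hx
    obtain ⟨x, rfl⟩ := L.mkQ_surjective x
    rw [← map_smul, Submodule.mkQ_apply, Submodule.Quotient.mk_eq_zero] at hx
    rw [Submodule.mkQ_apply, Submodule.Quotient.mk_eq_zero]
    exact h r x hr.ne_zero hx
  have hfr : Module.finrank ℤ (A ⧸ L) = 1 := by
    have h1 := Submodule.finrank_quotient_add_finrank L
    omega
  obtain ⟨q, hq0, hq⟩ := finrank_eq_one_iff'.mp hfr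
  obtain ⟨w, rfl⟩ := L.mkQ_surjective q
  refine ⟨w, fun hw => hq0 (by simpa using hw), fun x => ?_⟩
  obtain ⟨b, hb⟩ := hq (L.mkQ x)
  refine ⟨b, ?_⟩
  rw [← Submodule.Quotient.mk_eq_zero, ← Submodule.mkQ_apply, map_sub, map_smul, hb, sub_self]

theorem cqt_basis_gen (A : Type*) [CommRing A] [CharZero A] [IsDomain A] [Module.Finite ℤ A]
    (hA : Module.finrank ℤ A = 2)
    (htf : ∀ (m a : ℤ) (x : A), m ≠ 0 → (m : A) * x = a → ∃ b : ℤ, (b : A) = x) :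
    ∃ ω : A, (∀ x : A, ∃ a b : ℤ, x = a + b * ω) ∧
      ∀ a b : ℤ, (a : A) + b * ω = 0 → a = 0 ∧ b = 0 := by
  have hL : ∀ x : A, x ∈ Submodule.span ℤ {(1 : A)} ↔ ∃ a : ℤ, (a : A) = x := by
    intro x
    simp [Submodule.mem_span_singleton]
  have h2 : Module.finrank ℤ (Submodule.span ℤ {(1 : A)}) = 1 := by
    rw [← (LinearEquiv.toSpanNonzeroSingleton ℤ A 1 one_ne_zero).finrank_eq]
    exact Module.finrank_self ℤ
  obtain ⟨ω, hω0, hω⟩ := cqt_quot hA (Submodule.span ℤ {(1 : A)}) h2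
    (fun m x hm hx => by
      obtain ⟨a, ha⟩ := (hL _).mp hx
      rw [zsmul_eq_mul] at ha
      exact (hL _).mpr (htf m a x hm ha.symm))
  refine ⟨ω, ?_, ?_⟩
  · intro x
    obtain ⟨b, hb⟩ := hω x
    obtain ⟨a, ha⟩ := (hL _).mp hb
    exact ⟨a, b, by rw [ha, zsmul_eq_mul]; ring⟩
  · intro a b hab
    have hb : b = 0 := by
      by_contra hb
      exact hω0 ((hL _).mpr (htf b (-a) ω hb (by push_cast; linear_combination hab)))
    subst hb
    simpa using hab

theorem cqt_basis (K : Type*) [Field K] [NumberField K] (hK : Module.finrank ℚ K = 2) :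
    ∃ ω : 𝓞 K, (∀ x : 𝓞 K, ∃ a b : ℤ, x = a + b * ω) ∧
      ∀ a b : ℤ, (a : 𝓞 K) + b * ω = 0 → a = 0 ∧ b = 0 := by
  refine cqt_basis_gen (𝓞 K) ((RingOfIntegers.rank K).trans hK) ?_
  intro m a x hm ha
  have hm' : (m : K) ≠ 0 := by exact_mod_cast hm
  have hxK : algebraMap (𝓞 K) K x = algebraMap ℚ K (a / m) := by
    have := congrArg (algebraMap (𝓞 K) K) ha
    simp only [map_mul, map_intCast] at this ⊢
    rw [map_div₀, map_intCast, map_intCast, ← this]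
    field_simp
  have hint : IsIntegral ℤ ((a : ℚ) / m) := by
    have := x.isIntegral_coe
    rw [hxK] at this
    exact (isIntegral_algebraMap_iff (algebraMap ℚ K).injective).mp this
  obtain ⟨b, hb⟩ := IsIntegrallyClosed.isIntegral_iff.mp hint
  refine ⟨b, ?_⟩
  apply RingOfIntegers.coe_injective
  rw [hxK, ← hb]
  simp

/-- For an order `O` in an imaginary quadratic field and `N ≥ 1` TFAE:
(i) some quotient `O/I` has additive group `ℤ/N`; (ii) some `O`-submodule of `O/NO` has
additive group `ℤ/N`; (iii) `H(O,N)` holds. -/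
theorem cyclic_quotient_tfae (K : Type*) [Field K] [NumberField K]
    (hK : IsImagQuadratic K) (f : ℕ) (hf : 0 < f)
    (O : Subalgebra ℤ K) (hO : IsOrderOfConductor K f O) (N : ℕ) (hN : 0 < N) :
    ((∃ I : Ideal ↥O, Nonempty ((↥O ⧸ I) ≃+ ZMod N)) ↔
      (∃ M : Submodule ↥O (↥O ⧸ Ideal.span {(N : ↥O)}), Nonempty (↥M ≃+ ZMod N))) ∧
    ((∃ M : Submodule ↥O (↥O ⧸ Ideal.span {(N : ↥O)}), Nonempty (↥M ≃+ ZMod N)) ↔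
      CartanH (↥O) N) := by
  obtain ⟨ω, hω1, hω2⟩ := cqt_basis K hK.1
  have hmem : (f : K) * algebraMap (𝓞 K) K ω ∈ O := (hO _).mpr ⟨0, ω, by simp⟩
  refine cqt_abstract (⟨_, hmem⟩ : O) ?_ ?_ N hN
  · rintro ⟨x, hx⟩
    obtain ⟨a, y, rfl⟩ := (hO x).mp hx
    obtain ⟨c, d, rfl⟩ := hω1 y
    refine ⟨a + f * c, d, ?_⟩
    apply Subtype.ext
    push_cast
    simp only [map_add, map_mul, map_intCast]
    ring
  · intro a b hab
    have h := congrArg (Subtype.val) hab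
    push_cast at h
    obtain ⟨h1, h2⟩ := hω2 a (b * f) (by
      apply RingOfIntegers.coe_injective
      push_cast
      simp only [map_add, map_mul, map_intCast, map_natCast, map_zero]
      linear_combination h)
    refine ⟨h1, ?_⟩
    rcases mul_eq_zero.mp h2 with h | h
    · exact h
    · exact absurd (by exact_mod_cast h) hf.ne'
end

section
/- Let O be an order of discriminant Δ in an imaginary quadratic field and let N be a positive integer. Then H(O,N) holds if and only if Δ is a square in ℤ/4Nℤ, i.e. if and only if there exists an integer s with s² ≡ Δ (mod 4N). -/
set_option synthInstance.maxHeartbeats 1000000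
set_option maxHeartbeats 1000000

open NumberField

lemma cq_crt (m n a b : ℤ) (h : IsCoprime m n) : ∃ x : ℤ, m ∣ x - a ∧ n ∣ x - b := by
  obtain ⟨u, v, huv⟩ := h
  refine ⟨a * v * n + b * u * m, ⟨(b - a) * u, ?_⟩, ⟨(a - b) * v, ?_⟩⟩
  · linear_combination a * huv
  · linear_combination b * huv

lemma cq_cop (b c : ℤ) (N : ℕ) (hN : 0 < N)
    (h2 : Even N → ∃ x : ℤ, ¬ (2 : ℤ) ∣ x ^ 2 + b * x + c) :
    ∃ x : ℤ, IsCoprime (x ^ 2 + b * x + c) (N : ℤ) := by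
  induction N using Nat.recOnPosPrimePosCoprime with
  | zero => omega
  | one => exact ⟨0, by simpa using isCoprime_one_right⟩
  | prime_pow p k hp hk =>
    have hpi : Prime (p : ℤ) := Nat.prime_iff_prime_int.mp hp
    have key : ∃ x : ℤ, ¬ (p : ℤ) ∣ x ^ 2 + b * x + c := by
      rcases hp.eq_two_or_odd' with rfl | hodd
      · exact h2 ((Nat.even_pow.mpr ⟨even_two, by omega⟩))
      · by_contra hcon
        push Not at hcon
        have h0 := hcon 0
        have h1 := hcon 1
        have h3 := hcon (-1)
        have : (p : ℤ) ∣ 2 := by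
          have := dvd_sub (dvd_add h1 h3) (h0.mul_left 2)
          ring_nf at this
          exact this
        have h4 : p ∣ 2 := by exact_mod_cast this
        have h5 := (Nat.prime_dvd_prime_iff_eq hp Nat.prime_two).mp h4
        subst h5
        exact absurd hodd (by decide)
    obtain ⟨x, hx⟩ := key
    refine ⟨x, ?_⟩
    push_cast
    exact ((hpi.coprime_iff_not_dvd.mpr hx).symm).pow_right
  | coprime m n hm hn hmn ihm ihn =>
    obtain ⟨x, hx⟩ := ihm (by omega) (fun h => h2 (h.mul_right n))
    obtain ⟨y, hy⟩ := ihn (by omega) (fun h => h2 (h.mul_left m))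
    obtain ⟨z, ⟨i, hi⟩, ⟨j, hj⟩⟩ := cq_crt m n x y (Nat.isCoprime_iff_coprime.mpr hmn)
    refine ⟨z, ?_⟩
    push_cast
    refine IsCoprime.mul_right ?_ ?_
    · have : z ^ 2 + b * z + c = (x ^ 2 + b * x + c) + m * (i * (z + x + b)) := by
        linear_combination (z + x + b) * hi
      rw [this]
      exact hx.add_mul_left_left _
    · have : z ^ 2 + b * z + c = (y ^ 2 + b * y + c) + n * (j * (z + y + b)) := by
        linear_combination (z + y + b) * hj
      rw [this]
      exact hy.add_mul_left_left _

lemma cq_root_crt (t n : ℤ) (A B a b : ℤ) (h : IsCoprime A B)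
    (ha : A ∣ a ^ 2 - t * a + n) (hb : B ∣ b ^ 2 - t * b + n) :
    ∃ x : ℤ, A * B ∣ x ^ 2 - t * x + n := by
  obtain ⟨z, h1, h2⟩ := cq_crt A B a b h
  refine ⟨z, h.mul_dvd ?_ ?_⟩
  · have := dvd_add (h1.mul_right (z + a - t)) ha
    convert this using 1; ring
  · have := dvd_add (h2.mul_right (z + b - t)) hb
    convert this using 1; ring

lemma cq_hensel (t n : ℤ) (ht : Odd t) (hn : Even n) (k : ℕ) :
    ∃ a : ℤ, (2 : ℤ) ^ (k + 1) ∣ a ^ 2 - t * a + n := by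
  induction k with
  | zero => exact ⟨0, by simpa using hn.two_dvd⟩
  | succ k ih =>
    obtain ⟨a, m, hm⟩ := ih
    obtain ⟨r, hr⟩ := ht
    refine ⟨a + (a ^ 2 - t * a + n), m * (a - r) + 2 ^ k * m ^ 2, ?_⟩
    rw [hm]
    rw [hr] at hm ⊢
    linear_combination hm

lemma cq_sq_iff (t n : ℤ) (N : ℤ) :
    (∃ a : ℤ, N ∣ a ^ 2 - t * a + n) ↔ ∃ s : ℤ, s ^ 2 ≡ t ^ 2 - 4 * n [ZMOD (4 * N)] := by
  constructor
  · rintro ⟨a, m, hm⟩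
    refine ⟨2 * a - t, (Int.modEq_iff_dvd.mpr ⟨-m, ?_⟩)⟩
    linear_combination -4 * hm
  · rintro ⟨s, hs⟩
    obtain ⟨m, hm⟩ := Int.modEq_iff_dvd.mp hs
    have hpar : Even (s + t) := by
      have h1 : Even (s ^ 2 + t ^ 2) := ⟨t ^ 2 - 2 * n - 2 * N * m, by linear_combination -hm⟩
      simpa [Int.even_add, Int.even_pow] using h1
    obtain ⟨a, ha⟩ := hpar
    refine ⟨a, -m, ?_⟩
    have : s = 2 * a - t := by omega
    subst this
    linarith

section
variable {R : Type*} [CommRing R] (τ : R) (t n : ℤ)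

lemma cq_quot_zero (hind : ∀ x y : ℤ, (x : R) + y * τ = 0 → x = 0 ∧ y = 0)
    (hspan : ∀ r : R, ∃ x y : ℤ, r = x + y * τ) (N : ℕ) (x y : ℤ)
    (h : ((x : R ⧸ Ideal.span {(N : R)}) + y * Ideal.Quotient.mk (Ideal.span {(N : R)}) τ) = 0) :
    (N : ℤ) ∣ x ∧ (N : ℤ) ∣ y := by
  have h1 : Ideal.Quotient.mk (Ideal.span {(N : R)}) ((x : R) + y * τ) = 0 := by
    simpa using h
  rw [Ideal.Quotient.eq_zero_iff_mem, Ideal.mem_span_singleton] at h1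
  obtain ⟨r, hr⟩ := h1
  obtain ⟨p, q, rfl⟩ := hspan r
  have := hind (x - N * p) (y - N * q) (by push_cast; linear_combination hr)
  exact ⟨⟨p, by linarith [this.1]⟩, ⟨q, by linarith [this.2]⟩⟩

lemma cq_charP (hind : ∀ x y : ℤ, (x : R) + y * τ = 0 → x = 0 ∧ y = 0)
    (hspan : ∀ r : R, ∃ x y : ℤ, r = x + y * τ) (N : ℕ) :
    CharP (R ⧸ Ideal.span {(N : R)}) N := by
  have h0 : ((N : ℕ) : R ⧸ Ideal.span {(N : R)}) = 0 := by
    have : Ideal.Quotient.mk (Ideal.span {(N : R)}) (N : R) = 0 :=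
      Ideal.Quotient.eq_zero_iff_mem.mpr (Ideal.mem_span_singleton_self _)
    simpa using this
  refine ⟨fun x => ⟨fun h => ?_, ?_⟩⟩
  · have := (cq_quot_zero τ hind hspan N x 0 (by simpa using h)).1
    exact_mod_cast this
  · rintro ⟨k, rfl⟩
    push_cast
    rw [h0, zero_mul]
end

section
variable {Q : Type*} [CommRing Q] (N : ℕ) [NeZero N] [CharP Q N]

noncomputable def cqMap (P : Q) (c : (ZMod N)ˣ) : MulAction.orbit Qˣ P :=
  ⟨Units.map (ZMod.castHom (dvd_refl N) Q).toMonoidHom c • P, MulAction.mem_orbit _ _⟩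

lemma cqMap_inj (P : Q) (hP : addOrderOf P = N) : Function.Injective (cqMap N P) := by
  intro c d h
  have h1 : (ZMod.castHom (dvd_refl N) Q) (c : ZMod N) * P
      = (ZMod.castHom (dvd_refl N) Q) (d : ZMod N) * P := congrArg Subtype.val h
  obtain ⟨i, hi⟩ := ZMod.intCast_surjective (c : ZMod N)
  obtain ⟨j, hj⟩ := ZMod.intCast_surjective (d : ZMod N)
  rw [← hi, ← hj, map_intCast, map_intCast] at h1
  have h2 : (i - j) • P = 0 := by
    rw [zsmul_eq_mul]; push_cast; linear_combination h1
  have h3 := addOrderOf_dvd_iff_zsmul_eq_zero.mpr h2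
  rw [hP] at h3
  apply Units.ext
  rw [← hi, ← hj, ← sub_eq_zero, ← Int.cast_sub]
  exact (ZMod.intCast_zmod_eq_zero_iff_dvd _ _).mpr h3

lemma cq_fwd (P : Q) (hP : addOrderOf P = N)
    (hc : Nat.card ↥(MulAction.orbit Qˣ P) = Nat.totient N) (u : Q) (hu : IsUnit u) :
    ∃ c : ℤ, u * P = c * P := by
  obtain ⟨u, rfl⟩ := hu
  have hpos : 0 < Nat.totient N := Nat.totient_pos.mpr (Nat.pos_of_ne_zero (NeZero.ne N))
  have : Finite ↥(MulAction.orbit Qˣ P) := Nat.finite_of_card_ne_zero (by omega)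
  have hb := (cqMap_inj N P hP).bijective_of_nat_card_le (by
    rw [hc, Nat.card_eq_fintype_card, ZMod.card_units_eq_totient])
  obtain ⟨c, hcc⟩ := hb.2 ⟨u • P, MulAction.mem_orbit _ _⟩
  have h1 : (ZMod.castHom (dvd_refl N) Q) (c : ZMod N) * P = u * P := congrArg Subtype.val hcc
  obtain ⟨i, hi⟩ := ZMod.intCast_surjective (c : ZMod N)
  rw [← hi, map_intCast] at h1
  exact ⟨i, h1.symm⟩

lemma cq_bwd (P : Q) (hP : addOrderOf P = N)
    (h : ∀ u : Q, IsUnit u → ∃ c : ℤ, IsCoprime c N ∧ u * P = c * P) :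
    Nat.card ↥(MulAction.orbit Qˣ P) = Nat.totient N := by
  rw [← ZMod.card_units_eq_totient, ← Nat.card_eq_fintype_card]
  symm
  refine Nat.card_eq_of_bijective (cqMap N P) ⟨cqMap_inj N P hP, ?_⟩
  rintro ⟨_, u, rfl⟩
  obtain ⟨c, hc, hcu⟩ := h u u.isUnit
  have hcu' : IsUnit ((c : ℤ) : ZMod N) := by
    obtain ⟨a, b, hab⟩ := hc
    refine IsUnit.of_mul_eq_one (a : ZMod N) ?_
    have := congrArg (Int.cast : ℤ → ZMod N) hab
    push_cast at this
    rw [ZMod.natCast_self] at this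
    linear_combination this
  obtain ⟨d, hd⟩ := hcu'
  refine ⟨d, Subtype.ext ?_⟩
  change (ZMod.castHom (dvd_refl N) Q) (d : ZMod N) * P = u * P
  rw [hd, map_intCast, hcu]

lemma cq_unit (τ : Q) (t n : ℤ) (hτ : τ ^ 2 = t * τ - n) (x y : ℤ)
    (h : IsCoprime (x ^ 2 + t * x * y + n * y ^ 2) (N : ℤ)) : IsUnit ((x : Q) + y * τ) := by
  obtain ⟨a, b, hab⟩ := h
  refine IsUnit.of_mul_eq_one (a * (x + t * y - y * τ)) ?_
  have := congrArg (Int.cast : ℤ → Q) hab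
  push_cast at this
  rw [CharP.cast_eq_zero Q N] at this
  linear_combination this - a * y ^ 2 * hτ

lemma cq_eig (τ P : Q) (hP : addOrderOf P = N) (t n : ℤ) (hτ : τ ^ 2 = t * τ - n) (a : ℤ)
    (h : τ * P = a * P) : (N : ℤ) ∣ a ^ 2 - t * a + n := by
  rw [← hP]
  apply addOrderOf_dvd_iff_zsmul_eq_zero.mpr
  rw [zsmul_eq_mul]
  push_cast
  linear_combination P * hτ + (t - τ - a) * h
end

lemma cq_quot {Q : Type*} [CommRing Q] (N : ℕ) [NeZero N] [CharP Q N]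
    (σ : Q) (t n : ℤ) (hσ : σ ^ 2 = t * σ - n)
    (hz : ∀ x y : ℤ, (x : Q) + y * σ = 0 → (N : ℤ) ∣ x ∧ (N : ℤ) ∣ y)
    (hs : ∀ r : Q, ∃ x y : ℤ, r = x + y * σ) :
    (∃ P : Q, addOrderOf P = N ∧ Nat.card ↥(MulAction.orbit Qˣ P) = Nat.totient N) ↔
      ∃ a : ℤ, (N : ℤ) ∣ a ^ 2 - t * a + n := by
  have hN : 0 < N := Nat.pos_of_ne_zero (NeZero.ne N)
  constructor
  · rintro ⟨P, hP, hc⟩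
    have hu := cq_fwd N P hP hc
    by_cases hbad : Even N ∧ Odd t ∧ Even n
    · obtain ⟨hNe, ht, hn⟩ := hbad
      obtain ⟨x, hx⟩ := cq_cop (2 * t) (4 * n) N hN (fun _ => ⟨1, by omega⟩)
      obtain ⟨c, hc⟩ := hu _ (cq_unit N σ t n hσ x 2 (by convert hx using 1; ring))
      have h1 := cq_eig N (2 * σ) P hP (2 * t) (4 * n)
        (by push_cast; linear_combination 4 * hσ) (c - x)
        (by push_cast at hc ⊢; linear_combination hc)
      obtain ⟨k, M, hM, hNM⟩ := Nat.exists_eq_two_pow_mul_odd hN.ne'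
      obtain ⟨r, hr⟩ := hM
      obtain ⟨a, ha⟩ := cq_hensel t n ht hn k
      have hMN : (M : ℤ) ∣ N := ⟨2 ^ k, by rw [hNM]; push_cast; ring⟩
      have h2 := hMN.trans h1
      have hco : IsCoprime (2 : ℤ) (M : ℤ) := ⟨-r, 1, by rw [hr]; push_cast; ring⟩
      have h3 : (M : ℤ) ∣ (((c - x) * (r + 1)) ^ 2 - t * ((c - x) * (r + 1)) + n) := by
        have h4 : IsCoprime (M : ℤ) (2 ^ 2) := hco.symm.pow_right
        refine h4.dvd_of_dvd_mul_left ?_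
        have hMr : (M : ℤ) = 2 * r + 1 := by rw [hr]; push_cast; ring
        have : (2 : ℤ) ^ 2 * (((c - x) * (r + 1)) ^ 2 - t * ((c - x) * (r + 1)) + n)
          = ((c - x) ^ 2 - 2 * t * (c - x) + 4 * n) +
            M * ((c - x) ^ 2 * (M + 2) - 2 * t * (c - x)) := by
          rw [hMr]; ring
        rw [this]
        exact dvd_add h2 (dvd_mul_right _ _)
      obtain ⟨z, hz⟩ := cq_root_crt t n (2 ^ (k + 1)) M _ _ hco.pow_left ha h3
      refine ⟨z, Dvd.dvd.trans ⟨2, ?_⟩ hz⟩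
      rw [hNM]; push_cast; ring
    · obtain ⟨x, hx⟩ := cq_cop t n N hN (by
        intro hNe
        by_cases hn : Even n
        · have ht : Even t := by
            rcases Int.even_or_odd t with h | h
            · exact h
            · exact absurd ⟨hNe, h, hn⟩ hbad
          obtain ⟨i, rfl⟩ := hn
          obtain ⟨j, rfl⟩ := ht
          exact ⟨1, by omega⟩
        · exact ⟨0, by rw [even_iff_two_dvd] at hn; simpa using hn⟩)
      obtain ⟨c, hc⟩ := hu _ (cq_unit N σ t n hσ x 1 (by convert hx using 1; ring))
      exact ⟨c - x, cq_eig N σ P hP t n hσ (c - x)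
        (by push_cast at hc ⊢; linear_combination hc)⟩
  · rintro ⟨a, ha⟩
    have hroot : (a : Q) ^ 2 - t * a + n = 0 := by
      obtain ⟨m, hm⟩ := ha
      have := congrArg (Int.cast : ℤ → Q) hm
      push_cast at this
      rwa [CharP.cast_eq_zero Q N, zero_mul] at this
    have hPs : ∀ x y : ℤ, ((x : Q) + y * σ) * (σ - t + a) = ((x + y * a : ℤ) : Q) * (σ - t + a) := by
      intro x y
      push_cast
      linear_combination y * hσ - y * hroot
    have hNz : (N : Q) = 0 := CharP.cast_eq_zero Q N
    have hP : addOrderOf (σ - t + a) = N := by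
      apply Nat.dvd_antisymm
      · apply addOrderOf_dvd_of_nsmul_eq_zero
        rw [nsmul_eq_mul, hNz, zero_mul]
      · have h := addOrderOf_nsmul_eq_zero (σ - t + a)
        rw [nsmul_eq_mul] at h
        have := (hz (addOrderOf (σ - t + a) * (a - t)) (addOrderOf (σ - t + a))
          (by push_cast; linear_combination h)).2
        exact_mod_cast this
    refine ⟨σ - t + a, hP, cq_bwd N _ hP ?_⟩
    intro u hu
    obtain ⟨v, hv⟩ := hu.exists_right_inv
    obtain ⟨x, y, rfl⟩ := hs u
    obtain ⟨x', y', rfl⟩ := hs v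
    refine ⟨x + y * a, ?_, hPs x y⟩
    have h1 : (((x + y * a) * (x' + y' * a) - 1 : ℤ) : Q) * (σ - t + a) = 0 := by
      have e1 := hPs x y
      have e2 := hPs x' y'
      push_cast at e1 e2 ⊢
      linear_combination (σ - t + a) * hv - ((x':Q) + y' * σ) * e1 - ((x : Q) + y * a) * e2
    rw [← zsmul_eq_mul, ← addOrderOf_dvd_iff_zsmul_eq_zero, hP] at h1
    obtain ⟨m, hm⟩ := h1
    exact ⟨x' + y' * a, -m, by linear_combination hm⟩

lemma cq_abstract {R : Type*} [CommRing R] (τ : R) (t n : ℤ) (hτ : τ ^ 2 = t * τ - n)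
    (hind : ∀ x y : ℤ, (x : R) + y * τ = 0 → x = 0 ∧ y = 0)
    (hspan : ∀ r : R, ∃ x y : ℤ, r = x + y * τ) (N : ℕ) (hN : 0 < N) :
    CartanH R N ↔ ∃ a : ℤ, (N : ℤ) ∣ a ^ 2 - t * a + n := by
  have : NeZero N := ⟨hN.ne'⟩
  have := cq_charP τ hind hspan N
  refine cq_quot N (Ideal.Quotient.mk (Ideal.span {(N : R)}) τ) t n ?_
    (cq_quot_zero τ hind hspan N) ?_
  · rw [← map_pow, hτ]; simp
  · intro r
    obtain ⟨r, rfl⟩ := Ideal.Quotient.mk_surjective r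
    obtain ⟨x, y, rfl⟩ := hspan r
    exact ⟨x, y, by simp⟩

lemma cq_ring (K : Type*) [Field K] [NumberField K] (hK : Module.finrank ℚ K = 2) :
    ∃ (ω : 𝓞 K) (t n : ℤ), ω ^ 2 = t * ω - n ∧
      (∀ x y : ℤ, (x : 𝓞 K) + y * ω = 0 → x = 0 ∧ y = 0) ∧
      (∀ r : 𝓞 K, ∃ x y : ℤ, r = x + y * ω) ∧ NumberField.discr K = t ^ 2 - 4 * n := by
  have hr : Module.finrank ℤ (𝓞 K) = 2 := by rw [RingOfIntegers.rank, hK]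
  let b : Module.Basis (Fin 2) ℤ (𝓞 K) := Module.finBasisOfFinrankEq ℤ (𝓞 K) hr
  have hspan : ∀ r : 𝓞 K, ∃ x y : ℤ, r = x * b 0 + y * b 1 := by
    intro r
    refine ⟨b.repr r 0, b.repr r 1, ?_⟩
    have := b.sum_repr r
    rw [Fin.sum_univ_two] at this
    simpa [zsmul_eq_mul] using this.symm
  have hind : ∀ x y : ℤ, (x : 𝓞 K) * b 0 + y * b 1 = 0 → x = 0 ∧ y = 0 := by
    intro x y h
    have := (LinearIndependent.pair_iff (x := b 0) (y := b 1) (R := ℤ)).mp (by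
      have := b.linearIndependent
      have e : (b : Fin 2 → 𝓞 K) = ![b 0, b 1] := by
        funext i; fin_cases i <;> rfl
      rwa [e] at this) x y (by simpa [zsmul_eq_mul] using h)
    exact this
  obtain ⟨x, y, hxy⟩ := hspan 1
  have hcop : IsCoprime x y := by
    rw [Int.isCoprime_iff_gcd_eq_one]
    obtain ⟨x', hx'⟩ := Int.gcd_dvd_left x y
    obtain ⟨y', hy'⟩ := Int.gcd_dvd_right x y
    generalize Int.gcd x y = d at *
    have h1 : algebraMap ℤ (𝓞 K) d * (x' * b 0 + y' * b 1) = 1 := by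
      have ex : (x : 𝓞 K) = d * x' := by rw [hx']; push_cast; rfl
      have ey : (y : 𝓞 K) = d * y' := by rw [hy']; push_cast; rfl
      rw [ex, ey] at hxy
      rw [eq_intCast]
      push_cast
      linear_combination -hxy
    have h2 := congrArg (Algebra.norm ℤ) h1
    rw [map_mul, map_one (Algebra.norm ℤ), Algebra.norm_algebraMap_of_basis b] at h2
    have h3 : IsUnit ((d : ℤ) ^ Fintype.card (Fin 2)) := IsUnit.of_mul_eq_one _ h2
    rw [Fintype.card_fin, isUnit_pow_iff two_ne_zero, Int.isUnit_iff] at h3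
    omega
  obtain ⟨u, v, huv⟩ := hcop
  let ω : 𝓞 K := -v * b 0 + u * b 1
  have huv' : (u : 𝓞 K) * x + v * y = 1 := by exact_mod_cast congrArg (Int.cast : ℤ → 𝓞 K) huv
  have hω : ω = -v * b 0 + u * b 1 := rfl
  have hspan' : ∀ r : 𝓞 K, ∃ x y : ℤ, r = x + y * ω := by
    intro r
    obtain ⟨p, q, rfl⟩ := hspan r
    refine ⟨p * u + q * v, q * x - p * y, ?_⟩
    push_cast
    rw [hω]
    linear_combination -(p * b 0 + q * b 1) * huv' - (p * u + q * v) * hxy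
  have hind' : ∀ x y : ℤ, (x : 𝓞 K) + y * ω = 0 → x = 0 ∧ y = 0 := by
    intro p q h
    have := hind (p * x - q * v) (p * y + q * u) (by
      push_cast
      rw [hω] at h
      linear_combination h - p * hxy)
    constructor
    · linear_combination u * this.1 + v * this.2 - p * huv
    · linear_combination x * this.2 - y * this.1 - q * huv
  obtain ⟨m, t, hmt⟩ := hspan' (ω ^ 2)
  refine ⟨ω, t, -m, ?_, hind', hspan', ?_⟩
  · push_cast; linear_combination hmt
  let B : Module.Basis (Fin 2) ℤ (𝓞 K) := Module.Basis.mk (v := ![1, ω])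
    (by
      rw [LinearIndependent.pair_iff]
      intro p q h
      exact hind' p q (by simpa [zsmul_eq_mul] using h))
    (by
      intro r _
      obtain ⟨p, q, rfl⟩ := hspan' r
      rw [Matrix.range_cons, Matrix.range_cons, Matrix.range_empty, Set.union_empty,
        Set.singleton_union, Submodule.mem_span_pair]
      exact ⟨p, q, by simp [zsmul_eq_mul]⟩)
  have hB0 : B 0 = 1 := by simp [B]
  have hB1 : B 1 = ω := by simp [B]
  have hrep : ∀ p q : ℤ, B.repr ((p : 𝓞 K) + q * ω) = Finsupp.single 0 p + Finsupp.single 1 q := by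
    intro p q
    have : (p : 𝓞 K) + q * ω = p • B 0 + q • B 1 := by
      rw [hB0, hB1]; simp [zsmul_eq_mul]
    rw [this, map_add, map_zsmul, map_zsmul, B.repr_self, B.repr_self]
    simp
  have htr1 : Algebra.trace ℤ (𝓞 K) 1 = 2 := by
    have := Algebra.trace_algebraMap_of_basis B (1 : ℤ)
    simpa using this
  have htrω : Algebra.trace ℤ (𝓞 K) ω = t := by
    rw [Algebra.trace_eq_matrix_trace B, Matrix.trace_fin_two, Algebra.leftMulMatrix_eq_repr_mul,
      Algebra.leftMulMatrix_eq_repr_mul, hB0, hB1, ← pow_two, hmt, hrep]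
    have := hrep 0 1
    simp at this
    rw [mul_one, this]
    simp
  have htrω2 : Algebra.trace ℤ (𝓞 K) (ω * ω) = 2 * m + t ^ 2 := by
    have : ω * ω = m • (1 : 𝓞 K) + t • ω := by
      rw [← pow_two, hmt]; simp [zsmul_eq_mul]
    rw [this, map_add, map_smul, map_smul, htr1, htrω]
    simp; ring
  rw [← NumberField.discr_eq_discr K B, Algebra.discr_def, Matrix.det_fin_two]
  simp only [Algebra.traceMatrix_apply, Algebra.traceForm_apply, hB0, hB1, mul_one, one_mul,
    htr1, htrω, htrω2]
  ring

/-- For the order `O` of conductor `f`, with discriminant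
`Δ = f² Δ_K` (where `Δ_K = discr K`), and a positive integer `N`: `H(O,N)` holds iff
`Δ` is a square modulo `4N`. -/
theorem cartanH_iff_disc_square (K : Type*) [Field K] [NumberField K]
    (hK : IsImagQuadratic K) (f : ℕ) (hf : 0 < f)
    (O : Subalgebra ℤ K) (hO : IsOrderOfConductor K f O) (N : ℕ) (hN : 0 < N) :
    CartanH (↥O) N ↔
      ∃ s : ℤ, s ^ 2 ≡ (f : ℤ) ^ 2 * NumberField.discr K [ZMOD (4 * (N : ℤ))] := by
  obtain ⟨ω, t, n, hω, hind, hspan, hd⟩ := cq_ring K hK.1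
  have hfK : (f : K) ≠ 0 := by exact_mod_cast hf.ne'
  have hmem : (f : K) * algebraMap (𝓞 K) K ω ∈ O := (hO _).mpr ⟨0, ω, by simp⟩
  have hωK : (algebraMap (𝓞 K) K ω) ^ 2 = t * algebraMap (𝓞 K) K ω - n := by
    rw [← map_pow, hω]; simp
  have main := cq_abstract (R := O) ⟨_, hmem⟩ (f * t) (f ^ 2 * n) (by
      apply Subtype.ext
      push_cast
      linear_combination (f : K) ^ 2 * hωK) (by
      intro x y h
      have h1 : (x : K) + y * (f * algebraMap (𝓞 K) K ω) = 0 := by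
        have := congrArg (Subtype.val) h
        push_cast at this
        exact this
      have h2 : algebraMap (𝓞 K) K ((x : 𝓞 K) + ((y * f : ℤ) : 𝓞 K) * ω) = algebraMap (𝓞 K) K 0 := by
        simp only [map_add, map_mul, map_intCast, map_zero]
        push_cast
        linear_combination h1
      have h3 := hind _ _ (FaithfulSMul.algebraMap_injective (𝓞 K) K h2)
      refine ⟨h3.1, ?_⟩
      have hf' : (f : ℤ) ≠ 0 := by exact_mod_cast hf.ne'
      exact (mul_eq_zero.mp h3.2).resolve_right hf') (by
      rintro ⟨r, hr⟩
      obtain ⟨a, y, hy⟩ := (hO r).mp hr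
      obtain ⟨p, q, rfl⟩ := hspan y
      refine ⟨a + f * p, q, Subtype.ext ?_⟩
      push_cast
      rw [hy]
      simp only [map_add, map_mul, map_intCast]
      ring) N hN
  rw [main, cq_sq_iff, hd]
  have : ((f : ℤ) * t) ^ 2 - 4 * (f ^ 2 * n) = f ^ 2 * (t ^ 2 - 4 * n) := by ring
  rw [this]
end

section
/- Let O be an order in an imaginary quadratic field and let N be a positive integer. The following are equivalent: (i) C_N(O) = (O/NO)^× acts simply transitively on the set of elements of O/NO of additive order N; (ii) C_N(O) acts transitively on the set of elements of O/NO of additive order N; (iii) every prime ℓ dividing N is inert in O (i.e. O/ℓO is a field). -/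
set_option synthInstance.maxHeartbeats 1000000
set_option maxHeartbeats 1000000

open NumberField

theorem aux_order {R : Type*} [CommRing R] [IsDomain R] [CharZero R] (N : ℕ) (hN : 0 < N) (x : R) :
    addOrderOf (Ideal.Quotient.mk (Ideal.span {(N : R)}) x) = N ↔
      ∀ p : ℕ, p.Prime → p ∣ N → ¬ ((p : R) ∣ x) := by
  have key : ∀ n : ℕ, n • (Ideal.Quotient.mk (Ideal.span {(N : R)}) x) = 0 ↔ (N : R) ∣ n * x := by
    intro n
    rw [nsmul_eq_mul, ← map_natCast (Ideal.Quotient.mk (Ideal.span {(N : R)})), ← map_mul,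
      Ideal.Quotient.eq_zero_iff_mem, Ideal.mem_span_singleton]
  constructor
  · rintro h p hp ⟨m, rfl⟩ ⟨y, rfl⟩
    have hm : 0 < m := Nat.pos_of_mul_pos_left hN |> fun _ => by
      rcases Nat.eq_zero_or_pos m with h | h
      · simp [h] at hN
      · exact h
    have h1 := (key m).2 ⟨y, by push_cast; ring⟩
    have h2 := addOrderOf_dvd_of_nsmul_eq_zero h1
    rw [h] at h2
    have h3 := Nat.le_of_dvd hm h2
    have := hp.two_le
    nlinarith
  · intro h
    refine addOrderOf_eq_of_nsmul_and_div_prime_nsmul hN ((key N).2 ⟨x, rfl⟩) ?_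
    intro p hp hpN h0
    rw [key] at h0
    apply h p hp hpN
    obtain ⟨m, rfl⟩ := hpN
    rw [Nat.mul_div_cancel_left m hp.pos] at h0
    have hm : (m : R) ≠ 0 := by
      rintro h
      have : m = 0 := by exact_mod_cast h
      simp [this] at hN
    rw [Nat.cast_mul, mul_comm (p : R)] at h0
    exact (mul_dvd_mul_iff_left hm).1 h0

theorem aux_unit {R : Type*} [CommRing R] (a x : R) :
    IsUnit (Ideal.Quotient.mk (Ideal.span {a}) x) ↔ IsCoprime x a := by
  constructor
  · intro h
    obtain ⟨b, hb⟩ := h.exists_right_inv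
    obtain ⟨y, rfl⟩ := Ideal.Quotient.mk_surjective b
    rw [← map_mul, ← map_one (Ideal.Quotient.mk _), Ideal.Quotient.eq,
      Ideal.mem_span_singleton] at hb
    obtain ⟨c, hc⟩ := hb
    exact ⟨y, -c, by linear_combination hc⟩
  · rintro ⟨u, v, h⟩
    refine IsUnit.of_mul_eq_one (Ideal.Quotient.mk _ u) ?_
    rw [← map_mul, ← map_one (Ideal.Quotient.mk _), Ideal.Quotient.eq,
      Ideal.mem_span_singleton]
    exact ⟨-v, by linear_combination h⟩

theorem aux_coprime {R : Type*} [CommRing R] (N : ℕ) (hN : 0 < N) (x : R)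
    (h : ∀ p : ℕ, p.Prime → p ∣ N → IsCoprime x (p : R)) : IsCoprime x (N : R) := by
  induction N using Nat.recOnMul with
  | zero => omega
  | one => simpa using isCoprime_one_right
  | prime p hp => exact h p hp dvd_rfl
  | mul a b ha hb =>
    push_cast
    have ha0 : 0 < a := Nat.pos_of_ne_zero (by rintro rfl; simp at hN)
    have hb0 : 0 < b := Nat.pos_of_ne_zero (by rintro rfl; simp at hN)
    exact (ha ha0 fun p hp hd => h p hp (hd.mul_right b)).mul_right
      (hb hb0 fun p hp hd => h p hp (hd.mul_left a))

theorem aux_main {R : Type*} [CommRing R] [IsDomain R] [CharZero R]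
    (hR : ∀ p : ℕ, p.Prime → ¬ ((p : R) ∣ 1)) (N : ℕ) (hN : 0 < N) :
    ((∀ P Q : R ⧸ Ideal.span {(N : R)}, addOrderOf P = N → addOrderOf Q = N →
        ∃! g : (R ⧸ Ideal.span {(N : R)})ˣ, g • P = Q) ↔
      (∀ P Q : R ⧸ Ideal.span {(N : R)}, addOrderOf P = N → addOrderOf Q = N →
        ∃ g : (R ⧸ Ideal.span {(N : R)})ˣ, g • P = Q)) ∧
    ((∀ P Q : R ⧸ Ideal.span {(N : R)}, addOrderOf P = N → addOrderOf Q = N →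
        ∃ g : (R ⧸ Ideal.span {(N : R)})ˣ, g • P = Q) ↔
      (∀ ℓ : ℕ, ℓ.Prime → ℓ ∣ N → InertIn R ℓ)) := by
  have one_ord : addOrderOf (1 : R ⧸ Ideal.span {(N : R)}) = N := by
    rw [← map_one (Ideal.Quotient.mk (Ideal.span {(N : R)})), aux_order N hN]
    exact fun p hp _ => hR p hp
  have unit_of : (∀ P Q : R ⧸ Ideal.span {(N : R)}, addOrderOf P = N → addOrderOf Q = N →
        ∃ g : (R ⧸ Ideal.span {(N : R)})ˣ, g • P = Q) →
      ∀ P : R ⧸ Ideal.span {(N : R)}, addOrderOf P = N → IsUnit P := by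
    intro h P hP
    obtain ⟨g, hg⟩ := h 1 P one_ord hP
    rw [Units.smul_def, smul_eq_mul, mul_one] at hg
    exact ⟨g, hg⟩
  have uniq_of : (∀ P : R ⧸ Ideal.span {(N : R)}, addOrderOf P = N → IsUnit P) →
      ∀ P Q : R ⧸ Ideal.span {(N : R)}, addOrderOf P = N → addOrderOf Q = N →
        ∃! g : (R ⧸ Ideal.span {(N : R)})ˣ, g • P = Q := by
    intro h P Q hP hQ
    obtain ⟨u, rfl⟩ := h P hP
    obtain ⟨v, rfl⟩ := h Q hQ
    refine ⟨v * u⁻¹, ?_, ?_⟩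
    · simp [Units.smul_def, mul_assoc]
    · intro g hg
      rw [Units.smul_def, smul_eq_mul] at hg
      rw [eq_mul_inv_iff_mul_eq]
      exact Units.ext (by simpa using hg)
  refine ⟨⟨fun h P Q hP hQ => (h P Q hP hQ).exists, fun h => uniq_of (unit_of h)⟩, ?_, ?_⟩
  · intro h ℓ hℓ hℓN
    have hu := unit_of h
    unfold InertIn
    have hnt : Nontrivial (R ⧸ Ideal.span {(ℓ : R)}) := by
      rw [Ideal.Quotient.nontrivial_iff, Ne, Ideal.eq_top_iff_one, Ideal.mem_span_singleton]
      exact hR ℓ hℓ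
    refine ⟨exists_pair_ne _, mul_comm, ?_⟩
    intro a ha
    obtain ⟨x, rfl⟩ := Ideal.Quotient.mk_surjective a
    rw [Ne, Ideal.Quotient.eq_zero_iff_mem, Ideal.mem_span_singleton] at ha
    refine IsUnit.exists_right_inv ?_
    rw [aux_unit]
    obtain ⟨k, M, hM, hNM⟩ := Nat.exists_eq_pow_mul_and_not_dvd hN.ne' ℓ hℓ.ne_one
    have hcop : IsCoprime (M : ℤ) (ℓ : ℤ) :=
      Nat.isCoprime_iff_coprime.2 ((Nat.Prime.coprime_iff_not_dvd hℓ).2 hM).symm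
    obtain ⟨u, v, huv⟩ := hcop
    have huv' : (u : R) * M + v * ℓ = 1 := by exact_mod_cast congrArg (Int.cast : ℤ → R) huv
    have hx' : addOrderOf (Ideal.Quotient.mk (Ideal.span {(N : R)}) (u * M * x + v * ℓ)) = N := by
      rw [aux_order N hN]
      rintro p hp hpN ⟨c, hc⟩
      rw [hNM] at hpN
      rcases (Nat.Prime.dvd_mul hp).1 hpN with h1 | h1
      · have h2 := (Nat.prime_dvd_prime_iff_eq hp hℓ).1 (hp.dvd_of_dvd_pow h1)
        subst h2
        exact ha ⟨c - v + v * x, by linear_combination hc - x * huv'⟩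
      · obtain ⟨m, rfl⟩ := h1
        push_cast at hc huv'
        exact hR p hp ⟨c - u * m * x + u * m, by linear_combination hc - huv'⟩
    have h1 := hu _ hx'
    rw [aux_unit] at h1
    have h2 : IsCoprime ((u : R) * M * x + v * ℓ) (ℓ : R) :=
      h1.of_isCoprime_of_dvd_right (Nat.cast_dvd_cast hℓN)
    obtain ⟨s, t, hst⟩ := h2
    exact ⟨s * u * M, s * v + t, by linear_combination hst⟩
  · intro h P Q hP hQ
    refine (uniq_of ?_ P Q hP hQ).exists
    intro P hP
    obtain ⟨x, rfl⟩ := Ideal.Quotient.mk_surjective P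
    rw [aux_order N hN] at hP
    rw [aux_unit]
    refine aux_coprime N hN x fun p hp hpN => ?_
    rw [← aux_unit]
    have hne : Ideal.Quotient.mk (Ideal.span {(p : R)}) x ≠ 0 := by
      rw [Ne, Ideal.Quotient.eq_zero_iff_mem, Ideal.mem_span_singleton]
      exact hP p hp hpN
    obtain ⟨b, hb⟩ := (h p hp hpN).mul_inv_cancel hne
    exact IsUnit.of_mul_eq_one b hb

/-- For an order `O` in an imaginary quadratic field and `N ≥ 1` TFAE:
(i) `(O/NO)ˣ` acts simply transitively on the elements of additive order `N`;
(ii) it acts transitively on them; (iii) every prime `ℓ ∣ N` is inert in `O`. -/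
theorem transitive_iff_inert (K : Type*) [Field K] [NumberField K]
    (hK : IsImagQuadratic K) (f : ℕ) (hf : 0 < f)
    (O : Subalgebra ℤ K) (hO : IsOrderOfConductor K f O) (N : ℕ) (hN : 0 < N) :
    ((∀ P Q : ↥O ⧸ Ideal.span {(N : ↥O)}, addOrderOf P = N → addOrderOf Q = N →
        ∃! g : (↥O ⧸ Ideal.span {(N : ↥O)})ˣ, g • P = Q) ↔
      (∀ P Q : ↥O ⧸ Ideal.span {(N : ↥O)}, addOrderOf P = N → addOrderOf Q = N →
        ∃ g : (↥O ⧸ Ideal.span {(N : ↥O)})ˣ, g • P = Q)) ∧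
    ((∀ P Q : ↥O ⧸ Ideal.span {(N : ↥O)}, addOrderOf P = N → addOrderOf Q = N →
        ∃ g : (↥O ⧸ Ideal.span {(N : ↥O)})ˣ, g • P = Q) ↔
      (∀ ℓ : ℕ, ℓ.Prime → ℓ ∣ N → InertIn (↥O) ℓ)) := by
  refine aux_main ?_ N hN
  rintro p hp ⟨⟨y, hy⟩, h⟩
  have h' : (1 : K) = p * y := by
    have := congrArg (Subtype.val) h
    simpa using this
  obtain ⟨a, z, hz⟩ := (hO y).1 hy
  have hint : IsIntegral ℤ y := by
    rw [hz]
    have h1 : IsIntegral ℤ ((a : K)) := by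
      simpa using (isIntegral_algebraMap (R := ℤ) (A := K) (x := a))
    have h2 : IsIntegral ℤ ((f : K)) := by
      simpa using (isIntegral_algebraMap (R := ℤ) (A := K) (x := (f : ℤ)))
    exact h1.add (h2.mul (RingOfIntegers.isIntegral_coe z))
  have hp0 : (p : K) ≠ 0 := by exact_mod_cast hp.ne_zero
  have hyq : y = algebraMap ℚ K ((p : ℚ)⁻¹) := by
    rw [map_inv₀, map_natCast]
    field_simp
    rw [mul_comm]; exact h'.symm
  rw [hyq] at hint
  have hint' : IsIntegral ℤ ((p : ℚ)⁻¹) :=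
    (isIntegral_algebraMap_iff (algebraMap ℚ K).injective).1 hint
  obtain ⟨m, hm⟩ := IsIntegrallyClosed.isIntegral_iff.1 hint'
  have hpq : (p : ℚ) ≠ 0 := by exact_mod_cast hp.ne_zero
  have h3 : (m : ℚ) * p = 1 := by
    have : (m : ℚ) = (p : ℚ)⁻¹ := by simpa using hm
    rw [this, inv_mul_cancel₀ hpq]
  have h4 : m * (p : ℤ) = 1 := by exact_mod_cast h3
  have h5 : (p : ℤ) ∣ 1 := ⟨m, by linarith⟩
  have h6 : p ∣ 1 := by exact_mod_cast h5
  exact hp.one_lt.ne' (Nat.dvd_one.1 h6)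
end

section
/- Let O be an order in an imaginary quadratic field, let N be a positive integer, let P ∈ O/NO be an element of additive order N, and let I_P = {x ∈ O : xP = 0}. Then there is a positive integer M dividing N such that the additive group of O/I_P is isomorphic to ℤ/Nℤ ⊕ ℤ/Mℤ. -/
set_option synthInstance.maxHeartbeats 1000000
set_option maxHeartbeats 1000000

open NumberField

theorem aux_split {G : Type*} [AddCommGroup G] (N : ℕ) (hN : 0 < N) (g w : G)
    (hg : addOrderOf g = N) (hexp : ∀ x : G, N • x = 0)
    (hgen : ∀ x : G, ∃ a b : ℤ, x = a • g + b • w) :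
    ∃ M : ℕ, 0 < M ∧ M ∣ N ∧ Nonempty (G ≃+ ZMod N × ZMod M) := by
  set H := AddSubgroup.zmultiples g
  set M := addOrderOf (QuotientAddGroup.mk w : G ⧸ H) with hM
  have hMN : M ∣ N := by
    apply addOrderOf_dvd_of_nsmul_eq_zero
    rw [← QuotientAddGroup.mk_nsmul, hexp]; rfl
  have hMpos : 0 < M := Nat.pos_of_dvd_of_pos hMN hN
  have hdvd : ∀ b : ℤ, b • w ∈ H → (M : ℤ) ∣ b := by
    intro b hb
    rw [hM, addOrderOf_dvd_iff_zsmul_eq_zero, ← QuotientAddGroup.mk_zsmul]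
    exact (QuotientAddGroup.eq_zero_iff _).2 hb
  have hgd : ∀ b : ℤ, b • g = 0 → (N : ℤ) ∣ b := by
    intro b hb
    rwa [← hg, addOrderOf_dvd_iff_zsmul_eq_zero]
  have hMw : (M : ℤ) • w ∈ H := by
    rw [← QuotientAddGroup.eq_zero_iff, QuotientAddGroup.mk_zsmul,
      ← addOrderOf_dvd_iff_zsmul_eq_zero]
  obtain ⟨k, hk⟩ := AddSubgroup.mem_zmultiples_iff.1 hMw
  obtain ⟨d, hd⟩ := hMN
  have hdpos : 0 < d := by
    rcases Nat.eq_zero_or_pos d with h | h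
    · subst h; simp at hd; omega
    · exact h
  have hk2 : (M : ℤ) ∣ k := by
    have h1 : ((d : ℤ) * k) • g = 0 := by
      rw [mul_smul, hk, ← mul_smul]
      have := hexp w
      rw [hd] at this
      rw [← this, ← natCast_zsmul]; push_cast; rw [mul_comm]
    have h2 := hgd _ h1
    rw [hd] at h2
    push_cast at h2
    rw [mul_comm] at h2
    exact (mul_dvd_mul_iff_left (by exact_mod_cast hdpos.ne')).1 h2
  obtain ⟨k', rfl⟩ := hk2
  set w' := w - k' • g with hw'
  have hMw' : (M : ℤ) • w' = 0 := by
    rw [hw', smul_sub, ← hk, mul_smul, sub_self]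
  have hNg : (N : ℤ) • g = 0 := by rw [natCast_zsmul]; exact hexp g
  let φ₁ : ZMod N →+ G := ZMod.lift N ⟨zmultiplesHom G g, by simpa using hexp g⟩
  let φ₂ : ZMod M →+ G := ZMod.lift M ⟨zmultiplesHom G w', by simpa using hMw'⟩
  have e₁ : ∀ a : ℤ, φ₁ (a : ZMod N) = a • g := fun a => by simp [φ₁]
  have e₂ : ∀ a : ℤ, φ₂ (a : ZMod M) = a • w' := fun a => by simp [φ₂]
  let φ : ZMod N × ZMod M →+ G := φ₁.coprod φ₂
  have hbij : Function.Bijective φ := by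
    constructor
    · rw [injective_iff_map_eq_zero]
      rintro ⟨a, b⟩ h
      obtain ⟨a, rfl⟩ := ZMod.intCast_surjective a
      obtain ⟨b, rfl⟩ := ZMod.intCast_surjective b
      have h' : a • g + b • w' = 0 := by rw [← e₁, ← e₂]; exact h
      have hb : (M : ℤ) ∣ b := by
        apply hdvd
        refine AddSubgroup.mem_zmultiples_iff.2 ⟨b * k' - a, ?_⟩
        rw [hw', smul_sub, ← mul_smul] at h'
        rw [sub_smul, ← sub_eq_zero, ← neg_eq_zero, ← h']
        abel
      have hbw : b • w' = 0 := by
        obtain ⟨c, rfl⟩ := hb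
        rw [mul_comm, mul_smul, hMw', smul_zero]
      rw [hbw, add_zero] at h'
      exact Prod.ext ((ZMod.intCast_zmod_eq_zero_iff_dvd _ _).2 (hgd _ h') : (a : ZMod N) = 0)
        ((ZMod.intCast_zmod_eq_zero_iff_dvd _ _).2 hb : (b : ZMod M) = 0)
    · intro x
      obtain ⟨a, b, rfl⟩ := hgen x
      refine ⟨((a + b * k' : ℤ), (b : ℤ)), ?_⟩
      change φ₁ ((a + b * k' : ℤ) : ZMod N) + φ₂ ((b : ℤ) : ZMod M) = _
      rw [e₁, e₂, hw', smul_sub, add_smul, mul_smul]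
      abel
  exact ⟨M, hMpos, ⟨d, hd⟩, ⟨(AddEquiv.ofBijective φ hbij).symm⟩⟩

theorem aux_gen (K : Type*) [Field K] [NumberField K] (h2 : Module.finrank ℚ K = 2) :
    ∃ w : 𝓞 K, ∀ x : 𝓞 K, ∃ a b : ℤ, x = (a : 𝓞 K) + b * w := by
  have hr : Module.finrank ℤ (𝓞 K) = 2 := by rw [RingOfIntegers.rank, h2]
  let b := Module.finBasisOfFinrankEq ℤ (𝓞 K) hr
  have hx : ∀ x : 𝓞 K, x = (b.repr x 0 : 𝓞 K) * b 0 + (b.repr x 1 : 𝓞 K) * b 1 := by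
    intro x
    have := b.sum_repr x
    rw [Fin.sum_univ_two, zsmul_eq_mul, zsmul_eq_mul] at this
    exact this.symm
  obtain ⟨a, c, h1⟩ : ∃ a c : ℤ, (1 : 𝓞 K) = a * b 0 + c * b 1 := ⟨_, _, hx 1⟩
  have hcop : IsCoprime a c := by
    rw [Int.isCoprime_iff_gcd_eq_one]
    obtain ⟨a', ha⟩ := Int.gcd_dvd_left a c
    obtain ⟨c', hc⟩ := Int.gcd_dvd_right a c
    set d := Int.gcd a c
    have hu : IsUnit (algebraMap ℤ (𝓞 K) d) := by
      apply IsUnit.of_mul_eq_one (a' * b 0 + c' * b 1)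
      have ha' : (a : 𝓞 K) = (d : 𝓞 K) * a' := by
        exact_mod_cast congrArg (Int.cast : ℤ → 𝓞 K) ha
      have hc' : (c : 𝓞 K) = (d : 𝓞 K) * c' := by
        exact_mod_cast congrArg (Int.cast : ℤ → 𝓞 K) hc
      have hd' : algebraMap ℤ (𝓞 K) d = (d : 𝓞 K) := by simp
      rw [hd']
      linear_combination -h1 - ha' * b 0 - hc' * b 1
    have := hu.map (Algebra.norm ℤ)
    rw [Algebra.norm_algebraMap, hr, isUnit_pow_iff two_ne_zero, Int.isUnit_iff] at this
    omega
  obtain ⟨u, v, huv⟩ := hcop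
  have huv' : (u : 𝓞 K) * a + v * c = 1 := by exact_mod_cast congrArg (Int.cast : ℤ → 𝓞 K) huv
  refine ⟨-v * b 0 + u * b 1, fun x => ⟨b.repr x 0 * u + b.repr x 1 * v,
    - b.repr x 0 * c + b.repr x 1 * a, ?_⟩⟩
  generalize b.repr x 0 = p, b.repr x 1 = q, hx x = hx'
  generalize b 0 = B0 at *
  generalize b 1 = B1 at *
  push_cast
  rw [hx']
  linear_combination (-(p : 𝓞 K) * B0 - q * B1) * huv' + (p * u + q * v : 𝓞 K) * (-h1)

/-- Let `O` be an order in an imaginary quadratic field, `N ≥ 1`,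
`P ∈ O/NO` of additive order `N`, and `I_P = ann(P)`.  Then there is a positive divisor
`M` of `N` with `O/I_P ≅ ℤ/N ⊕ ℤ/M` as additive groups. -/
theorem annihilator_quotient_structure (K : Type*) [Field K] [NumberField K]
    (hK : IsImagQuadratic K) (f : ℕ) (hf : 0 < f)
    (O : Subalgebra ℤ K) (hO : IsOrderOfConductor K f O) (N : ℕ) (hN : 0 < N)
    (P : ↥O ⧸ Ideal.span {(N : ↥O)}) (hP : addOrderOf P = N)
    (IP : Ideal ↥O) (hIP : ∀ x : ↥O, x ∈ IP ↔ x • P = 0) :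
    ∃ M : ℕ, 0 < M ∧ M ∣ N ∧ Nonempty ((↥O ⧸ IP) ≃+ ZMod N × ZMod M) := by
  obtain ⟨w, hw⟩ := aux_gen K hK.1
  have hω : (f : K) * algebraMap (𝓞 K) K w ∈ O := (hO _).2 ⟨0, w, by simp⟩
  let ω : O := ⟨_, hω⟩
  have hgenO : ∀ x : O, ∃ a b : ℤ, x = (a : O) + b * ω := by
    rintro ⟨x, hx⟩
    obtain ⟨a, y, rfl⟩ := (hO _).1 hx
    obtain ⟨c, e, rfl⟩ := hw y
    refine ⟨a + f * c, e, Subtype.ext ?_⟩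
    simp [ω]
    ring
  have hint : ∀ n : ℕ, (n : O) ∈ IP ↔ N ∣ n := by
    intro n
    rw [hIP, Nat.cast_smul_eq_nsmul, ← addOrderOf_dvd_iff_nsmul_eq_zero, hP]
  apply aux_split N hN (Ideal.Quotient.mk IP 1) (Ideal.Quotient.mk IP ω)
  · apply Nat.dvd_antisymm
    · rw [addOrderOf_dvd_iff_nsmul_eq_zero, ← map_nsmul, Ideal.Quotient.eq_zero_iff_mem,
        nsmul_one, hint]
    · rw [← hint, ← nsmul_one, ← Ideal.Quotient.eq_zero_iff_mem, map_nsmul, addOrderOf_nsmul_eq_zero]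
  · intro x
    obtain ⟨x, rfl⟩ := Ideal.Quotient.mk_surjective x
    rw [← map_nsmul, Ideal.Quotient.eq_zero_iff_mem, nsmul_eq_mul]
    exact IP.mul_mem_right _ ((hint N).2 dvd_rfl)
  · intro x
    obtain ⟨x, rfl⟩ := Ideal.Quotient.mk_surjective x
    obtain ⟨a, b, rfl⟩ := hgenO x
    refine ⟨a, b, ?_⟩
    rw [← map_zsmul, ← map_zsmul, ← map_add, zsmul_one, zsmul_eq_mul]
end

section
/- Let O be an order of discriminant Δ in an imaginary quadratic field, let N ≥ 3 be an integer, and assume (Δ, N) ≠ (−3, 3) (i.e. it is not the case that N = 3 and O is the ring ℤ[ζ₃] of Eisenstein integers). Let P ∈ O/NO be an element of additive order N and let I_P = {x ∈ O : xP = 0}. Then the natural map O^× → (O/I_P)^× is injective; consequently the orbit of P under C_N(O) = (O/NO)^× has cardinality equal to #O^× times the cardinality of the orbit of the reduced Cartan subgroup C_N(O)/q_N(O^×) acting on the set of O^×-orbits in O/NO, at the O^×-orbit of P (here q_N : O^× → (O/NO)^× is the natural map). -/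
set_option synthInstance.maxHeartbeats 1000000
set_option maxHeartbeats 1000000

open NumberField

lemma emb_aux (K : Type*) [Field K] [NumberField K] (hK : IsImagQuadratic K) :
    ∃ φ : K →+* ℂ, ∀ x : K, IsIntegral ℤ x → ∃ t n : ℤ, (t : ℝ) = 2 * (φ x).re ∧
      (n : ℝ) = Complex.normSq (φ x) := by
  classical
  obtain ⟨φ0⟩ : Nonempty (K →+* ℂ) := inferInstance
  let φ : K →ₐ[ℚ] ℂ := φ0.toRatAlgHom
  let ψ : K →ₐ[ℚ] ℂ := ((starRingEnd ℂ).comp φ.toRingHom).toRatAlgHom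
  have hψ : ∀ x, ψ x = starRingEnd ℂ (φ x) := fun x => rfl
  have hne : φ ≠ ψ := by
    intro h
    have : ComplexEmbedding.IsReal φ.toRingHom := by
      ext x
      exact (congrArg (fun g : K →ₐ[ℚ] ℂ => g x) h).symm
    exact hK.2.false this.embedding
  have hcard : Fintype.card (K →ₐ[ℚ] ℂ) = 2 := by
    rw [AlgHom.card, hK.1]
  have huniv : (Finset.univ : Finset (K →ₐ[ℚ] ℂ)) = {φ, ψ} := by
    symm
    apply Finset.eq_univ_of_card
    rw [Finset.card_pair hne, hcard]
  refine ⟨φ.toRingHom, fun x hx => ?_⟩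
  obtain ⟨t, ht⟩ := IsIntegrallyClosed.isIntegral_iff.mp (Algebra.isIntegral_trace (L := ℚ) hx)
  obtain ⟨n, hn⟩ := IsIntegrallyClosed.isIntegral_iff.mp (Algebra.isIntegral_norm (L := K) ℚ hx)
  have h1 := trace_eq_sum_embeddings (K := ℚ) (E := ℂ) (x := x)
  have h2 := Algebra.norm_eq_prod_embeddings ℚ ℂ x
  rw [huniv, Finset.sum_pair hne, ← ht, hψ, Complex.add_conj] at h1
  rw [huniv, Finset.prod_pair hne, ← hn, hψ, Complex.mul_conj] at h2
  refine ⟨t, n, ?_, ?_⟩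
  · have : ((t : ℝ) : ℂ) = ((2 * (φ x).re : ℝ) : ℂ) := by simpa using h1
    exact_mod_cast this
  · have : ((n : ℝ) : ℂ) = ((Complex.normSq (φ x) : ℝ) : ℂ) := by simpa using h2
    exact_mod_cast this

lemma unit_aux (K : Type*) [Field K] (φ : K →+* ℂ)
    (hφ : ∀ x : K, IsIntegral ℤ x → ∃ t n : ℤ, (t : ℝ) = 2 * (φ x).re ∧
      (n : ℝ) = Complex.normSq (φ x)) (u v : K) (hu : IsIntegral ℤ u) (hv : IsIntegral ℤ v)
    (huv : u * v = 1) : ∃ t : ℤ, u ^ 2 - t * u + 1 = 0 ∧ t ^ 2 ≤ 4 := by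
  obtain ⟨t, n, ht, hn⟩ := hφ u hu
  obtain ⟨t', n', ht', hn'⟩ := hφ v hv
  have h1 : n * n' = 1 := by
    have : (n : ℝ) * n' = 1 := by
      rw [hn, hn', ← Complex.normSq_mul, ← map_mul, huv]; simp
    exact_mod_cast this
  have h0 : 0 ≤ n := by
    have : (0 : ℝ) ≤ n := by rw [hn]; exact Complex.normSq_nonneg _
    exact_mod_cast this
  have hn1 : n = 1 := Int.eq_one_of_mul_eq_one_right h0 h1
  subst hn1
  rw [Complex.normSq_apply] at hn
  push_cast at hn
  refine ⟨t, ?_, ?_⟩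
  · apply φ.injective
    simp only [map_add, map_sub, map_pow, map_mul, map_intCast, map_one, map_zero]
    have ht2 : (t : ℂ) = ((2 * (φ u).re : ℝ) : ℂ) := by rw [← ht]; simp
    rw [ht2]
    apply Complex.ext
    · simp [pow_two]; linarith
    · simp [pow_two]; ring
  · have : (t : ℝ) ^ 2 ≤ 4 := by rw [ht]; nlinarith [mul_self_nonneg (φ u).im]
    exact_mod_cast this

lemma disc_aux (K : Type*) [Field K] [NumberField K] (hK : IsImagQuadratic K) (φ : K →+* ℂ)
    (hφ : ∀ x : K, IsIntegral ℤ x → ∃ t n : ℤ, (t : ℝ) = 2 * (φ x).re ∧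
      (n : ℝ) = Complex.normSq (φ x)) (f : ℕ) (u : K) (hu : u ^ 2 + u + 1 = 0)
    (a : ℤ) (y : K) (hy : IsIntegral ℤ y) (h : u = a + f * y) :
    (f : ℤ) ^ 2 * NumberField.discr K = -3 := by
  have hq : (φ u) ^ 2 + φ u + 1 = 0 := by
    rw [← map_pow, ← map_add, ← map_one φ, ← map_add, hu, map_zero]
  have hre := congrArg Complex.re hq
  have him := congrArg Complex.im hq
  simp [pow_two] at hre him
  have him0 : (φ u).im ≠ 0 := by
    intro h0
    rw [h0] at hre
    nlinarith [sq_nonneg ((φ u).re + 1 / 2)]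
  have hre2 : (φ u).re = -1 / 2 := by
    have : (φ u).im * (2 * (φ u).re + 1) = 0 := by linarith
    rcases mul_eq_zero.mp this with h | h
    · exact absurd h him0
    · linarith
  have hf : f = 1 := by
    obtain ⟨t, n, ht, hn⟩ := hφ y hy
    have e : φ u = a + f * φ y := by rw [h]; simp
    have e1 := congrArg Complex.re e
    have e2 := congrArg Complex.im e
    simp at e1 e2
    rw [Complex.normSq_apply] at hn
    have : (f : ℝ) ^ 2 * (4 * n - t ^ 2) = 3 := by
      rw [ht, hn]
      have : (f * (φ y).im) ^ 2 = 3 / 4 := by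
        rw [← e2]; rw [hre2] at hre; nlinarith
      linarith
    have h3 : (f : ℤ) ^ 2 * (4 * n - t ^ 2) = 3 := by exact_mod_cast this
    have hd : (f : ℤ) ^ 2 ∣ 3 := ⟨_, h3.symm⟩
    have hle := Int.le_of_dvd (by norm_num) hd
    have : f < 2 := by by_contra hc; push Not at hc; have : (2 : ℤ) ≤ f := by exact_mod_cast hc
                       nlinarith
    interval_cases f
    · simp at h3
    · rfl
  subst hf
  have hprim : IsPrimitiveRoot u 3 := by
    have hp : Nat.Prime 3 := by norm_num
    rw [← Polynomial.isRoot_cyclotomic_iff]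
    simp [Polynomial.cyclotomic_three, hu]
  have : Fact (Nat.Prime 3) := ⟨by norm_num⟩
  have hpr : (Module.finrank ℚ K).Prime := by rw [hK.1]; norm_num
  have := IntermediateField.isSimpleOrder_of_finrank_prime ℚ K hpr
  have htop : IntermediateField.adjoin ℚ {u} = ⊤ := by
    rcases eq_bot_or_eq_top (IntermediateField.adjoin ℚ {u}) with h | h
    · rw [IntermediateField.adjoin_simple_eq_bot_iff, IntermediateField.mem_bot] at h
      obtain ⟨q, rfl⟩ := h
      simp at him0
    · exact h
  have : IsCyclotomicExtension {3} ℚ K := by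
    rw [IsCyclotomicExtension.iff_singleton]
    refine ⟨⟨u, hprim⟩, fun x => ?_⟩
    have hx : x ∈ (IntermediateField.adjoin ℚ {u}).toSubalgebra := by
      rw [htop]; trivial
    rw [IntermediateField.adjoin_simple_toSubalgebra_of_isAlgebraic
      (Algebra.IsAlgebraic.isAlgebraic u)] at hx
    refine Algebra.adjoin_mono ?_ hx
    rintro _ rfl
    exact hprim.pow_eq_one
  rw [IsCyclotomicExtension.Rat.discr_prime 3 K]
  norm_num

lemma stab_aux (K : Type*) [Field K] [NumberField K]
    (hK : IsImagQuadratic K) (f : ℕ)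
    (O : Subalgebra ℤ K) (hO : IsOrderOfConductor K f O) (N : ℕ) (hN : 3 ≤ N)
    (hexc : ¬ ((f : ℤ) ^ 2 * NumberField.discr K = -3 ∧ N = 3))
    (P : ↥O ⧸ Ideal.span {(N : ↥O)}) (hP : addOrderOf P = N)
    (u : (↥O)ˣ) (hu : (u : O) • P = P) : u = 1 := by
  obtain ⟨φ, hφ⟩ := emb_aux K hK
  have hint : ∀ x : O, IsIntegral ℤ (x : K) := by
    intro x
    obtain ⟨a, y, h⟩ := (hO x).1 x.2
    rw [h]
    have h1 : IsIntegral ℤ (a : K) := isIntegral_algebraMap (R := ℤ) (x := a)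
    have h2 : IsIntegral ℤ (f : K) := by
      simpa using isIntegral_algebraMap (R := ℤ) (A := K) (x := (f : ℤ))
    exact h1.add (h2.mul y.isIntegral_coe)
  have huv : ((u : O) : K) * ((u⁻¹ : (↥O)ˣ) : O) = 1 := by
    have := u.mul_inv
    exact_mod_cast congrArg (fun z : O => (z : K)) this
  obtain ⟨t, ht, ht4⟩ := unit_aux K φ hφ _ _ (hint u) (hint (u⁻¹ : (↥O)ˣ)) huv
  have key : ∀ m : ℤ, ((m : O)) • P = 0 → (N : ℤ) ∣ m := by
    intro m hm
    rw [← hP]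
    rw [Int.cast_smul_eq_zsmul] at hm
    exact addOrderOf_dvd_iff_zsmul_eq_zero.mpr hm
  have htO : (u : O) ^ 2 - t * u + 1 = 0 := by
    apply Subtype.ext
    simpa using ht
  have hd : (N : ℤ) ∣ t - 2 := by
    apply key
    have : ((t - 2 : ℤ) : O) = ((u : O) - (t - 1)) * ((u : O) - 1) := by
      push_cast; linear_combination -htO
    rw [this, mul_smul, sub_smul (u : O) 1, hu, one_smul, sub_self, smul_zero]
  have hN' : (3 : ℤ) ≤ N := by exact_mod_cast hN
  have hb1 : t ≤ 2 := by nlinarith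
  have hb2 : -2 ≤ t := by nlinarith
  have small : ∀ m : ℤ, 0 < m → m < 3 → ¬ (N : ℤ) ∣ m := by
    intro m h0 h3 h
    have := Int.le_of_dvd h0 h
    omega
  rw [← dvd_neg] at hd
  interval_cases t
  · exfalso
    have h0 : ((u : O) + 1) ^ 2 = 0 := by push_cast at htO; linear_combination htO
    have h1 : (u : O) = -1 := by
      have := pow_eq_zero_iff (two_ne_zero) |>.mp h0
      linear_combination this
    refine small 2 (by norm_num) (by norm_num) (key 2 ?_)
    have : ((2 : ℤ) : O) = 1 - u := by rw [h1]; push_cast; ring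
    rw [this, sub_smul, hu, one_smul, sub_self]
  · exfalso
    apply hexc
    refine ⟨?_, ?_⟩
    · obtain ⟨a, y, h⟩ := (hO (u : O)).1 (u : O).2
      refine disc_aux K hK φ hφ f _ ?_ a _ y.isIntegral_coe h
      push_cast at ht
      linear_combination ht
    · have := Int.le_of_dvd (by norm_num) hd
      omega
  · exact absurd hd (small _ (by norm_num) (by norm_num))
  · exact absurd hd (small _ (by norm_num) (by norm_num))
  · have h0 : ((u : O) - 1) ^ 2 = 0 := by push_cast at htO; linear_combination htO
    have := pow_eq_zero_iff (two_ne_zero) |>.mp h0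
    apply Units.ext
    rw [Units.val_one]
    linear_combination this

/-- Let `O` be an order of discriminant `Δ = f²Δ_K` in an imaginary
quadratic field, `N ≥ 3` with `(Δ,N) ≠ (-3,3)`, `P ∈ O/NO` of additive order `N` with
annihilator `I_P`.  Then `O^× → (O/I_P)^×` is injective; consequently the Cartan orbit of
`P` has cardinality `#O^×` times the cardinality of the orbit of the reduced Cartan group
at the `O^×`-orbit of `P`, the latter being the image of the Cartan orbit of `P` in the
set of `O^×`-orbits of `O/NO`. -/
theorem reduced_cartan_orbit_size (K : Type*) [Field K] [NumberField K]
    (hK : IsImagQuadratic K) (f : ℕ) (hf : 0 < f)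
    (O : Subalgebra ℤ K) (hO : IsOrderOfConductor K f O) (N : ℕ) (hN : 3 ≤ N)
    (hexc : ¬ ((f : ℤ) ^ 2 * NumberField.discr K = -3 ∧ N = 3))
    (P : ↥O ⧸ Ideal.span {(N : ↥O)}) (hP : addOrderOf P = N)
    (IP : Ideal ↥O) (hIP : ∀ x : ↥O, x ∈ IP ↔ x • P = 0) :
    Function.Injective (Units.map (Ideal.Quotient.mk IP).toMonoidHom : (↥O)ˣ → (↥O ⧸ IP)ˣ) ∧
    Nat.card ↥(MulAction.orbit (↥O ⧸ Ideal.span {(N : ↥O)})ˣ P) =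
      Nat.card (↥O)ˣ *
        Nat.card ↥((fun x => Quotient.mk
            (MulAction.orbitRel (↥O)ˣ (↥O ⧸ Ideal.span {(N : ↥O)})) x) ''
          (MulAction.orbit (↥O ⧸ Ideal.span {(N : ↥O)})ˣ P)) := by
  have stab := stab_aux K hK f O hO N hN hexc P hP
  have two : ∀ u v : (↥O)ˣ, (u : O) • P = (v : O) • P → u = v := by
    intro u v h
    have : v⁻¹ * u = 1 := by
      apply stab
      rw [Units.val_mul, mul_smul, h, ← mul_smul, Units.inv_mul, one_smul]
    exact (inv_mul_eq_one.mp this).symm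
  refine ⟨?_, ?_⟩
  · intro u v h
    apply two
    have h1 : Ideal.Quotient.mk IP (u : O) = Ideal.Quotient.mk IP (v : O) :=
      congrArg Units.val h
    rw [Ideal.Quotient.eq, hIP, sub_smul, sub_eq_zero] at h1
    exact h1
  · have mulc : ∀ (x : O) (y z : ↥O ⧸ Ideal.span {(N : ↥O)}), x • (y * z) = y * (x • z) :=
      fun x y z => (mul_smul_comm x y z).symm
    let S := MulAction.orbit (↥O ⧸ Ideal.span {(N : ↥O)})ˣ P
    have hfree : ∀ (u v : (↥O)ˣ), ∀ x ∈ S, u • x = v • x → u = v := by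
      rintro u v _ ⟨g, rfl⟩ h
      apply two
      have h2 : (u : O) • ((g : ↥O ⧸ Ideal.span {(N : ↥O)}) * P) =
        (v : O) • ((g : ↥O ⧸ Ideal.span {(N : ↥O)}) * P) := h
      rw [mulc, mulc] at h2
      exact g.isUnit.mul_left_cancel h2
    have hmem : ∀ (u : (↥O)ˣ), ∀ x ∈ S, u • x ∈ S := by
      rintro u _ ⟨g, rfl⟩
      refine ⟨Units.map (Ideal.Quotient.mk (Ideal.span {(N : ↥O)})).toMonoidHom u * g, ?_⟩
      change (Ideal.Quotient.mk (Ideal.span {(N : ↥O)}) (u : O) * (g : ↥O ⧸ Ideal.span {(N : ↥O)}))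
        * P = (u : O) • ((g : ↥O ⧸ Ideal.span {(N : ↥O)}) * P)
      rw [mul_assoc]
      obtain ⟨z, hz⟩ := Ideal.Quotient.mk_surjective ((g : ↥O ⧸ Ideal.span {(N : ↥O)}) * P)
      rw [← hz]
      rfl
    rw [← Nat.card_prod]
    symm
    let T := (fun x => Quotient.mk
            (MulAction.orbitRel (↥O)ˣ (↥O ⧸ Ideal.span {(N : ↥O)})) x) '' S
    have hs : ∀ c : T, ∃ x ∈ S, Quotient.mk
            (MulAction.orbitRel (↥O)ˣ (↥O ⧸ Ideal.span {(N : ↥O)})) x = c.1 := fun c => c.2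
    choose s hsS hsc using hs
    refine Nat.card_congr (Equiv.ofBijective
      (fun p : (↥O)ˣ × T => (⟨p.1 • s p.2, hmem _ _ (hsS _)⟩ : S)) ⟨?_, ?_⟩)
    · rintro ⟨u, c⟩ ⟨v, d⟩ h
      have h1 : u • s c = v • s d := congrArg Subtype.val h
      have hcd : c = d := by
        apply Subtype.ext
        rw [← hsc, ← hsc]
        apply Quotient.sound
        refine ⟨u⁻¹ * v, ?_⟩
        change (u⁻¹ * v) • s d = s c
        rw [mul_smul, ← h1, inv_smul_smul]
      subst hcd
      rw [hfree u v _ (hsS c) h1]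
    · rintro ⟨x, hx⟩
      let c : T := ⟨_, x, hx, rfl⟩
      obtain ⟨u, hu⟩ := Quotient.exact (hsc c).symm
      exact ⟨(u, c), Subtype.ext hu⟩
end

section
/- Let O be the order of conductor f in an imaginary quadratic field, and let ℓ^a > 2 be a prime power with ℓ not dividing f and ℓ split in O. Then the set of elements of O/ℓ^a O of additive order ℓ^a decomposes into exactly 2a+1 orbits under the multiplication action of (O/ℓ^a O)^×: two orbits of cardinality ℓ^{a−1}(ℓ−1); for each 1 ≤ i ≤ a−1, two orbits of cardinality ℓ^{a+i−2}(ℓ−1)²; and one orbit of cardinality ℓ^{2a−2}(ℓ−1)². -/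
set_option synthInstance.maxHeartbeats 1000000
set_option maxHeartbeats 1000000

open NumberField

lemma zmod_orbit (n : ℕ) [NeZero n] (x y : ZMod n) :
    (∃ c : (ZMod n)ˣ, (c : ZMod n) * x = y) ↔ addOrderOf y = addOrderOf x := by
  have key : ∀ (c : (ZMod n)ˣ) (x : ZMod n), addOrderOf ((c : ZMod n) * x) = addOrderOf x := by
    intro c x
    exact addOrderOf_injective (AddMonoidHom.mulLeft (c : ZMod n))
      (fun p q h => by simpa using h) x
  constructor
  · rintro ⟨c, rfl⟩; exact key c x
  · intro h
    obtain ⟨d, hd, c, hc, rfl⟩ := ZMod.eq_unit_mul_divisor x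
    obtain ⟨d', hd', c', hc', rfl⟩ := ZMod.eq_unit_mul_divisor y
    obtain ⟨c, rfl⟩ := hc
    obtain ⟨c', rfl⟩ := hc'
    rw [key, key, ZMod.addOrderOf_coe _ (NeZero.ne n), ZMod.addOrderOf_coe _ (NeZero.ne n),
      Nat.gcd_eq_right hd, Nat.gcd_eq_right hd'] at h
    have : d' = d := by
      have h1 := Nat.div_mul_cancel hd
      have h2 := Nat.div_mul_cancel hd'
      rw [h, ← h1] at h2
      have hp : 0 < n / d := by
        rcases Nat.eq_zero_or_pos (n/d) with h0 | h0
        · rw [h0] at h1; simp at h1; exact absurd h1.symm (NeZero.ne n)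
        · exact h0
      rw [h1] at h2
      exact Nat.eq_of_mul_eq_mul_left hp (h2.trans h1.symm)
    subst this
    exact ⟨c' * c⁻¹, by simp [mul_assoc]⟩

lemma zmod_card (n : ℕ) [NeZero n] (d : ℕ) (hd : d ∣ n) :
    Nat.card {y : ZMod n // addOrderOf y = d} = d.totient := by
  rw [Nat.card_eq_fintype_card, Fintype.card_subtype]
  exact IsAddCyclic.card_addOrderOf_eq_totient (by simpa using hd)

section tr
variable {R : Type*} [CommRing R] {n : ℕ} [NeZero n] (e : R ≃+* ZMod n × ZMod n)

lemma R_orbit (x y : R) : y ∈ MulAction.orbit Rˣ x ↔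
    addOrderOf (e y).1 = addOrderOf (e x).1 ∧ addOrderOf (e y).2 = addOrderOf (e x).2 := by
  rw [← zmod_orbit, ← zmod_orbit]
  constructor
  · rintro ⟨c, rfl⟩
    have hc := c.isUnit.map e
    rw [Prod.isUnit_iff] at hc
    obtain ⟨⟨c1, h1⟩, ⟨c2, h2⟩⟩ := hc
    refine ⟨⟨c1, ?_⟩, ⟨c2, ?_⟩⟩ <;> simp [Units.smul_def, h1, h2]
  · rintro ⟨⟨c1, h1⟩, ⟨c2, h2⟩⟩
    refine ⟨Units.map e.symm.toMonoidHom (MulEquiv.prodUnits.symm (c1, c2)), ?_⟩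
    apply e.injective
    simp only [Units.smul_def, smul_eq_mul, map_mul]
    ext <;> simp [← h1, ← h2] <;> rfl

lemma R_card (x : R) : Nat.card (MulAction.orbit Rˣ x) =
    (addOrderOf (e x).1).totient * (addOrderOf (e x).2).totient := by
  have hd : ∀ z : ZMod n, addOrderOf z ∣ n := fun z => by
    simpa using addOrderOf_dvd_card (x := z)
  rw [← zmod_card n _ (hd _), ← zmod_card n _ (hd _), ← Nat.card_prod]
  refine Nat.card_congr ((Equiv.subtypeEquiv e.toEquiv (q := fun p =>
    addOrderOf p.1 = addOrderOf (e x).1 ∧ addOrderOf p.2 = addOrderOf (e x).2)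
    (fun y => R_orbit e x y)).trans
    (Equiv.subtypeProdEquivProd (p := fun p => addOrderOf p = addOrderOf (e x).1)
      (q := fun p => addOrderOf p = addOrderOf (e x).2)))

lemma R_addOrder (x : R) : addOrderOf x =
    (addOrderOf (e x).1).lcm (addOrderOf (e x).2) := by
  rw [← Prod.addOrderOf]
  exact (AddEquiv.addOrderOf_eq e.toAddEquiv x).symm

lemma R_orbit_eq (x y : R) (h : MulAction.orbit Rˣ x = MulAction.orbit Rˣ y) :
    addOrderOf (e x).1 = addOrderOf (e y).1 ∧ addOrderOf (e x).2 = addOrderOf (e y).2 := by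
  rw [← R_orbit e, ← h]
  exact MulAction.mem_orbit_self x

lemma R_exists {ℓ a : ℕ} (hℓ : ℓ.Prime) (hn : n = ℓ ^ a) (i j : ℕ) (hi : i ≤ a) (hj : j ≤ a) :
    ∃ x : R, addOrderOf (e x).1 = ℓ ^ i ∧ addOrderOf (e x).2 = ℓ ^ j := by
  have h : ∀ i ≤ a, addOrderOf ((ℓ ^ (a - i) : ℕ) : ZMod n) = ℓ ^ i := by
    intro i hi
    rw [ZMod.addOrderOf_coe _ (NeZero.ne n), hn, Nat.gcd_eq_right (pow_dvd_pow _ (Nat.sub_le _ _)),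
      Nat.pow_div (Nat.sub_le _ _) hℓ.pos, Nat.sub_sub_self hi]
  refine ⟨e.symm (((ℓ ^ (a - i) : ℕ) : ZMod n), ((ℓ ^ (a - j) : ℕ) : ZMod n)), ?_⟩
  simp only [RingEquiv.apply_symm_apply]
  exact ⟨h i hi, h j hj⟩

end tr

lemma lcm_pow (ℓ i j : ℕ) : (ℓ ^ i).lcm (ℓ ^ j) = ℓ ^ (max i j) := by
  rcases le_total i j with h | h
  · rw [max_eq_right h]; exact Nat.lcm_eq_right (pow_dvd_pow _ h)
  · rw [max_eq_left h]; exact Nat.lcm_eq_left (pow_dvd_pow _ h)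

lemma tot (ℓ a i : ℕ) (hℓ : ℓ.Prime) (hi : i < a) :
    (ℓ ^ a).totient * (ℓ ^ i).totient = if i = 0 then ℓ ^ (a - 1) * (ℓ - 1)
        else ℓ ^ (a + i - 2) * (ℓ - 1) ^ 2 := by
  rw [Nat.totient_prime_pow hℓ (by omega : 0 < a)]
  split_ifs with h
  · simp [h]
  · rw [Nat.totient_prime_pow hℓ (by omega : 0 < i),
      show a + i - 2 = (a - 1) + (i - 1) by omega, pow_add]
    ring

theorem main_R {R : Type*} [CommRing R] (ℓ : ℕ) (hℓ : ℓ.Prime) (a : ℕ) (ha : a ≠ 0)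
    (e : R ≃+* ZMod (ℓ ^ a) × ZMod (ℓ ^ a)) :
    ∃ (u v : Fin a → R) (w : R),
      (∀ i, addOrderOf (u i) = ℓ ^ a) ∧
      (∀ i, addOrderOf (v i) = ℓ ^ a) ∧
      addOrderOf w = ℓ ^ a ∧
      (∀ i, Nat.card ↥(MulAction.orbit Rˣ (u i)) =
        if (i : ℕ) = 0 then ℓ ^ (a - 1) * (ℓ - 1)
        else ℓ ^ (a + (i : ℕ) - 2) * (ℓ - 1) ^ 2) ∧
      (∀ i, Nat.card ↥(MulAction.orbit Rˣ (v i)) =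
        if (i : ℕ) = 0 then ℓ ^ (a - 1) * (ℓ - 1)
        else ℓ ^ (a + (i : ℕ) - 2) * (ℓ - 1) ^ 2) ∧
      Nat.card ↥(MulAction.orbit Rˣ w) = ℓ ^ (2 * a - 2) * (ℓ - 1) ^ 2 ∧
      (∀ i j, MulAction.orbit Rˣ (u i) = MulAction.orbit Rˣ (u j) → i = j) ∧
      (∀ i j, MulAction.orbit Rˣ (v i) = MulAction.orbit Rˣ (v j) → i = j) ∧
      (∀ i j, MulAction.orbit Rˣ (u i) ≠ MulAction.orbit Rˣ (v j)) ∧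
      (∀ i, MulAction.orbit Rˣ (u i) ≠ MulAction.orbit Rˣ w) ∧
      (∀ i, MulAction.orbit Rˣ (v i) ≠ MulAction.orbit Rˣ w) ∧
      (∀ x : R, addOrderOf x = ℓ ^ a →
        (∃ i, x ∈ MulAction.orbit Rˣ (u i)) ∨
        (∃ i, x ∈ MulAction.orbit Rˣ (v i)) ∨
        x ∈ MulAction.orbit Rˣ w) := by
  have : NeZero (ℓ ^ a) := ⟨pow_ne_zero _ hℓ.ne_zero⟩
  have inj : ∀ {i j : ℕ}, ℓ ^ i = ℓ ^ j → i = j := fun h => Nat.pow_right_injective hℓ.two_le h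
  choose u hu1 hu2 using fun i : Fin a => R_exists e hℓ rfl a i le_rfl i.2.le
  choose v hv1 hv2 using fun i : Fin a => R_exists e hℓ rfl i a i.2.le le_rfl
  obtain ⟨w, hw1, hw2⟩ := R_exists e hℓ rfl a a le_rfl le_rfl
  refine ⟨u, v, w, ?_, ?_, ?_, ?_, ?_, ?_, ?_, ?_, ?_, ?_, ?_, ?_⟩
  · intro i; rw [R_addOrder e, hu1, hu2, lcm_pow, max_eq_left i.2.le]
  · intro i; rw [R_addOrder e, hv1, hv2, lcm_pow, max_eq_right i.2.le]
  · rw [R_addOrder e, hw1, hw2, lcm_pow, max_self]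
  · intro i; rw [R_card e, hu1, hu2, tot ℓ a i hℓ i.2]
  · intro i; rw [R_card e, hv1, hv2, mul_comm, tot ℓ a i hℓ i.2]
  · rw [R_card e, hw1, hw2, Nat.totient_prime_pow hℓ (by omega),
      show 2 * a - 2 = (a - 1) + (a - 1) by omega, pow_add]
    ring
  · intro i j h
    have := (R_orbit_eq e _ _ h).2
    rw [hu2, hu2] at this
    exact Fin.ext (inj this)
  · intro i j h
    have := (R_orbit_eq e _ _ h).1
    rw [hv1, hv1] at this
    exact Fin.ext (inj this)
  · intro i j h
    have := (R_orbit_eq e _ _ h).2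
    rw [hu2, hv2] at this
    exact i.2.ne (inj this)
  · intro i h
    have := (R_orbit_eq e _ _ h).2
    rw [hu2, hw2] at this
    exact i.2.ne (inj this)
  · intro i h
    have := (R_orbit_eq e _ _ h).1
    rw [hv1, hw1] at this
    exact i.2.ne (inj this)
  · intro x hx
    have hd : ∀ z : ZMod (ℓ ^ a), ∃ k ≤ a, addOrderOf z = ℓ ^ k := fun z => by
      have : addOrderOf z ∣ ℓ ^ a := by simpa using addOrderOf_dvd_card (x := z)
      exact (Nat.dvd_prime_pow hℓ).1 this
    obtain ⟨i, hi, hi'⟩ := hd (e x).1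
    obtain ⟨j, hj, hj'⟩ := hd (e x).2
    rw [R_addOrder e, hi', hj', lcm_pow] at hx
    have hm := inj hx
    simp only [R_orbit e, hu1, hu2, hv1, hv2, hw1, hw2, hi', hj']
    rcases lt_or_eq_of_le hi with h1 | h1
    · have : j = a := by omega
      exact Or.inr (Or.inl ⟨⟨i, h1⟩, rfl, by rw [this]⟩)
    · rcases lt_or_eq_of_le hj with h2 | h2
      · exact Or.inl ⟨⟨j, h2⟩, by rw [h1], rfl⟩
      · exact Or.inr (Or.inr ⟨by rw [h1], by rw [h2]⟩)

lemma iso_abs {R : Type*} [CommRing R] (ℓ : ℕ) (hℓ : ℓ.Prime) (b : ℕ)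
    (g : R →+* ZMod ℓ × ZMod ℓ) (hg : Function.Surjective g)
    (hker : ∀ x, g x = 0 → ∃ y, x = (ℓ : R) * y)
    (htor : ∀ x, (ℓ : R) ^ b * x = 0 → g x = 0) (h0 : (ℓ : R) ^ (b + 1) = 0) :
    Nonempty (R ≃+* ZMod (ℓ ^ (b + 1)) × ZMod (ℓ ^ (b + 1))) := by
  have : Fact ℓ.Prime := ⟨hℓ⟩
  have hord : ∀ x, g x ≠ 0 → addOrderOf x = ℓ ^ (b + 1) := by
    intro x hx
    apply addOrderOf_eq_prime_pow
    · intro h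
      exact hx (htor x (by simpa [nsmul_eq_mul] using h))
    · simp only [nsmul_eq_mul, Nat.cast_pow, h0, zero_mul]
  have hchar : CharP R (ℓ ^ (b + 1)) := by
    rw [← hord 1 (by simp)]
    exact CharP.addOrderOf_one R
  obtain ⟨e, he, hge⟩ := exists_isIdempotentElem_eq_of_ker_isNilpotent g (by
    intro x hx
    obtain ⟨y, rfl⟩ := hker x hx
    exact ⟨b + 1, by rw [mul_pow, h0, zero_mul]⟩) (1, 0) (hg _) (by
    simp [IsIdempotentElem])
  have he' : e * e = e := he
  let c : ZMod (ℓ ^ (b + 1)) →+* R := ZMod.castHom dvd_rfl R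
  let ψ : ZMod (ℓ ^ (b + 1)) × ZMod (ℓ ^ (b + 1)) →+* R :=
    { toFun := fun p => c p.1 * e + c p.2 * (1 - e)
      map_one' := by simp
      map_zero' := by simp
      map_add' := by intro p q; simp only [Prod.fst_add, Prod.snd_add, map_add]; ring
      map_mul' := by
        intro p q
        simp only [Prod.fst_mul, Prod.snd_mul, map_mul]
        linear_combination (- c p.1 * c q.1 + c p.1 * c q.2 + c p.2 * c q.1
          - c p.2 * c q.2) * he' }
  have hψ : ∀ p, ψ p = c p.1 * e + c p.2 * (1 - e) := fun p => rfl
  have hz : ∀ (m : ZMod (ℓ ^ (b + 1))) (x : R), g x ≠ 0 → c m * x = 0 → m = 0 := by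
    intro m x hx hm
    obtain ⟨k, rfl⟩ := ZMod.natCast_zmod_surjective m
    rw [map_natCast, ← nsmul_eq_mul, ← addOrderOf_dvd_iff_nsmul_eq_zero, hord x hx] at hm
    exact (ZMod.natCast_eq_zero_iff _ _).2 hm
  have hinj : Function.Injective ψ := by
    rw [injective_iff_map_eq_zero]
    rintro ⟨m, n⟩ h
    rw [hψ] at h
    simp only at h
    have h1 : m = 0 := hz m e (by rw [hge]; simp) (by
      linear_combination e * h + (c n - c m) * he')
    have h2 : n = 0 := hz n (1 - e) (by rw [map_sub, hge, map_one]; intro h3; simpa using congrArg Prod.snd h3) (by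
      linear_combination (1 - e) * h + (c m - c n) * he')
    rw [h1, h2]; rfl
  have hstep : ∀ x : R, ∃ p y, x = ψ p + (ℓ : R) * y := by
    intro x
    obtain ⟨m, hm⟩ := ZMod.natCast_zmod_surjective (g x).1
    obtain ⟨n, hn⟩ := ZMod.natCast_zmod_surjective (g x).2
    obtain ⟨y, hy⟩ := hker (x - ψ (m, n)) (by
      rw [hψ]
      simp only [map_natCast, map_sub, map_add, map_mul, hge, map_one]
      ext <;> simp [hm, hn])
    exact ⟨_, y, by rw [← hy]; ring⟩
  have hall : ∀ k : ℕ, ∀ x : R, ∃ p y, x = ψ p + (ℓ : R) ^ k * y := by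
    intro k
    induction k with
    | zero => intro x; exact ⟨0, x, by simp⟩
    | succ k ih =>
      intro x
      obtain ⟨p, y, rfl⟩ := ih x
      obtain ⟨q, z, rfl⟩ := hstep y
      exact ⟨p + (ℓ : ZMod (ℓ ^ (b + 1)) × ZMod (ℓ ^ (b + 1))) ^ k * q, z, by
        simp only [map_add, map_mul, map_pow, map_natCast]; ring⟩
  have hsurj : Function.Surjective ψ := by
    intro x
    obtain ⟨p, y, rfl⟩ := hall (b + 1) x
    exact ⟨p, by rw [h0, zero_mul, add_zero]⟩
  exact ⟨(RingEquiv.ofBijective ψ ⟨hinj, hsurj⟩).symm⟩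

lemma iso_quot {A : Type*} [CommRing A] [IsDomain A] [CharZero A] (ℓ : ℕ) (hℓ : ℓ.Prime) (a : ℕ)
    (ha : a ≠ 0) (hs : Nonempty ((A ⧸ Ideal.span {(ℓ : A)}) ≃+* ZMod ℓ × ZMod ℓ)) :
    Nonempty ((A ⧸ Ideal.span {((ℓ ^ a : ℕ) : A)}) ≃+* ZMod (ℓ ^ a) × ZMod (ℓ ^ a)) := by
  obtain ⟨s⟩ := hs
  obtain ⟨b, rfl⟩ := Nat.exists_eq_succ_of_ne_zero ha
  have hle : Ideal.span {((ℓ ^ (b + 1) : ℕ) : A)} ≤ Ideal.span {(ℓ : A)} := by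
    rw [Ideal.span_singleton_le_span_singleton]
    push_cast
    exact dvd_pow_self _ (by omega)
  have hl : (ℓ : A) ≠ 0 := by exact_mod_cast hℓ.ne_zero
  let g : (A ⧸ Ideal.span {((ℓ ^ (b + 1) : ℕ) : A)}) →+* ZMod ℓ × ZMod ℓ :=
    s.toRingHom.comp (Ideal.Quotient.factor hle)
  have hgm : ∀ x : A, g (Ideal.Quotient.mk _ x) = 0 ↔ (ℓ : A) ∣ x := by
    intro x
    rw [← Ideal.mem_span_singleton, ← Ideal.Quotient.eq_zero_iff_mem]
    simp [g]
  apply iso_abs ℓ hℓ b g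
  · exact s.surjective.comp (Ideal.Quotient.factor_surjective hle)
  · intro x hx
    obtain ⟨x, rfl⟩ := Ideal.Quotient.mk_surjective x
    obtain ⟨y, rfl⟩ := (hgm x).1 hx
    exact ⟨Ideal.Quotient.mk _ y, by simp⟩
  · intro x hx
    obtain ⟨x, rfl⟩ := Ideal.Quotient.mk_surjective x
    rw [hgm]
    rw [← map_natCast (Ideal.Quotient.mk _), ← map_pow, ← map_mul, Ideal.Quotient.eq_zero_iff_mem,
      Ideal.mem_span_singleton] at hx
    push_cast at hx
    rw [pow_succ] at hx
    exact (mul_dvd_mul_iff_left (pow_ne_zero _ hl)).1 hx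
  · rw [← map_natCast (Ideal.Quotient.mk _), ← map_pow, Ideal.Quotient.eq_zero_iff_mem,
      Ideal.mem_span_singleton]
    push_cast
    rfl

/-- Let `O` be the order of conductor `f` and `ℓ^a > 2` a prime power with
`ℓ ∤ f` and `ℓ` split in `O`.  The elements of `O/ℓ^a O` of additive order `ℓ^a` form exactly
`2a+1` orbits under `(O/ℓ^a O)ˣ`: two of cardinality `ℓ^{a-1}(ℓ-1)`; for each `1 ≤ i ≤ a-1`
two of cardinality `ℓ^{a+i-2}(ℓ-1)²`; and one of cardinality `ℓ^{2a-2}(ℓ-1)²`.  (The orbits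
of sizes `ℓ^{a-1}(ℓ-1)` and `ℓ^{a+i-2}(ℓ-1)²` are indexed below by `u i`, `v i` for
`i = 0` and `1 ≤ i ≤ a-1` respectively, the remaining orbit by `w`.) -/
theorem split_orbit_structure (K : Type*) [Field K] [NumberField K]
    (hK : IsImagQuadratic K) (f : ℕ) (hf : 0 < f)
    (O : Subalgebra ℤ K) (hO : IsOrderOfConductor K f O)
    (ℓ : ℕ) (hℓ : ℓ.Prime) (a : ℕ) (ha : 2 < ℓ ^ a)
    (hnd : ¬ ℓ ∣ f) (hsplit : SplitsIn (↥O) ℓ) :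
    ∃ (u v : Fin a → ↥O ⧸ Ideal.span {((ℓ ^ a : ℕ) : ↥O)})
      (w : ↥O ⧸ Ideal.span {((ℓ ^ a : ℕ) : ↥O)}),
      (∀ i, addOrderOf (u i) = ℓ ^ a) ∧
      (∀ i, addOrderOf (v i) = ℓ ^ a) ∧
      addOrderOf w = ℓ ^ a ∧
      (∀ i, Nat.card ↥(MulAction.orbit (↥O ⧸ Ideal.span {((ℓ ^ a : ℕ) : ↥O)})ˣ (u i)) =
        if (i : ℕ) = 0 then ℓ ^ (a - 1) * (ℓ - 1)
        else ℓ ^ (a + (i : ℕ) - 2) * (ℓ - 1) ^ 2) ∧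
      (∀ i, Nat.card ↥(MulAction.orbit (↥O ⧸ Ideal.span {((ℓ ^ a : ℕ) : ↥O)})ˣ (v i)) =
        if (i : ℕ) = 0 then ℓ ^ (a - 1) * (ℓ - 1)
        else ℓ ^ (a + (i : ℕ) - 2) * (ℓ - 1) ^ 2) ∧
      Nat.card ↥(MulAction.orbit (↥O ⧸ Ideal.span {((ℓ ^ a : ℕ) : ↥O)})ˣ w) =
        ℓ ^ (2 * a - 2) * (ℓ - 1) ^ 2 ∧
      (∀ i j, MulAction.orbit (↥O ⧸ Ideal.span {((ℓ ^ a : ℕ) : ↥O)})ˣ (u i) =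
        MulAction.orbit (↥O ⧸ Ideal.span {((ℓ ^ a : ℕ) : ↥O)})ˣ (u j) → i = j) ∧
      (∀ i j, MulAction.orbit (↥O ⧸ Ideal.span {((ℓ ^ a : ℕ) : ↥O)})ˣ (v i) =
        MulAction.orbit (↥O ⧸ Ideal.span {((ℓ ^ a : ℕ) : ↥O)})ˣ (v j) → i = j) ∧
      (∀ i j, MulAction.orbit (↥O ⧸ Ideal.span {((ℓ ^ a : ℕ) : ↥O)})ˣ (u i) ≠
        MulAction.orbit (↥O ⧸ Ideal.span {((ℓ ^ a : ℕ) : ↥O)})ˣ (v j)) ∧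
      (∀ i, MulAction.orbit (↥O ⧸ Ideal.span {((ℓ ^ a : ℕ) : ↥O)})ˣ (u i) ≠
        MulAction.orbit (↥O ⧸ Ideal.span {((ℓ ^ a : ℕ) : ↥O)})ˣ w) ∧
      (∀ i, MulAction.orbit (↥O ⧸ Ideal.span {((ℓ ^ a : ℕ) : ↥O)})ˣ (v i) ≠
        MulAction.orbit (↥O ⧸ Ideal.span {((ℓ ^ a : ℕ) : ↥O)})ˣ w) ∧
      (∀ x : ↥O ⧸ Ideal.span {((ℓ ^ a : ℕ) : ↥O)}, addOrderOf x = ℓ ^ a →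
        (∃ i, x ∈ MulAction.orbit (↥O ⧸ Ideal.span {((ℓ ^ a : ℕ) : ↥O)})ˣ (u i)) ∨
        (∃ i, x ∈ MulAction.orbit (↥O ⧸ Ideal.span {((ℓ ^ a : ℕ) : ↥O)})ˣ (v i)) ∨
        x ∈ MulAction.orbit (↥O ⧸ Ideal.span {((ℓ ^ a : ℕ) : ↥O)})ˣ w) := by
  have ha0 : a ≠ 0 := by
    rintro rfl
    simp at ha
  obtain ⟨e⟩ := iso_quot (A := ↥O) ℓ hℓ a ha0 hsplit
  exact main_R ℓ hℓ a ha0 e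
end
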